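/- Let k ≥ l ≥ 1 be integers with k + l ≥ 6, and let G be a finite oriented graph on n ≥ 1 vertices such that s(v) ≥ OPT(k,l) for every vertex v of G. Then s(G) ≤ OPT(k,l). -/

import Mathlib

open scoped BigOperators

/-- The arc relation of the oriented star `S_{k,l}` on `Fin (k+l+1)`:
vertex `0` is the center, vertices `1,…,k` are the out-leaves and
vertices `k+1,…,k+l` are the in-leaves. -/
def StarArc (k l : ℕ) (a b : Fin (k + l + 1)) : Prop :=
  (a.val = 0 ∧ 1 ≤ b.val ∧ b.val ≤ k) ∨ (b.val = 0 ∧ k + 1 ≤ a.val)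

/-- `φ` witnesses an induced copy of `S_{k,l}` in the digraph with arc relation `A`:
it is injective and maps arcs to arcs and non-arcs to non-arcs. -/
def IsStarEmb (k l : ℕ) {V : Type*} (A : V → V → Prop) (φ : Fin (k + l + 1) → V) : Prop :=
  Function.Injective φ ∧ ∀ a b, StarArc k l a b ↔ A (φ a) (φ b)

/-- `s(G)`: the probability that a uniformly random map `V(S_{k,l}) → V(G)`
induces a copy of `S_{k,l}`. -/
noncomputable def starProb (k l : ℕ) (V : Type*) [Fintype V] (A : V → V → Prop) : ℝ :=
  (Nat.card {φ : Fin (k + l + 1) → V // IsStarEmb k l A φ} : ℝ) /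
    (Fintype.card V : ℝ) ^ (k + l + 1)

/-- The probability that a uniformly random map induces a copy of `S_{k,l}`
and moreover has property `P`. -/
noncomputable def starProbOn (k l : ℕ) {V : Type*} [Fintype V] (A : V → V → Prop)
    (P : (Fin (k + l + 1) → V) → Prop) : ℝ :=
  (Nat.card {φ : Fin (k + l + 1) → V // IsStarEmb k l A φ ∧ P φ} : ℝ) /
    (Fintype.card V : ℝ) ^ (k + l + 1)

/-- `s(z→v) = Pr[φ ∈ 𝒮 | φ z = v]`. -/
noncomputable def sCond (k l : ℕ) {V : Type*} [Fintype V] (A : V → V → Prop)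
    (z : Fin (k + l + 1)) (v : V) : ℝ :=
  (Nat.card {φ : Fin (k + l + 1) → V // IsStarEmb k l A φ ∧ φ z = v} : ℝ) /
    (Fintype.card V : ℝ) ^ (k + l)

/-- `Pr[φ ∈ 𝒮 ∧ P φ | φ(c) = v]`, where `c = 0` is the center of the star. -/
noncomputable def sCondOn (k l : ℕ) {V : Type*} [Fintype V] (A : V → V → Prop) (v : V)
    (P : (Fin (k + l + 1) → V) → Prop) : ℝ :=
  (Nat.card {φ : Fin (k + l + 1) → V // IsStarEmb k l A φ ∧ φ 0 = v ∧ P φ} : ℝ) /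
    (Fintype.card V : ℝ) ^ (k + l)

open scoped Fin.NatCast in
/-- `s(v) = (s(c→v) + l·s(i→v) + k·s(o→v))/(m+1)`, where the center is `0`,
`k+1` is an in-leaf and `1` is an out-leaf. -/
noncomputable def sVert (k l : ℕ) {V : Type*} [Fintype V] (A : V → V → Prop) (v : V) : ℝ :=
  (sCond k l A 0 v + l * sCond k l A ((k + 1 : ℕ) : Fin (k + l + 1)) v
      + k * sCond k l A 1 v) / ((k : ℝ) + l + 1)

/-- `ρ(v)`: the proportion of vertices adjacent to `v`. -/
noncomputable def rho {V : Type*} [Fintype V] (A : V → V → Prop) (v : V) : ℝ :=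
  (Nat.card {u : V // A v u ∨ A u v} : ℝ) / (Fintype.card V : ℝ)

/-- `ρ⁺_B(v)`: the proportion of vertices that are out-neighbours of `v` lying in `B`. -/
noncomputable def rhoPIn {V : Type*} [Fintype V] (A : V → V → Prop) (B : Set V) (v : V) : ℝ :=
  (Nat.card {u : V // A v u ∧ u ∈ B} : ℝ) / (Fintype.card V : ℝ)

/-- `ρ⁻_B(v)`: the proportion of vertices that are in-neighbours of `v` lying in `B`. -/
noncomputable def rhoMIn {V : Type*} [Fintype V] (A : V → V → Prop) (B : Set V) (v : V) : ℝ :=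
  (Nat.card {u : V // A u v ∧ u ∈ B} : ℝ) / (Fintype.card V : ℝ)

/-- `ρ_B(v)`: the proportion of vertices adjacent to `v` lying in `B`. -/
noncomputable def rhoIn {V : Type*} [Fintype V] (A : V → V → Prop) (B : Set V) (v : V) : ℝ :=
  (Nat.card {u : V // (A v u ∨ A u v) ∧ u ∈ B} : ℝ) / (Fintype.card V : ℝ)

/-- `μ(B) = |B|/n`. -/
noncomputable def muSet {V : Type*} [Fintype V] (B : Set V) : ℝ :=
  (Nat.card B : ℝ) / (Fintype.card V : ℝ)

/-- `X`: the set of vertices of large degree, `ρ(v) ≥ 1/2`. -/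
def bigX {V : Type*} [Fintype V] (A : V → V → Prop) : Set V := {v | 1 / 2 ≤ rho A v}

/-- `Y = V(G) \ X`. -/
def bigY {V : Type*} [Fintype V] (A : V → V → Prop) : Set V := (bigX A)ᶜ

/-- `α = μ(X)`. -/
noncomputable def alphaX {V : Type*} [Fintype V] (A : V → V → Prop) : ℝ := muSet (bigX A)

/-- `D = min_{x ∈ X} ρ(x)`. -/
noncomputable def Dmin {V : Type*} [Fintype V] (A : V → V → Prop) : ℝ :=
  sInf (rho A '' bigX A)

/-- `β = max_{y ∈ Y} ρ_Y(y)`. -/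
noncomputable def betaY {V : Type*} [Fintype V] (A : V → V → Prop) : ℝ :=
  sSup ((fun y => rhoIn A (bigY A) y) '' bigY A)

/-- `γ = min_{x ∈ X} ρ⁻_Y(x)`. -/
noncomputable def gammaX {V : Type*} [Fintype V] (A : V → V → Prop) : ℝ :=
  sInf ((fun x => rhoMIn A (bigY A) x) '' bigX A)

/-- `S = (m+1)·min_{v ∈ V(G)} s(v)`. -/
noncomputable def Smin (k l : ℕ) {V : Type*} [Fintype V] (A : V → V → Prop) : ℝ :=
  ((k : ℝ) + l + 1) * sInf (Set.range (sVert k l A))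

/-- `S₁ = min_{x ∈ X} (ρ⁺_Y(x))^k (ρ⁻_Y(x))^l`. -/
noncomputable def S1min (k l : ℕ) {V : Type*} [Fintype V] (A : V → V → Prop) : ℝ :=
  sInf ((fun x => rhoPIn A (bigY A) x ^ k * rhoMIn A (bigY A) x ^ l) '' bigX A)

/-- `S₂ = S₁ − ((m−1)/((m+1)·C(m,k)))·(α+β)(1−α)(1−D)^{m−2}`. -/
noncomputable def S2min (k l : ℕ) {V : Type*} [Fintype V] (A : V → V → Prop) : ℝ :=
  S1min k l A - (((k : ℝ) + l - 1) / (((k : ℝ) + l + 1) * (Nat.choose (k + l) k : ℝ)))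
    * (alphaX A + betaY A) * (1 - alphaX A) * (1 - Dmin A) ^ (k + l - 2)

/-- `λ₀ = k^k l^l / m^m`. -/
noncomputable def lam0 (k l : ℕ) : ℝ := (k : ℝ) ^ k * (l : ℝ) ^ l / ((k : ℝ) + l) ^ (k + l)

/-- `λ₁ = k^k l (l−1)^{l−1} / (m−1)^{m−1}` (with the convention `0⁰ = 1`). -/
noncomputable def lam1 (k l : ℕ) : ℝ :=
  (k : ℝ) ^ k * (l : ℝ) * ((l : ℝ) - 1) ^ (l - 1) / ((k : ℝ) + l - 1) ^ (k + l - 1)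

/-- The edge density `ρ(Z)` of a set of vertices `Z`: the number of unordered adjacent
pairs in `Z` divided by `C(|Z|,2)`. -/
noncomputable def densSet {V : Type*} [Fintype V] (A : V → V → Prop) (Z : Set V) : ℝ :=
  ((Nat.card {p : V × V // p.1 ∈ Z ∧ p.2 ∈ Z ∧ (A p.1 p.2 ∨ A p.2 p.1)} : ℝ) / 2) /
    (Nat.choose (Nat.card Z) 2 : ℝ)

/-- `d = 1 − (E_{x ∈ X} ρ⁻_Y(x))/(1−α)`. -/
noncomputable def dXY {V : Type*} [Fintype V] (A : V → V → Prop) : ℝ :=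
  1 - ((∑ᶠ x ∈ bigX A, rhoMIn A (bigY A) x) / (Nat.card (bigX A) : ℝ)) / (1 - alphaX A)

/-- `OPT(k,l)`. -/
noncomputable def OPT (k l : ℕ) : ℝ :=
  if k = l then
    (1 / 2 ^ (2 * k)) *
      sSup {y : ℝ | ∃ a ∈ Set.Icc (0 : ℝ) 1, y = a * (1 - a) ^ (2 * k) + (1 - a) * a ^ (2 * k)}
  else
    sSup {y : ℝ | ∃ a ∈ Set.Icc (0 : ℝ) (1 / 2),
      ∃ d ∈ Set.Icc (0 : ℝ) ((k : ℝ) / ((k : ℝ) + (l : ℝ))),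
      y = a * (1 - a) ^ (k + l) * d ^ k * (1 - d) ^ l
        + (((k : ℝ) - 1) ^ (k - 1) * (l : ℝ) ^ l / ((k : ℝ) + (l : ℝ) - 1) ^ (k + l - 1))
          * (1 - a) * a ^ (k + l) * (1 - d)}

/-!
Write `m = k + l`, and suppose `s(G) > OPT`. By AM-GM a vertex adjacent to a fraction `d` of all
vertices is the center of a star with probability at most `λ₀ d ^ m`, with `λ₀ = lam0 k l`, while
`OPT ≥ λ₀ (m / (m + 1)) ^ m / (m + 1)`. Hence a vertex with `s(v) ≥ OPT` is adjacent either to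
almost all vertices or to less than two fifths of them, and the set `X` of vertices of the first
kind has density about `1 / (m + 1)`.

Now split the stars according to their center and to the side of their leaves. Stars with leaves
on both sides of `X` need a missing edge between `X` and its complement, and missing edges cost
more in the stars with center in `X` than they gain here. In the stars with center `x ∈ X`, arcs
among the leaves lose more than the stars with center outside `X` gain. What is left
is a function of `density X` and of the in- and out-densities at `x`, which is at most `OPT` by the
definition of `OPT` as a maximum. For `l = k` and `2 ≤ l < k` different bounds on the stars with all
leaves in `X` are needed. For `l = 1` the arcs between in-neighbours of `x` destroy no star centered
at `x`; the stars centered at such an in-neighbour are instead compared with the stars having the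
same center and leaves in `X`.
-/

section

open Finset
open scoped Classical

namespace OrientedStar

section Density

variable {α β : Type*} [Fintype α] [Fintype β]

/-- The density of `s`, i.e. its measure for the uniform probability on `α`, as a real number.
It is applied to sets of vertices and to sets of maps `ι → V` alike. -/
noncomputable def density (s : Finset α) : ℝ := s.dens

/-- The integral of `f` over `s` for the uniform probability on `α`. -/
noncomputable def unifInt (s : Finset α) (f : α → ℝ) : ℝ := (∑ a ∈ s, f a) / Fintype.card α

lemma density_eq_card_div (s : Finset α) : density s = #s / Fintype.card α := nnratCast_dens s

lemma density_nonneg (s : Finset α) : 0 ≤ density s := NNRat.cast_nonneg _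

lemma density_le_one (s : Finset α) : density s ≤ 1 := by
  unfold density; exact_mod_cast dens_le_one

lemma density_mono {s t : Finset α} (h : s ⊆ t) : density s ≤ density t := by
  unfold density; exact_mod_cast dens_le_dens h

lemma density_univ [Nonempty α] : density (univ : Finset α) = 1 := by
  unfold density; exact_mod_cast dens_univ

lemma density_union_of_disjoint [DecidableEq α] {s t : Finset α} (h : Disjoint s t) :
    density (s ∪ t) = density s + density t := by
  unfold density; exact_mod_cast dens_union_of_disjoint h

lemma density_union_le [DecidableEq α] (s t : Finset α) :
    density (s ∪ t) ≤ density s + density t := by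
  unfold density; exact_mod_cast dens_union_le s t

lemma density_inter_add_sdiff [DecidableEq α] (s t : Finset α) :
    density (s ∩ t) + density (s \ t) = density s := by
  unfold density; exact_mod_cast dens_inter_add_dens_sdiff s t

lemma density_compl [DecidableEq α] [Nonempty α] (s : Finset α) : density sᶜ = 1 - density s := by
  have h := density_inter_add_sdiff univ s
  rw [univ_inter, ← compl_eq_univ_sdiff, density_univ] at h
  linarith

lemma unifInt_mono {s : Finset α} {f g : α → ℝ} (h : ∀ a ∈ s, f a ≤ g a) :
    unifInt s f ≤ unifInt s g :=
  div_le_div_of_nonneg_right (sum_le_sum h) (Nat.cast_nonneg _)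

lemma unifInt_congr {s : Finset α} {f g : α → ℝ} (h : ∀ a ∈ s, f a = g a) :
    unifInt s f = unifInt s g := congrArg (· / _) (sum_congr rfl h)

lemma unifInt_nonneg {s : Finset α} {f : α → ℝ} (h : ∀ a ∈ s, 0 ≤ f a) : 0 ≤ unifInt s f :=
  div_nonneg (sum_nonneg h) (Nat.cast_nonneg _)

lemma unifInt_mono_set {s t : Finset α} {f : α → ℝ} (hst : s ⊆ t) (h : ∀ a ∈ t, 0 ≤ f a) :
    unifInt s f ≤ unifInt t f :=
  div_le_div_of_nonneg_right (sum_le_sum_of_subset_of_nonneg hst fun a ha _ ↦ h a ha)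
    (Nat.cast_nonneg _)

lemma unifInt_const (s : Finset α) (c : ℝ) : unifInt s (fun _ ↦ c) = c * density s := by
  rw [unifInt, density_eq_card_div, sum_const, nsmul_eq_mul]; ring

lemma unifInt_one (s : Finset α) : unifInt s (fun _ ↦ 1) = density s := by
  rw [unifInt_const, one_mul]

lemma unifInt_le_const {s : Finset α} {f : α → ℝ} {c : ℝ} (h : ∀ a ∈ s, f a ≤ c) :
    unifInt s f ≤ c * density s := (unifInt_mono h).trans_eq (unifInt_const s c)

lemma unifInt_const_mul (s : Finset α) (c : ℝ) (f : α → ℝ) :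
    unifInt s (fun a ↦ c * f a) = c * unifInt s f := by
  rw [unifInt, unifInt, ← mul_sum, mul_div_assoc]

lemma unifInt_add (s : Finset α) (f g : α → ℝ) :
    unifInt s (fun a ↦ f a + g a) = unifInt s f + unifInt s g := by
  rw [unifInt, unifInt, unifInt, sum_add_distrib, add_div]

lemma unifInt_sub (s : Finset α) (f g : α → ℝ) :
    unifInt s (fun a ↦ f a - g a) = unifInt s f - unifInt s g := by
  rw [unifInt, unifInt, unifInt, sum_sub_distrib, sub_div]

lemma unifInt_union [DecidableEq α] {s t : Finset α} (h : Disjoint s t) (f : α → ℝ) :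
    unifInt (s ∪ t) f = unifInt s f + unifInt t f := by
  rw [unifInt, unifInt, unifInt, sum_union h, add_div]

lemma unifInt_inter_add_sdiff [DecidableEq α] (s t : Finset α) (f : α → ℝ) :
    unifInt (s ∩ t) f + unifInt (s \ t) f = unifInt s f := by
  rw [unifInt, unifInt, unifInt, ← add_div, sum_inter_add_sum_sdiff]

lemma unifInt_add_unifInt_compl [DecidableEq α] (s : Finset α) (f : α → ℝ) :
    unifInt s f + unifInt sᶜ f = unifInt univ f := by
  rw [unifInt, unifInt, unifInt, ← add_div, sum_add_sum_compl]

lemma unifInt_filter (s : Finset α) (p : α → Prop) [DecidablePred p] (f : α → ℝ) :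
    unifInt {a ∈ s | p a} f = unifInt s (fun a ↦ if p a then f a else 0) := by
  rw [unifInt, unifInt, sum_filter]

lemma unifInt_comm (s : Finset α) (t : Finset β) (f : α → β → ℝ) :
    unifInt s (fun a ↦ unifInt t (f a)) = unifInt t (fun b ↦ unifInt s (fun a ↦ f a b)) := by
  simp only [unifInt]; rw [← sum_div, ← sum_div, sum_comm, div_right_comm]

lemma unifInt_comm_filter (s : Finset α) (t : Finset β) (r : α → β → Prop)
    [∀ a b, Decidable (r a b)] (f : α → β → ℝ) :
    unifInt s (fun a ↦ unifInt {b ∈ t | r a b} (f a)) =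
      unifInt t (fun b ↦ unifInt {a ∈ s | r a b} (fun a ↦ f a b)) := by
  simp_rw [unifInt_filter]
  exact unifInt_comm s t _

lemma unifInt_density_comm (s : Finset α) (t : Finset β) (r : α → β → Prop)
    [∀ a b, Decidable (r a b)] :
    unifInt s (fun a ↦ density {b ∈ t | r a b}) =
      unifInt t (fun b ↦ density {a ∈ s | r a b}) := by
  simp_rw [← unifInt_one]
  exact unifInt_comm_filter s t r fun _ _ ↦ 1

end Density

section Neighbourhoods

variable {V : Type*} [Fintype V] {A : V → V → Prop}

/-- The out-neighbourhood of `v` in the digraph with arc relation `A`. -/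
noncomputable def outNbr (A : V → V → Prop) (v : V) : Finset V := {u | A v u}

/-- The in-neighbourhood of `v` in the digraph with arc relation `A`. -/
noncomputable def inNbr (A : V → V → Prop) (v : V) : Finset V := {u | A u v}

/-- The neighbourhood of `v` in the underlying graph of the digraph with arc relation `A`. -/
noncomputable def nbr (A : V → V → Prop) (v : V) : Finset V := {u | A v u ∨ A u v}

@[simp] lemma mem_outNbr {u v : V} : u ∈ outNbr A v ↔ A v u := by simp [outNbr]

@[simp] lemma mem_inNbr {u v : V} : u ∈ inNbr A v ↔ A u v := by simp [inNbr]

@[simp] lemma mem_nbr {u v : V} : u ∈ nbr A v ↔ A v u ∨ A u v := by simp [nbr]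

lemma inNbr_subset_nbr (v : V) : inNbr A v ⊆ nbr A v := fun _ h ↦
  mem_nbr.2 (.inr (mem_inNbr.1 h))

lemma nbr_inter_eq_union (v : V) (T : Finset V) :
    nbr A v ∩ T = (outNbr A v ∩ T) ∪ (inNbr A v ∩ T) := by
  ext; simp [or_and_right]

lemma disjoint_outNbr_inNbr [Std.Asymm A] (v : V) : Disjoint (outNbr A v) (inNbr A v) :=
  disjoint_left.2 fun u h h' ↦ Std.Asymm.asymm v u (mem_outNbr.1 h) (mem_inNbr.1 h')

lemma disjoint_outNbr_inter_inNbr_inter [Std.Asymm A] (v : V) (T : Finset V) :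
    Disjoint (outNbr A v ∩ T) (inNbr A v ∩ T) :=
  (disjoint_outNbr_inNbr v).mono inter_subset_left inter_subset_left

lemma density_outNbr_add_inNbr [Std.Asymm A] (v : V) (T : Finset V) :
    density (outNbr A v ∩ T) + density (inNbr A v ∩ T) = density (nbr A v ∩ T) := by
  rw [nbr_inter_eq_union, density_union_of_disjoint (disjoint_outNbr_inter_inNbr_inter v T)]

lemma unifInt_outNbr_comm (S T : Finset V) (g : V → V → ℝ) :
    unifInt S (fun u ↦ unifInt (outNbr A u ∩ T) (g u)) =
      unifInt T (fun v ↦ unifInt (inNbr A v ∩ S) (fun u ↦ g u v)) := by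
  convert unifInt_comm_filter S T A g using 4 <;> ext <;> simp [and_comm]

end Neighbourhoods

section Constants

lemma lam0_comm (a b : ℕ) : lam0 a b = lam0 b a := by
  simp only [lam0, add_comm, mul_comm]

lemma lam0_pos (a b : ℕ) : 0 < lam0 a b := by
  have h (c : ℕ) : (0 : ℝ) < (c : ℝ) ^ c := by exact_mod_cast Nat.pow_self_pos
  have hab := h (a + b)
  push_cast at hab
  exact div_pos (mul_pos (h a) (h b)) hab

/-- Weighted AM-GM, applied to `p / a` and `q / b` with weights `a` and `b`. -/
lemma pow_mul_pow_le_lam0_mul (a b : ℕ) {p q : ℝ} (hp : 0 ≤ p) (hq : 0 ≤ q) :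
    p ^ a * q ^ b ≤ lam0 a b * (p + q) ^ (a + b) := by
  obtain hab | hab := (a + b).eq_zero_or_pos
  · obtain ⟨rfl, rfl⟩ : a = 0 ∧ b = 0 := by omega
    simp [lam0]
  have hn : (0 : ℝ) < a + b := by exact_mod_cast hab
  have mul_div_le (c : ℕ) {x : ℝ} (hx : 0 ≤ x) : c / (a + b : ℝ) * (x / c) ≤ x / (a + b) := by
    obtain rfl | hc := c.eq_zero_or_pos
    · simpa using div_nonneg hx hn.le
    · field_simp; rfl
  have pow_eq (c : ℕ) (x : ℝ) : x ^ c = (c : ℝ) ^ c * (x / c) ^ c := by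
    obtain rfl | hc := c.eq_zero_or_pos
    · simp
    · rw [← mul_pow]; field_simp
  have mean : (p / a) ^ (a / (a + b) : ℝ) * (q / b) ^ (b / (a + b) : ℝ) ≤ (p + q) / (a + b) :=
    calc
      _ ≤ a / (a + b : ℝ) * (p / a) + b / (a + b : ℝ) * (q / b) :=
        Real.geom_mean_le_arith_mean2_weighted (by positivity) (by positivity) (by positivity)
          (by positivity) (by field_simp)
      _ ≤ p / (a + b) + q / (a + b) := add_le_add (mul_div_le a hp) (mul_div_le b hq)
      _ = (p + q) / (a + b) := (add_div ..).symm
  have mean_pow := pow_le_pow_left₀ (by positivity) mean (a + b)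
  rw [mul_pow, ← Real.rpow_mul_natCast (by positivity), ← Real.rpow_mul_natCast (by positivity),
    Nat.cast_add, div_mul_cancel₀ _ hn.ne', div_mul_cancel₀ _ hn.ne', Real.rpow_natCast,
    Real.rpow_natCast] at mean_pow
  calc
    p ^ a * q ^ b = (a : ℝ) ^ a * (b : ℝ) ^ b * ((p / a) ^ a * (q / b) ^ b) := by
      rw [pow_eq a p, pow_eq b q]; ring
    _ ≤ (a : ℝ) ^ a * (b : ℝ) ^ b * ((p + q) / (a + b)) ^ (a + b) := by gcongr
    _ = lam0 a b * (p + q) ^ (a + b) := by rw [lam0, div_pow]; ring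

lemma half_pow_le_lam0 (a b : ℕ) : (1 / 2 : ℝ) ^ (a + b) ≤ lam0 a b := by
  have h := pow_mul_pow_le_lam0_mul a b (p := 1 / 2) (q := 1 / 2) (by norm_num) (by norm_num)
  rwa [← pow_add, add_halves, one_pow, mul_one] at h

lemma lam0_self {k : ℕ} (hk : k ≠ 0) : lam0 k k = 1 / 2 ^ (2 * k) := by
  rw [lam0, ← two_mul, ← two_mul, mul_pow, ← pow_add, ← two_mul]
  field_simp

/-- The factor `m ^ m / (m - 1) ^ (m - 1)`: prescribing one of the `m` leaves of a star costs at
most this much relative to `lam0`. -/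
noncomputable def leafFactor (m : ℕ) : ℝ := (m : ℝ) ^ m / ((m : ℝ) - 1) ^ (m - 1)

/-- The factor `(m / (m + 1)) ^ m`, which is `m + 1` times the maximum of `α (1 - α) ^ m`. -/
noncomputable def centerFactor (m : ℕ) : ℝ := ((m : ℝ) / (m + 1)) ^ m

lemma leafFactor_nonneg {m : ℕ} (hm : 1 ≤ m) : 0 ≤ leafFactor m := by
  have : (0 : ℝ) ≤ m - 1 := sub_nonneg.2 (by exact_mod_cast hm)
  unfold leafFactor
  positivity

lemma mul_lam0_pred_left_le {k l : ℕ} (hk : 1 ≤ k) (hm : 2 ≤ k + l) :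
    (k : ℝ) * lam0 (k - 1) l ≤ lam0 k l * leafFactor (k + l) := by
  obtain ⟨j, rfl⟩ : ∃ j, k = j + 1 := ⟨k - 1, by omega⟩
  have hjl : (0 : ℝ) < j + l := by exact_mod_cast (by omega : 0 < j + l)
  have hcancel : lam0 (j + 1) l * leafFactor (j + 1 + l) =
      ((j + 1 : ℕ) : ℝ) ^ (j + 1) * (l : ℝ) ^ l / ((j : ℝ) + l) ^ (j + l) := by
    unfold lam0 leafFactor
    rw [show j + 1 + l - 1 = j + l by omega, Nat.cast_add (j + 1) l,
      show ((j + 1 : ℕ) : ℝ) + l - 1 = j + l by push_cast; ring]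
    field_simp
  rw [hcancel, Nat.add_sub_cancel, lam0, ← mul_div_assoc, ← mul_assoc, pow_succ']
  gcongr
  omega

lemma mul_lam0_pred_right_le {k l : ℕ} (hl : 1 ≤ l) (hm : 2 ≤ k + l) :
    (l : ℝ) * lam0 k (l - 1) ≤ lam0 k l * leafFactor (k + l) := by
  rw [lam0_comm k (l - 1), lam0_comm k l, add_comm k l]
  exact mul_lam0_pred_left_le hl (by omega)

lemma lam0_one_mul_leafFactor {k : ℕ} (hk : 1 ≤ k) : lam0 k 1 * leafFactor (k + 1) = 1 := by
  simp only [lam0, leafFactor, Nat.cast_add, Nat.cast_one, one_pow, mul_one, add_sub_cancel_right,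
    Nat.add_sub_cancel]
  field_simp

lemma lam0_two_div_four {k : ℕ} (hk : 1 ≤ k) :
    lam0 2 k / 4 = lam0 k 1 * centerFactor (k + 1) / (k + 2) := by
  unfold lam0 centerFactor
  push_cast
  rw [show (k : ℝ) + 1 + 1 = k + 2 by ring, div_pow, show 2 + k = k + 1 + 1 by ring,
    show (2 : ℝ) + k = k + 2 by ring, pow_succ ((k : ℝ) + 2) (k + 1)]
  field_simp
  norm_num

lemma one_add_mul_mul_one_sub_pow_le_one {u : ℝ} (h0 : 0 ≤ u) (h1 : u ≤ 1) (n : ℕ) :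
    (1 + n * u) * (1 - u) ^ n ≤ 1 :=
  calc (1 + n * u) * (1 - u) ^ n ≤ (1 + u) ^ n * (1 - u) ^ n :=
        mul_le_mul_of_nonneg_right (one_add_mul_le_pow (by linarith) n)
          (pow_nonneg (by linarith) n)
    _ = (1 - u ^ 2) ^ n := by rw [← mul_pow]; ring
    _ ≤ 1 := pow_le_one₀ (by nlinarith) (by nlinarith)

end Constants

section Families

variable {V ι : Type*} [Fintype V] [Fintype ι] [DecidableEq ι]

/-- The probability that a uniformly random map `f : ι → V` lies in `S`, conditioned on
`f a = v`. -/
noncomputable def condDensity (S : Finset (ι → V)) (a : ι) (v : V) : ℝ :=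
  Fintype.card V * density {f ∈ S | f a = v}

lemma density_piFinset (E : ι → Finset V) :
    density (Fintype.piFinset E) = ∏ b, density (E b) := by
  simp only [density_eq_card_div, Fintype.card_piFinset, Fintype.card_pi, Nat.cast_prod,
    prod_div_distrib]

lemma density_le_prod {S : Finset (ι → V)} {E : ι → Finset V} (h : ∀ f ∈ S, ∀ b, f b ∈ E b) :
    density S ≤ ∏ b, density (E b) :=
  (density_mono fun f hf ↦ Fintype.mem_piFinset.2 (h f hf)).trans_eq (density_piFinset E)

lemma condDensity_le_prod {S : Finset (ι → V)} {a : ι} {v : V} {E : ι → Finset V}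
    (h : ∀ f ∈ S, f a = v → ∀ b ≠ a, f b ∈ E b) :
    condDensity S a v ≤ ∏ b ∈ univ.erase a, density (E b) := by
  have hV : (0 : ℝ) < Fintype.card V := by exact_mod_cast Fintype.card_pos_iff.2 ⟨v⟩
  have hS := density_le_prod (S := {f ∈ S | f a = v}) (E := Function.update E a {v})
    fun f hf b ↦ by
      obtain ⟨hfS, hfa⟩ := mem_filter.1 hf
      obtain rfl | hb := eq_or_ne b a
      · simpa using hfa
      · simpa [hb] using h f hfS hfa b hb
  rw [← mul_prod_erase univ _ (mem_univ a), Function.update_self, density_eq_card_div {v},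
    card_singleton, Nat.cast_one,
    prod_congr rfl fun b hb ↦ by rw [Function.update_of_ne (ne_of_mem_erase hb)]] at hS
  calc condDensity S a v ≤ Fintype.card V * (1 / Fintype.card V * _) :=
        mul_le_mul_of_nonneg_left hS hV.le
    _ = _ := by field_simp

lemma condDensity_eq_zero {S : Finset (ι → V)} {a : ι} {v : V} (h : ∀ f ∈ S, f a ≠ v) :
    condDensity S a v = 0 := by
  rw [condDensity, filter_eq_empty_iff.2 fun f hf ↦ h f hf]
  simp [density]

lemma density_filter_mem (S : Finset (ι → V)) (a : ι) (T : Finset V) :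
    density {f ∈ S | f a ∈ T} = unifInt T (condDensity S a) := by
  obtain hT | ⟨v, -⟩ := T.eq_empty_or_nonempty
  · simp [hT, density, unifInt]
  have hV : (Fintype.card V : ℝ) ≠ 0 := by exact_mod_cast (Fintype.card_pos_iff.2 ⟨v⟩).ne'
  have hfib : ((#{f ∈ S | f a ∈ T} : ℕ) : ℝ) = ∑ v ∈ T, (#{f ∈ S | f a = v} : ℝ) := by
    rw [card_eq_sum_card_fiberwise (s := {f ∈ S | f a ∈ T}) (f := (· a)) (t := T)
      fun f hf ↦ (mem_filter.1 hf).2]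
    push_cast
    refine sum_congr rfl fun v hv ↦ ?_
    rw [filter_filter]
    congr 3
    ext f
    exact ⟨And.right, fun h ↦ ⟨h ▸ hv, h⟩⟩
  simp only [unifInt, condDensity, density_eq_card_div]
  rw [← mul_sum, ← sum_div, hfib, mul_div_cancel_left₀ _ hV]

lemma density_biUnion_le [DecidableEq V] {β : Type*} (s : Finset β) (S : β → Finset (ι → V)) :
    density (s.biUnion S) ≤ ∑ b ∈ s, density (S b) := by
  simp only [density_eq_card_div]
  rw [← sum_div]
  gcongr
  exact_mod_cast card_biUnion_le

end Families

section StarLeaves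

variable {V : Type*} [Fintype V] {k l : ℕ} {A : V → V → Prop}

/-- The part of `B` in which the leaves of a star centered at `c` may lie: the out-leaves are
indexed by `Fin k` and the in-leaves by `Fin l`. -/
noncomputable def leafNbr (k l : ℕ) (A : V → V → Prop) (c : V) (B : Finset V) :
    Fin k ⊕ Fin l → Finset V :=
  Sum.elim (fun _ ↦ outNbr A c ∩ B) (fun _ ↦ inNbr A c ∩ B)

/-- The leaf maps, with values in `B`, of the induced stars centered at `c`. Injectivity is not
required, which only enlarges the set. -/
noncomputable def starLeaves (k l : ℕ) (A : V → V → Prop) (c : V) (B : Finset V) :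
    Finset (Fin k ⊕ Fin l → V) :=
  {f ∈ Fintype.piFinset (leafNbr k l A c B) | ∀ a b, ¬ A (f a) (f b)}

lemma mem_starLeaves {c : V} {B : Finset V} {f : Fin k ⊕ Fin l → V} :
    f ∈ starLeaves k l A c B ↔ (∀ a, f a ∈ leafNbr k l A c B a) ∧ ∀ a b, ¬ A (f a) (f b) := by
  rw [starLeaves, mem_filter, Fintype.mem_piFinset]

lemma leafNbr_subset (c : V) (B : Finset V) (a : Fin k ⊕ Fin l) :
    leafNbr k l A c B a ⊆ nbr A c ∩ B := by
  rw [nbr_inter_eq_union]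
  cases a
  exacts [subset_union_left, subset_union_right]

lemma mem_of_mem_starLeaves {c : V} {B : Finset V} {f : Fin k ⊕ Fin l → V}
    (hf : f ∈ starLeaves k l A c B) (a : Fin k ⊕ Fin l) : f a ∈ nbr A c ∩ B :=
  leafNbr_subset c B a ((mem_starLeaves.1 hf).1 a)

lemma notMem_nbr_of_mem_starLeaves {c : V} {B : Finset V} {f : Fin k ⊕ Fin l → V}
    (hf : f ∈ starLeaves k l A c B) (a b : Fin k ⊕ Fin l) : f a ∉ nbr A (f b) := by
  have hindep := (mem_starLeaves.1 hf).2
  simp [hindep a b, hindep b a]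

lemma density_starLeaves_le_mul (c : V) (B : Finset V) :
    density (starLeaves k l A c B) ≤
      density (outNbr A c ∩ B) ^ k * density (inNbr A c ∩ B) ^ l := by
  refine (density_le_prod (S := starLeaves k l A c B) fun f hf ↦
    (mem_starLeaves.1 hf).1).trans_eq ?_
  simp [leafNbr]

lemma density_starLeaves_le [Std.Asymm A] (c : V) (B : Finset V) :
    density (starLeaves k l A c B) ≤ lam0 k l * density (nbr A c ∩ B) ^ (k + l) := by
  rw [← density_outNbr_add_inNbr]
  exact (density_starLeaves_le_mul c B).trans
    (pow_mul_pow_le_lam0_mul k l (density_nonneg _) (density_nonneg _))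

lemma condDensity_starLeaves_le_prod (c v : V) (B : Finset V) (a : Fin k ⊕ Fin l) :
    condDensity (starLeaves k l A c B) a v ≤
      ∏ b ∈ univ.erase a, density (leafNbr k l A c (B \ nbr A v) b) := by
  refine condDensity_le_prod fun f hf hfa b _ ↦ ?_
  have hb := (mem_starLeaves.1 hf).1 b
  have hv := hfa ▸ notMem_nbr_of_mem_starLeaves hf b a
  cases b
  all_goals
    obtain ⟨hc, hB⟩ := mem_inter.1 hb
    exact mem_inter.2 ⟨hc, mem_sdiff.2 ⟨hB, hv⟩⟩

lemma condDensity_starLeaves_eq_zero {c v : V} {B : Finset V} {a : Fin k ⊕ Fin l}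
    (h : v ∉ leafNbr k l A c B a) : condDensity (starLeaves k l A c B) a v = 0 :=
  condDensity_eq_zero fun _ hf hfa ↦ h (hfa ▸ (mem_starLeaves.1 hf).1 a)

lemma condDensity_starLeaves_inl_le [Std.Asymm A] (c v : V) (B : Finset V) (a : Fin k) :
    condDensity (starLeaves k l A c B) (.inl a) v ≤ if v ∈ outNbr A c ∩ B then
      lam0 (k - 1) l * density ((nbr A c ∩ B) \ nbr A v) ^ (k + l - 1) else 0 := by
  split_ifs with hv
  swap
  · exact (condDensity_starLeaves_eq_zero hv).le
  have herase : univ.erase (.inl a : Fin k ⊕ Fin l) = (univ.erase a).disjSum univ := by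
    ext (b | b) <;> simp
  calc _ ≤ ∏ b ∈ univ.erase (.inl a), density (leafNbr k l A c (B \ nbr A v) b) :=
        condDensity_starLeaves_le_prod ..
    _ = density (outNbr A c ∩ (B \ nbr A v)) ^ (k - 1) *
          density (inNbr A c ∩ (B \ nbr A v)) ^ l := by
        rw [herase, prod_disjSum]; simp [leafNbr]
    _ ≤ _ := pow_mul_pow_le_lam0_mul _ _ (density_nonneg _) (density_nonneg _)
    _ = _ := by
        rw [density_outNbr_add_inNbr, inter_sdiff_assoc, Nat.sub_add_comm (by have := a.2; omega)]

lemma condDensity_starLeaves_inr_le [Std.Asymm A] (c v : V) (B : Finset V) (a : Fin l) :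
    condDensity (starLeaves k l A c B) (.inr a) v ≤ if v ∈ inNbr A c ∩ B then
      lam0 k (l - 1) * density ((nbr A c ∩ B) \ nbr A v) ^ (k + l - 1) else 0 := by
  split_ifs with hv
  swap
  · exact (condDensity_starLeaves_eq_zero hv).le
  have herase : univ.erase (.inr a : Fin k ⊕ Fin l) = univ.disjSum (univ.erase a) := by
    ext (b | b) <;> simp
  calc _ ≤ ∏ b ∈ univ.erase (.inr a), density (leafNbr k l A c (B \ nbr A v) b) :=
        condDensity_starLeaves_le_prod ..
    _ = density (outNbr A c ∩ (B \ nbr A v)) ^ k *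
          density (inNbr A c ∩ (B \ nbr A v)) ^ (l - 1) := by
        rw [herase, prod_disjSum]; simp [leafNbr]
    _ ≤ _ := pow_mul_pow_le_lam0_mul _ _ (density_nonneg _) (density_nonneg _)
    _ = _ := by
        rw [density_outNbr_add_inNbr, inter_sdiff_assoc, Nat.add_sub_assoc (by have := a.2; omega)]

end StarLeaves

section Transfer

variable {V : Type*} {k l : ℕ}

/-- The restriction of a map defined on the vertices of the star to the leaves. -/
def leafMap (φ : Fin (k + l + 1) → V) : Fin k ⊕ Fin l → V := fun a ↦ φ (finSumFinEquiv a).succ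

lemma eq_of_leafMap_eq {φ ψ : Fin (k + l + 1) → V} (h0 : φ 0 = ψ 0)
    (h : leafMap φ = leafMap ψ) : φ = ψ := by
  refine funext (Fin.cases h0 fun i ↦ ?_)
  simpa [leafMap] using congrFun h (finSumFinEquiv.symm i)

variable [Fintype V] {A : V → V → Prop}

lemma leafMap_mem_starLeaves {φ : Fin (k + l + 1) → V} (h : IsStarEmb k l A φ) :
    leafMap φ ∈ starLeaves k l A (φ 0) univ := by
  rw [mem_starLeaves]
  constructor
  · rintro (a | a)
    · simpa [leafNbr, leafMap] using (h.2 0 _).1 (.inl ⟨rfl, by simp, by simp⟩)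
    · simpa [leafNbr, leafMap] using (h.2 _ 0).1 (.inr ⟨rfl, by simp⟩)
  · intro a b hab
    have := (h.2 _ _).2 hab
    simp [StarArc] at this

lemma natCard_isStarEmb_le {P : (Fin (k + l + 1) → V) → Prop}
    {Q : V → (Fin k ⊕ Fin l → V) → Prop} (h : ∀ φ, P φ → Q (φ 0) (leafMap φ)) :
    Nat.card {φ : Fin (k + l + 1) → V // IsStarEmb k l A φ ∧ P φ} ≤
      ∑ c, #{f ∈ starLeaves k l A c univ | Q c f} := by
  rw [Nat.card_eq_fintype_card, Fintype.card_subtype, ← card_sigma]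
  refine card_le_card_of_injOn
    (fun φ ↦ (⟨φ 0, leafMap φ⟩ : (_ : V) × (Fin k ⊕ Fin l → V))) (fun φ hφ ↦ ?_) fun φ _ ψ _ he ↦ ?_
  · obtain ⟨hemb, hP⟩ := (mem_filter.1 hφ).2
    simpa using ⟨leafMap_mem_starLeaves hemb, h φ hP⟩
  · obtain ⟨h0, hleaf⟩ := Sigma.mk.inj_iff.1 he
    exact eq_of_leafMap_eq h0 (eq_of_heq hleaf)

lemma density_eq_card_div_pow (S : Finset (Fin k ⊕ Fin l → V)) :
    density S = #S / (Fintype.card V : ℝ) ^ (k + l) := by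
  simp [density_eq_card_div, Fintype.card_pi]

lemma starProb_le_unifInt_density_starLeaves :
    starProb k l V A ≤ unifInt univ fun c ↦ density (starLeaves k l A c univ) := by
  have h := natCard_isStarEmb_le (k := k) (l := l) (A := A) (P := fun _ ↦ True)
    (Q := fun _ _ ↦ True) fun _ _ ↦ trivial
  simp only [and_true, filter_true] at h
  simp only [starProb, unifInt, density_eq_card_div_pow]
  rw [← sum_div, div_div, ← pow_succ]
  gcongr
  exact_mod_cast h

lemma sCond_zero_le (v : V) : sCond k l A 0 v ≤ density (starLeaves k l A v univ) := by
  have h := natCard_isStarEmb_le (k := k) (l := l) (A := A) (P := fun φ ↦ φ 0 = v)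
    (Q := fun c _ ↦ c = v) fun _ ↦ id
  have hsum : ∑ c, #{_f ∈ starLeaves k l A c univ | c = v} = #(starLeaves k l A v univ) := by
    rw [sum_eq_single v (fun c _ hc ↦ by simp [hc]) (by simp)]
    simp
  rw [sCond, density_eq_card_div_pow]
  gcongr
  exact_mod_cast h.trans_eq hsum

lemma sCond_leaf_le (v : V) (a : Fin k ⊕ Fin l) :
    sCond k l A (finSumFinEquiv a).succ v ≤
      unifInt univ fun c ↦ condDensity (starLeaves k l A c univ) a v := by
  have hV : (0 : ℝ) < Fintype.card V := by exact_mod_cast Fintype.card_pos_iff.2 ⟨v⟩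
  have h := natCard_isStarEmb_le (k := k) (l := l) (A := A)
    (P := fun φ ↦ φ (finSumFinEquiv a).succ = v) (Q := fun _ f ↦ f a = v) fun _ ↦ id
  simp only [sCond, unifInt, condDensity, density_eq_card_div_pow]
  rw [← mul_sum, ← sum_div, mul_div_cancel_left₀ _ hV.ne']
  gcongr
  exact_mod_cast h

lemma mul_sVert_le (hk : 1 ≤ k) (hl : 1 ≤ l) (v : V) :
    ((k : ℝ) + l + 1) * sVert k l A v ≤ density (starLeaves k l A v univ) +
      l * unifInt univ (fun c ↦ condDensity (starLeaves k l A c univ) (.inr ⟨0, hl⟩) v) +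
      k * unifInt univ (fun c ↦ condDensity (starLeaves k l A c univ) (.inl ⟨0, hk⟩) v) := by
  have hin : Fin.ofNat (k + l + 1) (k + 1) = (finSumFinEquiv (.inr ⟨0, hl⟩)).succ := by
    ext; simp [Fin.ofNat, Nat.mod_eq_of_lt (show k + 1 < k + l + 1 by omega)]
  have hout : (1 : Fin (k + l + 1)) = (finSumFinEquiv (.inl ⟨0, hk⟩)).succ := by
    ext; simp [Nat.mod_eq_of_lt (show 1 < k + l + 1 by omega)]
  rw [sVert, mul_div_cancel₀ _ (by positivity)]
  gcongr
  · exact sCond_zero_le v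
  · exact (congrArg (sCond k l A · v) hin).trans_le (sCond_leaf_le v _)
  · exact hout ▸ sCond_leaf_le v _

end Transfer

section LeafBounds

variable {V : Type*} [Fintype V] {k l : ℕ} {A : V → V → Prop}

lemma mul_ite_outNbr_add_mul_ite_inNbr_le [Std.Asymm A] (hk : 1 ≤ k) (hl : 1 ≤ l) (c v : V)
    (B : Finset V) {d : ℝ} (hd : 0 ≤ d) :
    k * (if v ∈ outNbr A c ∩ B then lam0 (k - 1) l * d else 0) +
      l * (if v ∈ inNbr A c ∩ B then lam0 k (l - 1) * d else 0) ≤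
    if v ∈ nbr A c ∩ B then lam0 k l * leafFactor (k + l) * d else 0 := by
  have hleft := mul_le_mul_of_nonneg_right (mul_lam0_pred_left_le (l := l) hk (by omega)) hd
  have hright := mul_le_mul_of_nonneg_right (mul_lam0_pred_right_le (k := k) hl (by omega)) hd
  simp only [nbr_inter_eq_union, mem_union]
  by_cases hout : v ∈ outNbr A c ∩ B
  · have hin := disjoint_left.1 (disjoint_outNbr_inter_inNbr_inter c B) hout
    simpa only [hout, hin, if_true, if_false, mul_zero, add_zero, or_false, ← mul_assoc] using hleft
  · by_cases hin : v ∈ inNbr A c ∩ B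
    · simpa only [hout, hin, if_true, if_false, mul_zero, zero_add, or_true, ← mul_assoc]
        using hright
    · simp [hout, hin]

lemma mul_unifInt_condDensity_inr_add_mul_inl_le [Std.Asymm A] (v : V) (a : Fin k) (b : Fin l) :
    l * unifInt univ (fun c ↦ condDensity (starLeaves k l A c univ) (.inr b) v) +
      k * unifInt univ (fun c ↦ condDensity (starLeaves k l A c univ) (.inl a) v) ≤
    lam0 k l * leafFactor (k + l) *
      unifInt (nbr A v) (fun c ↦ density (nbr A c \ nbr A v) ^ (k + l - 1)) := by
  have hnbr : nbr A v = ({c ∈ univ | v ∈ nbr A c} : Finset V) := by ext; simp [or_comm]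
  rw [← unifInt_const_mul, ← unifInt_const_mul, ← unifInt_add, ← unifInt_const_mul]
  conv_rhs => rw [hnbr, unifInt_filter, ← hnbr]
  refine unifInt_mono fun c _ ↦ ?_
  have hin := condDensity_starLeaves_inr_le (k := k) (A := A) c v univ b
  have hout := condDensity_starLeaves_inl_le (l := l) (A := A) c v univ a
  have hweights := mul_ite_outNbr_add_mul_ite_inNbr_le (k := k) (l := l) (A := A)
    (by have := a.2; omega) (by have := b.2; omega) c v univ
    (pow_nonneg (density_nonneg ((nbr A c ∩ univ) \ nbr A v)) (k + l - 1))
  simp only [inter_univ] at hin hout hweights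
  rw [add_comm]
  refine le_trans ?_ hweights
  gcongr

lemma density_starLeaves_filter_exists_mem_le [Std.Asymm A] (hk : 1 ≤ k) (hl : 1 ≤ l) (c : V)
    (B T : Finset V) :
    density {f ∈ starLeaves k l A c B | ∃ a, f a ∈ T} ≤ lam0 k l * leafFactor (k + l) *
      unifInt {v ∈ T | v ∈ nbr A c ∩ B} (fun v ↦
        density ((nbr A c ∩ B) \ nbr A v) ^ (k + l - 1)) := by
  have hcover : ({f ∈ starLeaves k l A c B | ∃ a, f a ∈ T} : Finset (Fin k ⊕ Fin l → V)) =
      univ.biUnion fun a ↦ {f ∈ starLeaves k l A c B | f a ∈ T} := by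
    ext f; simp
  calc _ ≤ ∑ a, density {f ∈ starLeaves k l A c B | f a ∈ T} :=
        hcover ▸ density_biUnion_le univ _
    _ = unifInt T (fun v ↦ ∑ a, condDensity (starLeaves k l A c B) a v) := by
        simp_rw [density_filter_mem, unifInt]
        rw [← sum_div, sum_comm]
    _ ≤ unifInt T (fun v ↦ if v ∈ nbr A c ∩ B then lam0 k l * leafFactor (k + l) *
          density ((nbr A c ∩ B) \ nbr A v) ^ (k + l - 1) else 0) := by
        refine unifInt_mono fun v _ ↦ ?_
        refine le_trans ?_ (mul_ite_outNbr_add_mul_ite_inNbr_le hk hl c v B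
          (pow_nonneg (density_nonneg _) _))
        rw [Fintype.sum_sum_type]
        refine add_le_add ((sum_le_card_nsmul univ _ _
          fun a _ ↦ condDensity_starLeaves_inl_le c v B a).trans_eq ?_)
          ((sum_le_card_nsmul univ _ _
            fun a _ ↦ condDensity_starLeaves_inr_le c v B a).trans_eq ?_) <;> simp
    _ = _ := by rw [← unifInt_filter, unifInt_const_mul]

lemma unifInt_density_starLeaves_le [Std.Asymm A] (hk : 1 ≤ k) (C B : Finset V) :
    unifInt C (fun c ↦ density (starLeaves k l A c B)) ≤ unifInt B (fun v ↦
      density (inNbr A v ∩ C) * (lam0 (k - 1) l * density (B \ nbr A v) ^ (k + l - 1))) := by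
  have hslot (c : V) : density (starLeaves k l A c B) ≤ unifInt (outNbr A c ∩ B) (fun v ↦
      lam0 (k - 1) l * density (B \ nbr A v) ^ (k + l - 1)) := by
    have hfilter : ({f ∈ starLeaves k l A c B | f (.inl ⟨0, hk⟩) ∈ outNbr A c ∩ B} :
        Finset (Fin k ⊕ Fin l → V)) = starLeaves k l A c B :=
      filter_true_of_mem fun f hf ↦ (mem_starLeaves.1 hf).1 (.inl ⟨0, hk⟩)
    rw [← hfilter, density_filter_mem]
    refine unifInt_mono fun v hv ↦ (condDensity_starLeaves_inl_le c v B _).trans ?_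
    rw [if_pos hv]
    exact mul_le_mul_of_nonneg_left (pow_le_pow_left₀ (density_nonneg _)
      (density_mono (sdiff_subset_sdiff inter_subset_right subset_rfl)) _) (lam0_pos ..).le
  refine (unifInt_mono fun c _ ↦ hslot c).trans_eq ?_
  rw [unifInt_outNbr_comm C B fun _ v ↦ lam0 (k - 1) l * density (B \ nbr A v) ^ (k + l - 1)]
  exact unifInt_congr fun v _ ↦ by rw [unifInt_const, mul_comm]

end LeafBounds

section PairBounds

variable {V : Type*} [Fintype V] {k l : ℕ} {A : V → V → Prop}

/-- The density of the adjacent pairs in `P × Q`. -/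
noncomputable def adjDensity (A : V → V → Prop) (P Q : Finset V) : ℝ :=
  unifInt P fun u ↦ density (Q ∩ nbr A u)

/-- The density of the non-adjacent pairs in `P × Q`. -/
noncomputable def nonadjDensity (A : V → V → Prop) (P Q : Finset V) : ℝ :=
  unifInt P fun u ↦ density (Q \ nbr A u)

lemma adjDensity_nonneg (P Q : Finset V) : 0 ≤ adjDensity A P Q :=
  unifInt_nonneg fun _ _ ↦ density_nonneg _

lemma adjDensity_mono {P P' Q Q' : Finset V} (hP : P ⊆ P') (hQ : Q ⊆ Q') :
    adjDensity A P Q ≤ adjDensity A P' Q' :=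
  (unifInt_mono fun _ _ ↦ density_mono (inter_subset_inter_right hQ)).trans
    (unifInt_mono_set hP fun _ _ ↦ density_nonneg _)

lemma adjDensity_comm (P Q : Finset V) : adjDensity A P Q = adjDensity A Q P := by
  unfold adjDensity
  convert unifInt_density_comm P Q (fun u v ↦ A u v ∨ A v u) using 4 <;> ext <;>
    simp [or_comm]

lemma adjDensity_inter_add_sdiff_left (P Q R : Finset V) :
    adjDensity A (P ∩ R) Q + adjDensity A (P \ R) Q = adjDensity A P Q :=
  unifInt_inter_add_sdiff P R _

lemma adjDensity_inter_add_sdiff_right (P Q R : Finset V) :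
    adjDensity A P (Q ∩ R) + adjDensity A P (Q \ R) = adjDensity A P Q := by
  simp only [adjDensity_comm P, adjDensity_inter_add_sdiff_left]

lemma adjDensity_le_mul {P Q : Finset V} {t : ℝ} (ht : ∀ u ∈ P, density (Q ∩ nbr A u) ≤ t) :
    adjDensity A P Q ≤ t * density P := unifInt_le_const ht

lemma nonadjDensity_nonneg (P Q : Finset V) : 0 ≤ nonadjDensity A P Q :=
  unifInt_nonneg fun _ _ ↦ density_nonneg _

lemma nonadjDensity_mono {P P' Q Q' : Finset V} (hP : P ⊆ P') (hQ : Q ⊆ Q') :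
    nonadjDensity A P Q ≤ nonadjDensity A P' Q' :=
  (unifInt_mono fun _ _ ↦ density_mono (sdiff_subset_sdiff hQ subset_rfl)).trans
    (unifInt_mono_set hP fun _ _ ↦ density_nonneg _)

lemma nonadjDensity_eq (P Q : Finset V) : nonadjDensity A P Q =
    density P * density Q - adjDensity A P Q := by
  rw [nonadjDensity, adjDensity, mul_comm, ← unifInt_const, ← unifInt_sub]
  exact unifInt_congr fun u _ ↦ by rw [← density_inter_add_sdiff Q (nbr A u), add_sub_cancel_left]

lemma nonadjDensity_union_left {P Q : Finset V} (h : Disjoint P Q) (R : Finset V) :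
    nonadjDensity A (P ∪ Q) R = nonadjDensity A P R + nonadjDensity A Q R := unifInt_union h _

lemma nonadjDensity_union_right {P Q : Finset V} (h : Disjoint P Q) (R : Finset V) :
    nonadjDensity A R (P ∪ Q) = nonadjDensity A R P + nonadjDensity A R Q := by
  simp only [nonadjDensity]
  rw [← unifInt_add]
  refine unifInt_congr fun u _ ↦ ?_
  rw [union_sdiff_distrib, density_union_of_disjoint (h.mono sdiff_subset sdiff_subset)]

lemma density_starLeaves_le_nonadjDensity_mul_prod (c : V) (B : Finset V) {a b : Fin k ⊕ Fin l}
    (hab : a ≠ b) :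
    density (starLeaves k l A c B) ≤
      nonadjDensity A (leafNbr k l A c B a) (leafNbr k l A c B b) *
        ∏ x ∈ (univ.erase a).erase b, density (leafNbr k l A c B x) := by
  set E := leafNbr k l A c B
  have hb : b ∈ univ.erase a := mem_erase.2 ⟨hab.symm, mem_univ b⟩
  have hfilter : ({f ∈ starLeaves k l A c B | f a ∈ E a} : Finset (Fin k ⊕ Fin l → V)) =
      starLeaves k l A c B :=
    filter_true_of_mem fun f hf ↦ (mem_starLeaves.1 hf).1 a
  rw [← hfilter, density_filter_mem, nonadjDensity, mul_comm, ← unifInt_const_mul]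
  refine unifInt_mono fun u _ ↦ (condDensity_le_prod
    (E := Function.update E b (E b \ nbr A u)) fun f hf hfa x _ ↦ ?_).trans_eq ?_
  · have hx := (mem_starLeaves.1 hf).1 x
    obtain rfl | hxb := eq_or_ne x b
    · rw [Function.update_self]
      exact mem_sdiff.2 ⟨hx, hfa ▸ notMem_nbr_of_mem_starLeaves hf x a⟩
    · rwa [Function.update_of_ne hxb]
  · rw [← mul_prod_erase _ _ hb, Function.update_self, mul_comm]
    congr 1
    exact prod_congr rfl fun x hx ↦ by rw [Function.update_of_ne (ne_of_mem_erase hx)]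

lemma density_starLeaves_mul_le (c : V) (B : Finset V) {a b : Fin k ⊕ Fin l} (hab : a ≠ b) :
    density (starLeaves k l A c B) *
        (density (leafNbr k l A c B a) * density (leafNbr k l A c B b)) ≤
      nonadjDensity A (leafNbr k l A c B a) (leafNbr k l A c B b) *
        (density (outNbr A c ∩ B) ^ k * density (inNbr A c ∩ B) ^ l) := by
  have hprod : ∏ x, density (leafNbr k l A c B x) =
      density (outNbr A c ∩ B) ^ k * density (inNbr A c ∩ B) ^ l := by
    simp [leafNbr]
  rw [← hprod, ← mul_prod_erase univ _ (mem_univ a),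
    ← mul_prod_erase _ _ (mem_erase.2 ⟨hab.symm, mem_univ b⟩)]
  calc _ ≤ _ := mul_le_mul_of_nonneg_right (density_starLeaves_le_nonadjDensity_mul_prod c B hab)
        (mul_nonneg (density_nonneg _) (density_nonneg _))
    _ = _ := by ring

lemma density_starLeaves_mul_sq_le [Std.Asymm A] (hk : 2 ≤ k) (hl : 2 ≤ l) (c : V)
    (B : Finset V) :
    density (starLeaves k l A c B) * density (nbr A c ∩ B) ^ 2 ≤
      nonadjDensity A (nbr A c ∩ B) (nbr A c ∩ B) *
        (density (outNbr A c ∩ B) ^ k * density (inNbr A c ∩ B) ^ l) := by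
  have pair (a b : Fin k ⊕ Fin l) (hab : a ≠ b) := density_starLeaves_mul_le (A := A) c B hab
  have hoo := pair (.inl ⟨0, by omega⟩) (.inl ⟨1, by omega⟩) (by simp)
  have hoi := pair (.inl ⟨0, by omega⟩) (.inr ⟨0, by omega⟩) (by simp)
  have hio := pair (.inr ⟨0, by omega⟩) (.inl ⟨0, by omega⟩) (by simp)
  have hii := pair (.inr ⟨0, by omega⟩) (.inr ⟨1, by omega⟩) (by simp)
  simp only [leafNbr, Sum.elim_inl, Sum.elim_inr] at hoo hoi hio hii
  have hd := disjoint_outNbr_inter_inNbr_inter (A := A) c B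
  rw [nbr_inter_eq_union, nonadjDensity_union_left hd, nonadjDensity_union_right hd,
    nonadjDensity_union_right hd, density_union_of_disjoint hd]
  linarith

lemma density_starLeaves_mul_out_le [Std.Asymm A] (hk : 2 ≤ k) (hl : 1 ≤ l) (c : V)
    (B : Finset V) :
    density (starLeaves k l A c B) * (density (outNbr A c ∩ B) ^ 2 +
        2 * (density (outNbr A c ∩ B) * density (inNbr A c ∩ B))) ≤
      (nonadjDensity A (outNbr A c ∩ B) (nbr A c ∩ B) +
        nonadjDensity A (inNbr A c ∩ B) (outNbr A c ∩ B)) *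
          (density (outNbr A c ∩ B) ^ k * density (inNbr A c ∩ B) ^ l) := by
  have pair (a b : Fin k ⊕ Fin l) (hab : a ≠ b) := density_starLeaves_mul_le (A := A) c B hab
  have hoo := pair (.inl ⟨0, by omega⟩) (.inl ⟨1, by omega⟩) (by simp)
  have hoi := pair (.inl ⟨0, by omega⟩) (.inr ⟨0, by omega⟩) (by simp)
  have hio := pair (.inr ⟨0, by omega⟩) (.inl ⟨0, by omega⟩) (by simp)
  simp only [leafNbr, Sum.elim_inl, Sum.elim_inr] at hoo hoi hio
  rw [nbr_inter_eq_union, nonadjDensity_union_right (disjoint_outNbr_inter_inNbr_inter c B)]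
  linarith

end PairBounds

section MixedStars

variable {V : Type*} [Fintype V] {k l : ℕ} {A : V → V → Prop}

lemma mem_starLeaves_of_forall_mem {c : V} {B B' : Finset V} {f : Fin k ⊕ Fin l → V}
    (hf : f ∈ starLeaves k l A c B') (hB : ∀ a, f a ∈ B) : f ∈ starLeaves k l A c B := by
  rw [mem_starLeaves] at hf ⊢
  refine ⟨fun a ↦ ?_, hf.2⟩
  have ha := hf.1 a
  cases a <;> exact mem_inter.2 ⟨(mem_inter.1 ha).1, hB _⟩

lemma density_starLeaves_univ_le (c : V) (X : Finset V) :
    density (starLeaves k l A c univ) ≤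
      density {f ∈ starLeaves k l A c univ | ∃ a, f a ∈ X} + density (starLeaves k l A c Xᶜ) := by
  refine (density_mono fun f hf ↦ ?_).trans (density_union_le _ _)
  by_cases h : ∃ a, f a ∈ X
  · exact mem_union_left _ (mem_filter.2 ⟨hf, h⟩)
  · exact mem_union_right _
      (mem_starLeaves_of_forall_mem hf fun a ↦ mem_compl.2 fun ha ↦ h ⟨a, ha⟩)

lemma density_starLeaves_univ_le_mixed (c : V) (X : Finset V) :
    density (starLeaves k l A c univ) ≤
      density {f ∈ starLeaves k l A c univ | (∃ a, f a ∈ X) ∧ ∃ b, f b ∈ Xᶜ} +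
        density (starLeaves k l A c X) + density (starLeaves k l A c Xᶜ) := by
  refine (density_starLeaves_univ_le c X).trans
    (add_le_add_left ((density_mono fun f hf ↦ ?_).trans (density_union_le _ _)) _)
  obtain ⟨hfS, hX⟩ := mem_filter.1 hf
  by_cases h : ∃ b, f b ∈ Xᶜ
  · exact mem_union_left _ (mem_filter.2 ⟨hfS, hX, h⟩)
  · exact mem_union_right _
      (mem_starLeaves_of_forall_mem hfS fun a ↦ not_not.1 fun ha ↦ h ⟨a, mem_compl.2 ha⟩)

variable {ι : Type*} [Fintype ι] [DecidableEq ι] {S : Finset (ι → V)} {X : Finset V} {κ : ℝ}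

lemma density_filter_mem_and_mem_le (hS : ∀ f ∈ S, ∀ a b, f a ∉ nbr A (f b))
    (hX : ∀ x ∈ X, density (nbr A x)ᶜ ≤ κ) (Y : Finset V) {a b : ι} (hab : a ≠ b) :
    density {f ∈ S | f a ∈ X ∧ f b ∈ Y} ≤
      κ ^ (Fintype.card ι - 2) * nonadjDensity A X Y := by
  have hb : b ∈ univ.erase a := mem_erase.2 ⟨hab.symm, mem_univ b⟩
  have hfilter : ({f ∈ S | f a ∈ X ∧ f b ∈ Y} : Finset (ι → V)) =
      {f ∈ {f ∈ S | f b ∈ Y} | f a ∈ X} := by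
    rw [filter_filter]; simp only [and_comm]
  rw [hfilter, density_filter_mem, nonadjDensity, ← unifInt_const_mul]
  refine unifInt_mono fun x hx ↦ (condDensity_le_prod
    (E := Function.update (fun _ ↦ (nbr A x)ᶜ) b (Y \ nbr A x)) fun f hf hfa c _ ↦ ?_).trans ?_
  · obtain ⟨hfS, hfb⟩ := mem_filter.1 hf
    have hc := hfa ▸ hS f hfS c a
    obtain rfl | hcb := eq_or_ne c b
    · rw [Function.update_self]
      exact mem_sdiff.2 ⟨hfb, hc⟩
    · rw [Function.update_of_ne hcb]
      exact mem_compl.2 hc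
  · rw [← mul_prod_erase _ _ hb, Function.update_self, mul_comm, prod_congr rfl fun c hc ↦ by
      rw [Function.update_of_ne (ne_of_mem_erase hc)], prod_const, card_erase_of_mem hb,
      card_erase_of_mem (mem_univ a), card_univ]
    exact mul_le_mul_of_nonneg_right (pow_le_pow_left₀ (density_nonneg _) (hX x hx) _)
      (density_nonneg _)

/-- For a fixed coordinate `o`, a map meeting both `X` and its complement meets the one not
containing its value at `o`, so only the `2 (|ι| - 1)` pairs of coordinates involving `o` matter. -/
lemma density_filter_exists_mem_and_exists_mem_compl_le
    (hS : ∀ f ∈ S, ∀ a b, f a ∉ nbr A (f b)) (hX : ∀ x ∈ X, density (nbr A x)ᶜ ≤ κ) (o : ι) :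
    density {f ∈ S | (∃ a, f a ∈ X) ∧ ∃ b, f b ∈ Xᶜ} ≤
      2 * (Fintype.card ι - 1 : ℕ) * κ ^ (Fintype.card ι - 2) * nonadjDensity A X Xᶜ := by
  have hcover : ({f ∈ S | (∃ a, f a ∈ X) ∧ ∃ b, f b ∈ Xᶜ} : Finset (ι → V)) ⊆
      ((univ.erase o).biUnion fun b ↦ {f ∈ S | f o ∈ X ∧ f b ∈ Xᶜ}) ∪
        (univ.erase o).biUnion fun a ↦ {f ∈ S | f a ∈ X ∧ f o ∈ Xᶜ} := by
    intro f hf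
    obtain ⟨hfS, ⟨a, ha⟩, b, hb⟩ := mem_filter.1 hf
    simp only [mem_union, mem_biUnion, mem_filter, mem_erase, mem_univ, and_true]
    by_cases ho : f o ∈ X
    · exact .inl ⟨b, fun h ↦ mem_compl.1 hb (h ▸ ho), hfS, ho, hb⟩
    · exact .inr ⟨a, fun h ↦ ho (h ▸ ha), hfS, ha, mem_compl.2 ho⟩
  have hleft := (density_biUnion_le (univ.erase o) fun b ↦ {f ∈ S | f o ∈ X ∧ f b ∈ Xᶜ}).trans
    (sum_le_card_nsmul _ _ _ fun b hb ↦
      density_filter_mem_and_mem_le hS hX Xᶜ (ne_of_mem_erase hb).symm)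
  have hright := (density_biUnion_le (univ.erase o) fun a ↦ {f ∈ S | f a ∈ X ∧ f o ∈ Xᶜ}).trans
    (sum_le_card_nsmul _ _ _ fun a ha ↦
      density_filter_mem_and_mem_le hS hX Xᶜ (ne_of_mem_erase ha))
  rw [card_erase_of_mem (mem_univ o), card_univ, nsmul_eq_mul] at hleft hright
  calc _ ≤ _ := (density_mono hcover).trans (density_union_le _ _)
    _ ≤ _ := add_le_add hleft hright
    _ = _ := by ring

end MixedStars

section Estimates

variable {k l m : ℕ}

lemma one_add_pow_le_exp {n : ℕ} {x y : ℝ} (hx : 0 ≤ 1 + x) (hxy : n * x ≤ y) :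
    (1 + x) ^ n ≤ Real.exp y :=
  calc
    (1 + x) ^ n ≤ Real.exp x ^ n := by
      gcongr; linarith [Real.add_one_le_exp x]
    _ = Real.exp (n * x) := (Real.exp_nat_mul x n).symm
    _ ≤ Real.exp y := Real.exp_le_exp.2 hxy

lemma pow_le_pow_of_le_of_le_one {x y : ℝ} {i j : ℕ} (hx : 0 ≤ x) (hxy : x ≤ y) (hy : y ≤ 1)
    (hij : i ≤ j) : x ^ j ≤ y ^ i :=
  (pow_le_pow_left₀ hx hxy j).trans (pow_le_pow_of_le_one (hx.trans hxy) hy hij)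

lemma add_mul_pow_le_add_mul_pow {a x : ℝ} {i j : ℕ} (hx : 0 ≤ x)
    (hx1 : x ≤ 1) (h : x * (i + a + 1) ≤ i + a) (hij : i ≤ j) :
    (j + a) * x ^ j ≤ (i + a) * x ^ i := by
  induction j, hij using Nat.le_induction with
  | base => exact le_rfl
  | succ j hj ih =>
    have hj' : (i : ℝ) ≤ j := by exact_mod_cast hj
    have ratio : x * (j + a + 1) ≤ j + a := by nlinarith
    calc
      ((j + 1 : ℕ) + a) * x ^ (j + 1) = x * (j + a + 1) * x ^ j := by push_cast; ring
      _ ≤ (j + a) * x ^ j := by gcongr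
      _ ≤ (i + a) * x ^ i := ih

lemma le_centerFactor (hm : 1 ≤ m) : 0.3678 ≤ centerFactor m := by
  have : (0 : ℝ) < m := by exact_mod_cast hm
  have h := one_add_pow_le_exp (n := m) (x := 1 / m) (y := 1) (by positivity)
    (by field_simp; rfl)
  calc
    (0.3678 : ℝ) ≤ Real.exp (-1) := by linarith [Real.exp_neg_one_gt_d9]
    _ = (Real.exp 1)⁻¹ := Real.exp_neg 1
    _ ≤ ((1 + 1 / (m : ℝ)) ^ m)⁻¹ := by gcongr
    _ = centerFactor m := by rw [centerFactor, ← inv_pow]; field_simp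

lemma leafFactor_le (hm : 2 ≤ m) : leafFactor m ≤ 2.7183 * m := by
  obtain ⟨j, rfl⟩ : ∃ j, m = j + 1 := ⟨m - 1, by omega⟩
  have hj : (0 : ℝ) < j := by exact_mod_cast (by omega : 0 < j)
  have h := one_add_pow_le_exp (n := j) (x := 1 / j) (y := 1) (by positivity)
    (by field_simp; rfl)
  calc
    leafFactor (j + 1) = (1 + 1 / (j : ℝ)) ^ j * (j + 1 : ℕ) := by
      rw [leafFactor, Nat.add_sub_cancel, show 1 + 1 / (j : ℝ) = (j + 1) / j by field_simp,
        div_pow, pow_succ]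
      push_cast
      rw [add_sub_cancel_right]
      field_simp
    _ ≤ 2.7183 * (j + 1 : ℕ) := by gcongr; linarith [Real.exp_one_lt_d9]

lemma le_lam0_one (hk : 1 ≤ k) : 0.3678 / (k + 1) ≤ lam0 k 1 := by
  have hfactor := leafFactor_le (m := k + 1) (by omega)
  have hpos := lam0_pos k 1
  push_cast at hfactor
  rw [div_le_iff₀ (by positivity)]
  nlinarith [lam0_one_mul_leafFactor hk]

lemma lam0_one_le (hk : 1 ≤ k) : lam0 k 1 ≤ 0.3679 / k := by
  have hk' : (0 : ℝ) < k := by exact_mod_cast hk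
  have h := one_add_pow_le_exp (n := k + 1) (x := -(1 / (k + 1))) (y := -1)
    (by rw [← sub_eq_add_neg, sub_nonneg, div_le_one (by positivity)]; linarith)
    (by push_cast; field_simp; rfl)
  calc
    lam0 k 1 = 1 / k * (1 + -(1 / ((k : ℝ) + 1))) ^ (k + 1) := by
      rw [lam0, show 1 + -(1 / ((k : ℝ) + 1)) = k / (k + 1) by field_simp; ring, div_pow]
      push_cast
      rw [pow_succ (k : ℝ)]
      field_simp
    _ ≤ 1 / (k : ℝ) * 0.3679 := by gcongr; linarith [Real.exp_neg_one_lt_d9]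
    _ = 0.3679 / k := by ring

lemma leafFactor_mul_inv_pow_le (hm : 6 ≤ m) :
    leafFactor m * (1 / (m : ℝ)) ^ (m - 1) ≤ 0.0021 := by
  have hm' : (6 : ℝ) ≤ m := by exact_mod_cast hm
  have hpow : (1 / (m : ℝ)) ^ (m - 2) ≤ (1 / 6) ^ 4 :=
    pow_le_pow_of_le_of_le_one (by positivity) (by gcongr) (by norm_num) (by omega)
  calc
    leafFactor m * (1 / (m : ℝ)) ^ (m - 1)
        = leafFactor m * ((1 / (m : ℝ)) ^ (m - 2) * (1 / m)) := by
      rw [← pow_succ]; congr 2; omega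
    _ ≤ 2.7183 * m * ((1 / 6) ^ 4 * (1 / m)) := by
      gcongr; exact leafFactor_le (by omega)
    _ = 2.7183 / 1296 := by field_simp; norm_num
    _ ≤ 0.0021 := by norm_num

lemma one_sub_two_div_pow_add_lt_centerFactor (hm : 6 ≤ m) :
    (1 - 2 / (m : ℝ)) ^ m + leafFactor m * (1 / 4 * (1 / 2) ^ (m - 2)) < centerFactor m := by
  obtain rfl | h := hm.eq_or_lt
  · norm_num [leafFactor, centerFactor]
  have hm' : (7 : ℝ) ≤ m := by exact_mod_cast h
  have hexp := one_add_pow_le_exp (n := m) (x := -(2 / m)) (y := -1 + -1)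
    (by rw [← sub_eq_add_neg, sub_nonneg, div_le_one (by positivity)]; linarith)
    (by field_simp; norm_num)
  have hexp_sq : Real.exp (-1) * Real.exp (-1) ≤ 0.3679 * 0.3679 := by
    have := Real.exp_neg_one_lt_d9
    gcongr <;> linarith
  have hgeom : (m : ℝ) * (1 / 2) ^ m ≤ 7 * (1 / 2) ^ 7 := by
    simpa using add_mul_pow_le_add_mul_pow (a := 0) (x := 1 / 2) (i := 7) (by norm_num)
      (by norm_num) (by norm_num) h
  have hhalf : 1 / 4 * (1 / 2 : ℝ) ^ (m - 2) = (1 / 2) ^ m := by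
    rw [show (1 / 4 : ℝ) = (1 / 2) ^ 2 by norm_num, ← pow_add]
    congr 1
    omega
  rw [Real.exp_add, ← sub_eq_add_neg] at hexp
  calc
    (1 - 2 / (m : ℝ)) ^ m + leafFactor m * (1 / 4 * (1 / 2) ^ (m - 2))
        ≤ 0.3679 * 0.3679 + 2.7183 * m * (1 / 2) ^ m := by
      rw [hhalf]
      gcongr
      · exact hexp.trans hexp_sq
      · exact leafFactor_le (by omega)
    _ ≤ 0.3679 * 0.3679 + 2.7183 * (7 * (1 / 2) ^ 7) := by rw [mul_assoc]; gcongr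
    _ < 0.3678 := by norm_num
    _ ≤ centerFactor m := le_centerFactor (by omega)

lemma one_sub_inv_pow_mul_one_add_inv_le_centerFactor (hm : 2 ≤ m) :
    (1 - 1 / (m : ℝ)) ^ m * (1 + 1 / m) ≤ centerFactor m := by
  have hm' : (2 : ℝ) ≤ m := by exact_mod_cast hm
  have hsq : (0 : ℝ) < (m : ℝ) ^ 2 - 1 := by nlinarith
  have hbernoulli := one_add_mul_le_pow (a := 1 / ((m : ℝ) ^ 2 - 1))
    ((by norm_num : (-2 : ℝ) ≤ 0).trans (by positivity)) m
  have hbase : 0 ≤ 1 - 1 / (m : ℝ) := by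
    rw [sub_nonneg, div_le_one (by positivity)]; linarith
  calc
    (1 - 1 / (m : ℝ)) ^ m * (1 + 1 / m)
        ≤ (1 - 1 / (m : ℝ)) ^ m * (1 + 1 / ((m : ℝ) ^ 2 - 1)) ^ m := by
      gcongr
      refine le_trans ?_ hbernoulli
      rw [add_le_add_iff_left, mul_one_div, div_le_div_iff₀ (by positivity) hsq]
      nlinarith
    _ = centerFactor m := by
      rw [← mul_pow, centerFactor]
      congr 1
      field_simp
      ring

lemma le_one_sub_inv_pow (hm : 7 ≤ m) : 0.3152 ≤ (1 - 1 / (m : ℝ)) ^ m := by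
  obtain ⟨j, rfl⟩ : ∃ j, m = j + 1 := ⟨m - 1, by omega⟩
  have hj : (6 : ℝ) ≤ j := by exact_mod_cast (by omega : 6 ≤ j)
  have hcenter : 0.3678 ≤ centerFactor j := le_centerFactor (by omega)
  have hratio : (6 : ℝ) / 7 ≤ j / (j + 1) := by
    rw [div_le_div_iff₀ (by norm_num) (by positivity)]; linarith
  calc
    (0.3152 : ℝ) ≤ 0.3678 * (6 / 7) := by norm_num
    _ ≤ centerFactor j * (j / (j + 1)) := mul_le_mul hcenter hratio (by norm_num) (by linarith)
    _ = (1 - 1 / ((j + 1 : ℕ) : ℝ)) ^ (j + 1) := by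
      rw [centerFactor, ← pow_succ]
      congr 1
      push_cast
      field_simp
      ring

lemma one_sub_inv_pow_add_lt_centerFactor (hm : 6 ≤ m) :
    (1 - 1 / (m : ℝ)) ^ m + leafFactor m * ((1 - 2 / m) * (2 / m) * (2 / m) ^ (m - 2))
      < centerFactor m := by
  obtain rfl | h := hm.eq_or_lt
  · norm_num [leafFactor, centerFactor]
  have hm' : (7 : ℝ) ≤ m := by exact_mod_cast h
  have hpow : ((2 : ℝ) / m) ^ (m - 2) ≤ (2 / 7) ^ 4 * (2 / m) := by
    rw [show m - 2 = (m - 3) + 1 by omega, pow_succ]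
    gcongr
    exact pow_le_pow_of_le_of_le_one (by positivity) (by gcongr) (by norm_num) (by omega)
  have hone : (1 : ℝ) - 2 / m ≤ 1 := sub_le_self _ (by positivity)
  have hnonneg : (0 : ℝ) ≤ 1 - 2 / m := by
    rw [sub_nonneg, div_le_one (by positivity)]; linarith
  calc
    (1 - 1 / (m : ℝ)) ^ m + leafFactor m * ((1 - 2 / m) * (2 / m) * (2 / m) ^ (m - 2))
        ≤ (1 - 1 / (m : ℝ)) ^ m + 2.7183 * m * (1 * (2 / m) * ((2 / 7) ^ 4 * (2 / m))) := by
      gcongr; exact leafFactor_le (by omega)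
    _ = (1 - 1 / (m : ℝ)) ^ m + 2.7183 * 4 * (2 / 7) ^ 4 * (1 / m) := by field_simp; norm_num
    _ < (1 - 1 / (m : ℝ)) ^ m + (1 - 1 / (m : ℝ)) ^ m * (1 / m) := by
      gcongr; linarith [le_one_sub_inv_pow h]
    _ = (1 - 1 / (m : ℝ)) ^ m * (1 + 1 / m) := by ring
    _ ≤ centerFactor m := one_sub_inv_pow_mul_one_add_inv_le_centerFactor (by omega)

lemma pow_add_leafFactor_mul_lt_centerFactor (hm : 6 ≤ m) {p : ℝ} (h0 : 1 / 2 ≤ p)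
    (h1 : p ≤ 1 - 1 / m) :
    p ^ m + leafFactor m * (p * (1 - p) ^ (m - 1)) < centerFactor m := by
  have hm' : (6 : ℝ) ≤ m := by exact_mod_cast hm
  have hL := leafFactor_nonneg (m := m) (by omega)
  have hp1 : 0 ≤ 1 - p := by linarith [show (0 : ℝ) ≤ 1 / m by positivity]
  rw [show (1 - p) ^ (m - 1) = (1 - p) * (1 - p) ^ (m - 2) by rw [← pow_succ']; congr 1; omega,
    ← mul_assoc p]
  obtain h | h := le_total p (1 - 2 / m)
  · refine lt_of_le_of_lt ?_ (one_sub_two_div_pow_add_lt_centerFactor hm)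
    gcongr
    · nlinarith [sq_nonneg (p - 1 / 2)]
    · linarith
  · refine lt_of_le_of_lt ?_ (one_sub_inv_pow_add_lt_centerFactor hm)
    have h2 : (2 : ℝ) / m ≤ 1 / 2 := by
      rw [div_le_div_iff₀ (by positivity) (by norm_num)]; linarith
    have hprod : p * (1 - p) ≤ (1 - 2 / (m : ℝ)) * (2 / m) := by nlinarith
    have hnonneg : (0 : ℝ) ≤ 1 - 2 / m := by linarith
    gcongr
    linarith

lemma le_div_of_centerFactor_sub_le (hm : 6 ≤ m) {z : ℝ} (hz : z ≤ 1)
    (h : centerFactor m - 0.0042 ≤ (1 - z) ^ m) : z ≤ 1.05 / (m + 1) := by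
  have hm' : (6 : ℝ) ≤ m := by exact_mod_cast hm
  by_contra! hlt
  have hbernoulli : (1 - 0.05 / (m : ℝ)) ^ m ≤ 1 / 1.05 := by
    have := one_add_mul_mul_one_sub_pow_le_one (u := 0.05 / m) (by positivity)
      (by rw [div_le_one (by positivity)]; linarith) m
    rw [mul_div_cancel₀ (0.05 : ℝ) (by positivity : (m : ℝ) ≠ 0)] at this
    rw [le_div_iff₀ (by norm_num)]
    linarith
  have hc := le_centerFactor (m := m) (by omega)
  have : (1 - z) ^ m ≤ centerFactor m * (1 / 1.05) :=
    calc
      (1 - z) ^ m ≤ (1 - 1.05 / (m + 1)) ^ m := by gcongr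
      _ = centerFactor m * (1 - 0.05 / (m : ℝ)) ^ m := by
        rw [centerFactor, ← mul_pow]
        congr 1
        field_simp
        ring
      _ ≤ centerFactor m * (1 / 1.05) := by gcongr
  linarith

lemma pow_add_leafFactor_mul_add_lt_centerFactor_six {p f : ℝ} (h0 : 0.4 ≤ p) (h1 : p ≤ 1 / 2)
    (hf : f ≤ 0.15) :
    p ^ 6 + leafFactor 6 * (f * (1 - p) ^ 5 + p * (1 / 2) ^ 5) < centerFactor 6 := by
  have hL : 0 ≤ leafFactor 6 := leafFactor_nonneg (by norm_num)
  have hp : 0 ≤ 1 - p := by linarith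
  obtain h | h := le_total p 0.45
  · calc
      _ ≤ (0.45 : ℝ) ^ 6 + leafFactor 6 * (0.15 * 0.6 ^ 5 + 0.45 * (1 / 2) ^ 5) := by
        gcongr; linarith
      _ < centerFactor 6 := by norm_num [leafFactor, centerFactor]
  · calc
      _ ≤ (0.5 : ℝ) ^ 6 + leafFactor 6 * (0.15 * 0.55 ^ 5 + 0.5 * (1 / 2) ^ 5) := by
        gcongr <;> linarith
      _ < centerFactor 6 := by norm_num [leafFactor, centerFactor]

lemma pow_add_leafFactor_mul_add_lt_centerFactor (hm : 6 ≤ m) {p f : ℝ} (h0 : 0.4 ≤ p)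
    (h1 : p ≤ 1 / 2) (hf : f ≤ 1.05 / (m + 1)) :
    p ^ m + leafFactor m * (f * (1 - p) ^ (m - 1) + p * (1 / 2) ^ (m - 1)) < centerFactor m := by
  have hL := leafFactor_nonneg (m := m) (by omega)
  have hp : 0 ≤ 1 - p := by linarith
  obtain rfl | h := hm.eq_or_lt
  · exact pow_add_leafFactor_mul_add_lt_centerFactor_six h0 h1 (by norm_num at hf ⊢; linarith)
  have hgeom : (m : ℝ) * (1 / 2) ^ m ≤ 7 * (1 / 2) ^ 7 := by
    simpa using add_mul_pow_le_add_mul_pow (a := 0) (x := 1 / 2) (i := 7) (by norm_num)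
      (by norm_num) (by norm_num) h
  calc
    _ ≤ (1 / 2 : ℝ) ^ m
        + leafFactor m * (1.05 / (m + 1) * 0.6 ^ (m - 1) + 1 / 2 * (1 / 2) ^ (m - 1)) := by
      gcongr; linarith
    _ = (1 / 2 : ℝ) ^ m + leafFactor m * (1.05 / (m + 1) * 0.6 ^ (m - 1) + (1 / 2) ^ m) := by
      rw [← pow_succ', Nat.sub_add_cancel (by omega)]
    _ ≤ (1 / 2) ^ 7 + 2.7183 * m * (1.05 / (m + 1) * 0.6 ^ 6 + (1 / 2) ^ m) := by
      gcongr ?_ + ?_ * (1.05 / (m + 1) * ?_ + _)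
      · exact pow_le_pow_of_le_one (by norm_num) (by norm_num) h
      · exact leafFactor_le (by omega)
      · exact pow_le_pow_of_le_one (by norm_num) (by norm_num) (by omega)
    _ = (1 / 2) ^ 7 + 2.7183 * (1.05 * 0.6 ^ 6) * (m / (m + 1))
        + 2.7183 * (m * (1 / 2) ^ m) := by ring
    _ ≤ (1 / 2) ^ 7 + 2.7183 * (1.05 * 0.6 ^ 6) * 1 + 2.7183 * (7 * (1 / 2) ^ 7) := by
      gcongr
      rw [div_le_one (by positivity)]
      linarith
    _ < 0.3678 := by norm_num
    _ ≤ centerFactor m := le_centerFactor (by omega)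

lemma add_one_mul_pow_le (hm : 6 ≤ m) : ((m : ℝ) + 1) * 0.4 ^ m ≤ 0.0287 :=
  (add_mul_pow_le_add_mul_pow (i := 6) (by norm_num) (by norm_num) (by norm_num) hm).trans
    (by norm_num)

lemma add_one_mul_pow_pred_le (hm : 6 ≤ m) : ((m : ℝ) + 1) * 0.4 ^ (m - 1) ≤ 0.216 := by
  have h := add_one_mul_pow_le hm
  rw [show (0.4 : ℝ) ^ m = 0.4 ^ (m - 1) * 0.4 by rw [← pow_succ]; congr 1; omega] at h
  linarith

lemma exp_two_fifths_le : Real.exp 0.4 ≤ 1.492 := by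
  refine le_of_pow_le_pow_left₀ (n := 5) (by norm_num) (by norm_num) ?_
  rw [← Real.exp_nat_mul, show ((5 : ℕ) : ℝ) * 0.4 = 1 + 1 by norm_num, Real.exp_add]
  have := Real.exp_one_lt_d9
  calc
    Real.exp 1 * Real.exp 1 ≤ 2.7183 * 2.7183 := by gcongr <;> linarith
    _ ≤ 1.492 ^ 5 := by norm_num

lemma mul_one_sub_div_pow_le {s : ℝ} (hm : 1 ≤ m) (h0 : 0 ≤ s) (h1 : s ≤ 0.6) :
    s * (1 - s / (m + 1)) ^ m ≤ 0.8953 * centerFactor m := by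
  have hm' : (0 : ℝ) < m := by exact_mod_cast hm
  have hs : s ≤ 0.6 * Real.exp (s - 0.6) := by linarith [Real.add_one_le_exp (s - 0.6)]
  have hpow : (1 - s / (m + 1)) ^ m ≤ centerFactor m * Real.exp (1 - s) := by
    rw [show 1 - s / (m + 1) = m / (m + 1) * (1 + (1 - s) / m) by field_simp; ring, mul_pow,
      centerFactor]
    gcongr
    exact one_add_pow_le_exp (add_nonneg one_pos.le (div_nonneg (by linarith) hm'.le))
      (by field_simp; rfl)
  have hc : 0 ≤ centerFactor m := by linarith [le_centerFactor hm]
  calc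
    s * (1 - s / (m + 1)) ^ m ≤ s * (centerFactor m * Real.exp (1 - s)) := by gcongr
    _ ≤ 0.6 * Real.exp (s - 0.6) * (centerFactor m * Real.exp (1 - s)) := by gcongr
    _ = 0.6 * Real.exp 0.4 * centerFactor m := by
      rw [show (0.4 : ℝ) = (s - 0.6) + (1 - s) by ring, Real.exp_add]; ring
    _ ≤ 0.8953 * centerFactor m := by gcongr; linarith [exp_two_fifths_le]

lemma mul_add_lt_centerFactor_div (hm : 6 ≤ m) {a : ℝ} (h0 : 0 ≤ a) (h1 : a ≤ 0.6 / (m + 1)) :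
    a * ((1 - a) ^ m + leafFactor m * (a * (1 / (m : ℝ)) ^ (m - 1))) + (1 - a) * 0.4 ^ m
      < centerFactor m / (m + 1) := by
  have hm' : (6 : ℝ) ≤ m := by exact_mod_cast hm
  have hs : a * (m + 1) ≤ 0.6 := by rwa [le_div_iff₀ (by positivity)] at h1
  have main : a * (m + 1) * (1 - a) ^ m ≤ 0.8953 * centerFactor m := by
    have h := mul_one_sub_div_pow_le (m := m) (by omega) (by positivity) hs
    rwa [mul_div_cancel_right₀ _ (by positivity)] at h
  have leaf : a * (m + 1) * a * (leafFactor m * (1 / (m : ℝ)) ^ (m - 1)) ≤ 0.6 * 0.1 * 0.0021 := by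
    have := leafFactor_nonneg (m := m) (by omega)
    gcongr
    · nlinarith
    · exact leafFactor_mul_inv_pow_le hm
  have rest : (1 - a) * ((m + 1) * 0.4 ^ m) ≤ 1 * 0.0287 := by
    gcongr
    · linarith
    · exact add_one_mul_pow_le hm
  rw [lt_div_iff₀ (by positivity)]
  calc
    _ = a * (m + 1) * (1 - a) ^ m
        + a * (m + 1) * a * (leafFactor m * (1 / (m : ℝ)) ^ (m - 1))
        + (1 - a) * ((m + 1) * 0.4 ^ m) := by ring
    _ < centerFactor m := by linarith [le_centerFactor (m := m) (by omega)]

lemma two_mul_pred_mul_inv_pow_le (hm : 6 ≤ k + l) :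
    2 * ((k + l - 1 : ℕ) : ℝ) * (1 / ((k + l : ℕ) : ℝ)) ^ (k + l - 2) ≤ 0.6 * lam0 k l := by
  obtain ⟨j, hj⟩ : ∃ j, k + l = j + 3 := ⟨k + l - 3, by omega⟩
  have hj3 : (3 : ℝ) ≤ j := by exact_mod_cast (by omega : 3 ≤ j)
  have hlam := half_pow_le_lam0 k l
  have hpow : (2 / ((j : ℝ) + 3)) ^ j ≤ (1 / 3) ^ 3 := by
    refine pow_le_pow_of_le_of_le_one (by positivity) ?_ (by norm_num) (by omega)
    rw [div_le_div_iff₀ (by positivity) (by norm_num)]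
    linarith
  rw [hj] at hlam ⊢
  push_cast [show j + 3 - 1 = j + 2 by omega, show j + 3 - 2 = j + 1 by omega]
  calc
    2 * ((j : ℝ) + 2) * (1 / ((j : ℝ) + 3)) ^ (j + 1)
        ≤ 2 * ((j : ℝ) + 3) * (1 / ((j : ℝ) + 3)) ^ (j + 1) := by gcongr; norm_num
    _ = 16 * (2 / ((j : ℝ) + 3)) ^ j * (1 / 2) ^ (j + 3) := by
      rw [show 2 / ((j : ℝ) + 3) = 2 * (1 / (j + 3)) by ring, mul_pow, pow_succ,
        pow_add (1 / 2 : ℝ), one_div_pow 2]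
      field_simp
      norm_num
    _ ≤ 16 * (1 / 3) ^ 3 * (1 / 2) ^ (j + 3) := by gcongr
    _ ≤ 0.6 * lam0 k l := by linarith [show (0 : ℝ) ≤ (1 / 2) ^ (j + 3) by positivity]

end Estimates

section OptLowerBounds

variable {k l : ℕ}

lemma mul_pow_le_one {a b : ℝ} {n : ℕ} (ha : a ∈ Set.Icc (0 : ℝ) 1) (hb : b ∈ Set.Icc (0 : ℝ) 1) :
    a * b ^ n ≤ 1 :=
  mul_le_one₀ ha.2 (pow_nonneg hb.1 n) (pow_le_one₀ hb.1 hb.2)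

lemma lam0_mul_le_OPT_self (hk : 1 ≤ k) {a : ℝ} (h0 : 0 ≤ a) (h1 : a ≤ 1) :
    lam0 k k * (a * (1 - a) ^ (k + k) + (1 - a) * a ^ (k + k)) ≤ OPT k k := by
  rw [OPT, if_pos rfl, lam0_self (by omega)]
  gcongr
  refine le_csSup ⟨2, ?_⟩ ⟨a, ⟨h0, h1⟩, by rw [two_mul]⟩
  rintro y ⟨b, hb, rfl⟩
  have hb' : 1 - b ∈ Set.Icc (0 : ℝ) 1 := ⟨sub_nonneg.2 hb.2, sub_le_self 1 hb.1⟩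
  linarith [mul_pow_le_one (n := 2 * k) hb hb', mul_pow_le_one (n := 2 * k) hb' hb]

lemma lam0_pred_eq (hk : 1 ≤ k) :
    lam0 (k - 1) l = ((k : ℝ) - 1) ^ (k - 1) * (l : ℝ) ^ l / ((k : ℝ) + l - 1) ^ (k + l - 1) := by
  rw [lam0, Nat.cast_pred hk, show k - 1 + l = k + l - 1 by omega,
    show (k : ℝ) - 1 + l = k + l - 1 by ring]

lemma le_OPT_of_lt (hlk : l < k) {a d : ℝ} (ha : a ∈ Set.Icc (0 : ℝ) (1 / 2))
    (hd : d ∈ Set.Icc (0 : ℝ) (k / (k + l))) :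
    a * (1 - a) ^ (k + l) * d ^ k * (1 - d) ^ l
      + lam0 (k - 1) l * (1 - a) * a ^ (k + l) * (1 - d) ≤ OPT k l := by
  rw [OPT, if_neg hlk.ne', ← lam0_pred_eq (by omega)]
  refine le_csSup ⟨1 + lam0 (k - 1) l, ?_⟩ ⟨a, ha, d, hd, rfl⟩
  rintro y ⟨b, ⟨hb0, hb1⟩, e, ⟨he0, he1⟩, rfl⟩
  have hk : (0 : ℝ) < k := by exact_mod_cast (by omega : 0 < k)
  have he1' : e ≤ 1 := he1.trans (by rw [div_le_one (by positivity)]; simp)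
  have hb' : 0 ≤ 1 - b := by linarith
  have he' : 0 ≤ 1 - e := by linarith
  have hlam := (lam0_pos (k - 1) l).le
  have first : b * (1 - b) ^ (k + l) * e ^ k * (1 - e) ^ l ≤ 1 * 1 * 1 * 1 := by
    gcongr
    · linarith
    · exact pow_le_one₀ hb' (by linarith)
    · exact pow_le_one₀ he0 he1'
    · exact pow_le_one₀ he' (by linarith)
  have second : lam0 (k - 1) l * (1 - b) * b ^ (k + l) * (1 - e) ≤
      lam0 (k - 1) l * 1 * 1 * 1 := by
    gcongr
    · linarith
    · exact pow_le_one₀ hb0 (by linarith)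
    · linarith
  linarith

/-- The witness is `α = 1 / (k + l + 1)` and, if `l < k`, `d = k / (k + l)`. -/
lemma lam0_mul_centerFactor_div_le_OPT (hl : 1 ≤ l) (hlk : l ≤ k) :
    lam0 k l * (centerFactor (k + l) / ((k + l : ℕ) + 1)) ≤ OPT k l := by
  have hl' : (1 : ℝ) ≤ l := by exact_mod_cast hl
  have hk' : (1 : ℝ) ≤ k := by exact_mod_cast hl.trans hlk
  have hlam := (lam0_pos k l).le
  set a : ℝ := 1 / ((k + l : ℕ) + 1) with ha
  have ha0 : 0 ≤ a := by positivity
  have ha1 : a ≤ 1 / 2 := by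
    rw [ha, div_le_div_iff₀ (by positivity) (by norm_num)]; push_cast; linarith
  have ha1' : 0 ≤ 1 - a := by linarith
  have hcenter : centerFactor (k + l) / ((k + l : ℕ) + 1) = a * (1 - a) ^ (k + l) := by
    rw [centerFactor, ha, show 1 - 1 / (((k + l : ℕ) : ℝ) + 1) = (k + l : ℕ) / ((k + l : ℕ) + 1) by
      field_simp; ring]
    ring
  rw [hcenter]
  obtain rfl | h := hlk.eq_or_lt
  · refine le_trans ?_ (lam0_mul_le_OPT_self hl ha0 (by linarith))
    gcongr
    exact le_add_of_nonneg_right (by positivity)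
  · have hd : 1 - (k : ℝ) / (k + l) = l / (k + l) := by field_simp; ring
    refine le_trans ?_ (le_OPT_of_lt (d := k / (k + l)) h ⟨ha0, ha1⟩ ⟨by positivity, le_rfl⟩)
    have hlam' := (lam0_pos (k - 1) l).le
    calc
      lam0 k l * (a * (1 - a) ^ (k + l))
          = a * (1 - a) ^ (k + l) * ((k : ℝ) / (k + l)) ^ k * (1 - (k : ℝ) / (k + l)) ^ l := by
        rw [hd, lam0, div_pow, div_pow, pow_add ((k : ℝ) + l)]
        field_simp
      _ ≤ _ := le_add_of_nonneg_right (by rw [hd]; positivity)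

lemma mul_le_OPT_of_lt (hl : 1 ≤ l) (hlk : l < k) {a q : ℝ} (ha : a ∈ Set.Icc (0 : ℝ) (1 / 2))
    (hq0 : 0 ≤ q) (hq1 : q ≤ 1 - a) :
    a * ((1 - a - q) ^ k * q ^ l + lam0 (k - 1) l * a ^ (k + l - 1) * q) ≤ OPT k l := by
  obtain ⟨ha0, ha1⟩ := ha
  have : (1 : ℝ) ≤ l := by exact_mod_cast hl
  have hk' : (1 : ℝ) ≤ k := by exact_mod_cast hl.trans hlk.le
  have ha' : 0 < 1 - a := by linarith
  have hlam := (lam0_pos (k - 1) l).le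
  have hpow : a ^ (k + l) = a * a ^ (k + l - 1) := by rw [← pow_succ']; congr 1; omega
  have hdist : a * ((1 - a - q) ^ k * q ^ l + lam0 (k - 1) l * a ^ (k + l - 1) * q) =
      a * ((1 - a - q) ^ k * q ^ l) + lam0 (k - 1) l * a ^ (k + l) * q := by rw [hpow]; ring
  rw [hdist]
  obtain hd | hd := le_total (1 - q / (1 - a)) (k / (k + l))
  · have hd0 : 0 ≤ 1 - q / (1 - a) := by rwa [sub_nonneg, div_le_one ha']
    refine le_trans (le_of_eq ?_) (le_OPT_of_lt hlk ⟨ha0, ha1⟩ ⟨hd0, hd⟩)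
    rw [sub_sub_cancel, one_sub_div ha'.ne', div_pow, div_pow, pow_add (1 - a)]
    field_simp
  · have hcompl : 1 - (k : ℝ) / (k + l) = l / (k + l) := by field_simp; ring
    have hq : q ≤ (1 - a) * (l / (k + l)) := by
      rw [← hcompl, mul_comm, ← div_le_iff₀ ha']; linarith
    have hamgm : (1 - a - q) ^ k * q ^ l ≤
        (1 - a) ^ (k + l) * (k / (k + l)) ^ k * (l / (k + l)) ^ l := by
      refine (pow_mul_pow_le_lam0_mul k l (by linarith) hq0).trans (le_of_eq ?_)
      rw [lam0, div_pow, div_pow, pow_add ((k : ℝ) + l), sub_add_cancel]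
      field_simp
    calc
      a * ((1 - a - q) ^ k * q ^ l) + lam0 (k - 1) l * a ^ (k + l) * q
          ≤ a * ((1 - a) ^ (k + l) * (k / (k + l)) ^ k * (l / (k + l)) ^ l)
            + lam0 (k - 1) l * a ^ (k + l) * ((1 - a) * (l / (k + l))) := by gcongr
      _ = a * (1 - a) ^ (k + l) * (k / (k + l)) ^ k * (1 - (k : ℝ) / (k + l)) ^ l
            + lam0 (k - 1) l * (1 - a) * a ^ (k + l) * (1 - (k : ℝ) / (k + l)) := by
        rw [hcompl]; ring
      _ ≤ OPT k l := le_OPT_of_lt hlk ⟨ha0, ha1⟩ ⟨by positivity, le_rfl⟩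

end OptLowerBounds

section StarMass

variable {V : Type*} [Fintype V] {k l : ℕ} {A : V → V → Prop}

/-- An upper bound for `(k + l + 1) s(v)`, see `mul_sVert_le_starMass`: the density of the stars
centred at `v` plus a bound for the stars in which `v` is a leaf and the center is a neighbour `c`
of `v`. -/
noncomputable def starMass (k l : ℕ) (A : V → V → Prop) (v : V) : ℝ :=
  density (starLeaves k l A v univ) + lam0 k l * leafFactor (k + l) *
    unifInt (nbr A v) (fun c ↦ density (nbr A c \ nbr A v) ^ (k + l - 1))

lemma mul_sVert_le_starMass [Std.Asymm A] (hk : 1 ≤ k) (hl : 1 ≤ l) (v : V) :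
    ((k : ℝ) + l + 1) * sVert k l A v ≤ starMass k l A v := by
  refine (mul_sVert_le hk hl v).trans ?_
  rw [add_assoc, starMass]
  gcongr
  exact mul_unifInt_condDensity_inr_add_mul_inl_le v ⟨0, hk⟩ ⟨0, hl⟩

lemma lam0_mul_centerFactor_le_starMass [Std.Asymm A] (hl : 1 ≤ l) (hlk : l ≤ k) {v : V}
    (hv : OPT k l ≤ sVert k l A v) : lam0 k l * centerFactor (k + l) ≤ starMass k l A v := by
  have hopt := (lam0_mul_centerFactor_div_le_OPT hl hlk).trans hv
  rw [← mul_div_assoc, div_le_iff₀ (by positivity), mul_comm (sVert ..)] at hopt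
  refine hopt.trans ?_
  rw [Nat.cast_add]
  exact mul_sVert_le_starMass (hl.trans hlk) hl v

lemma unifInt_density_pow_le {α : Type*} [Fintype α] {S : Finset α} {F : α → Finset V} {κ : ℝ}
    (h : ∀ a ∈ S, density (F a) ≤ κ) (n : ℕ) :
    unifInt S (fun a ↦ density (F a) ^ n) ≤ κ ^ n * density S :=
  unifInt_le_const fun a ha ↦ pow_le_pow_left₀ (density_nonneg _) (h a ha) _

lemma density_sdiff_nbr_le (S : Finset V) (v : V) : density (S \ nbr A v) ≤ density (nbr A v)ᶜ :=
  density_mono fun _ hu ↦ mem_compl.2 (mem_sdiff.1 hu).2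

lemma starMass_le [Std.Asymm A] (hm : 1 ≤ k + l) {v : V} {t : ℝ}
    (ht : unifInt (nbr A v) (fun c ↦ density (nbr A c \ nbr A v) ^ (k + l - 1)) ≤ t) :
    starMass k l A v ≤
      lam0 k l * (density (nbr A v) ^ (k + l) + leafFactor (k + l) * t) := by
  have hcenter := density_starLeaves_le (k := k) (l := l) (A := A) v univ
  rw [inter_univ] at hcenter
  rw [starMass, mul_add, ← mul_assoc]
  exact add_le_add hcenter
    (mul_le_mul_of_nonneg_left ht (mul_nonneg (lam0_pos ..).le (leafFactor_nonneg hm)))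

lemma density_compl_nbr_le_of_half_le [Nonempty V] [Std.Asymm A] (hm : 6 ≤ k + l) {v : V}
    (hv : lam0 k l * centerFactor (k + l) ≤ starMass k l A v)
    (hhalf : 1 / 2 ≤ density (nbr A v)) : density (nbr A v)ᶜ ≤ 1 / ((k + l : ℕ) : ℝ) := by
  by_contra! hlt
  have hmass := hv.trans (starMass_le (by omega)
    (unifInt_density_pow_le (fun c _ ↦ density_sdiff_nbr_le _ v) _))
  rw [density_compl] at hlt hmass
  have hgap := pow_add_leafFactor_mul_lt_centerFactor hm hhalf (by linarith)
  rw [mul_comm (density _)] at hgap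
  exact hgap.not_ge (le_of_mul_le_mul_left hmass (lam0_pos ..))

lemma density_nbr_le_of_le_half [Nonempty V] [Std.Asymm A] (hm : 6 ≤ k + l) {X : Finset V}
    (hX : density X ≤ 1.05 / ((k + l : ℕ) + 1)) (hhalf : ∀ y ∉ X, density (nbr A y) ≤ 1 / 2)
    {y : V} (hy : y ∉ X) (hmass : lam0 k l * centerFactor (k + l) ≤ starMass k l A y) :
    density (nbr A y) ≤ 0.4 := by
  by_contra! hlt
  have hgap := pow_add_leafFactor_mul_add_lt_centerFactor (f := density (nbr A y ∩ X)) hm hlt.le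
    (hhalf y hy) ((density_mono inter_subset_right).trans hX)
  refine hgap.not_ge (le_of_mul_le_mul_left (hmass.trans (starMass_le (by omega) ?_))
    (lam0_pos ..))
  rw [← unifInt_inter_add_sdiff _ X, mul_comm (density _), mul_comm (density _),
    ← density_compl]
  refine add_le_add (unifInt_density_pow_le (fun c _ ↦ density_sdiff_nbr_le _ y) _)
    ((unifInt_density_pow_le (κ := 1 / 2) (fun c hc ↦ ?_) _).trans ?_)
  · exact (density_mono sdiff_subset).trans (hhalf c (mem_sdiff.1 hc).2)
  · exact mul_le_mul_of_nonneg_left (density_mono sdiff_subset) (by positivity)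

end StarMass

section NearExtremal

variable {V : Type*} [Fintype V] {k l : ℕ} {A : V → V → Prop} {X : Finset V}

lemma density_outNbr_add_inNbr_compl [Nonempty V] [Std.Asymm A] (X : Finset V) (c : V) :
    density (outNbr A c ∩ Xᶜ) + density (inNbr A c ∩ Xᶜ) + density (Xᶜ \ nbr A c) =
      1 - density X := by
  rw [density_outNbr_add_inNbr, inter_comm, density_inter_add_sdiff, density_compl]

lemma density_starLeaves_univ_le_of_forall_le [Std.Asymm A] (hk : 1 ≤ k) (hl : 1 ≤ l) {κ : ℝ}
    (hX : ∀ x ∈ X, density (nbr A x)ᶜ ≤ κ) (hκ : 0 ≤ κ) (c : V) :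
    density (starLeaves k l A c univ) ≤
      density (outNbr A c ∩ Xᶜ) ^ k * density (inNbr A c ∩ Xᶜ) ^ l +
        lam0 k l * leafFactor (k + l) * (κ ^ (k + l - 1) * density X) := by
  rw [add_comm]
  refine (density_starLeaves_univ_le c X).trans (add_le_add
    ((density_starLeaves_filter_exists_mem_le hk hl c univ X).trans
      (mul_le_mul_of_nonneg_left ?_ (mul_nonneg (lam0_pos ..).le (leafFactor_nonneg (by omega)))))
    (density_starLeaves_le_mul c Xᶜ))
  exact (unifInt_density_pow_le (fun v hv ↦
      (density_sdiff_nbr_le _ v).trans (hX v (mem_filter.1 hv).1)) _).trans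
    (mul_le_mul_of_nonneg_left (density_mono (filter_subset ..)) (by positivity))

lemma lam0_mul_centerFactor_sub_le [Std.Asymm A] (hk : 1 ≤ k) (hl : 1 ≤ l) (hm : 6 ≤ k + l)
    (hX : ∀ x ∈ X, density (nbr A x)ᶜ ≤ 1 / ((k + l : ℕ) : ℝ)) {x : V} (hx : x ∈ X)
    (hmass : lam0 k l * centerFactor (k + l) ≤ starMass k l A x) :
    lam0 k l * (centerFactor (k + l) - 0.0042) ≤
      density (outNbr A x ∩ Xᶜ) ^ k * density (inNbr A x ∩ Xᶜ) ^ l := by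
  have hpow : 0 ≤ (1 / ((k + l : ℕ) : ℝ)) ^ (k + l - 1) := by positivity
  have hcoef : 0 ≤ lam0 k l * leafFactor (k + l) :=
    mul_nonneg (lam0_pos ..).le (leafFactor_nonneg (by omega))
  have hcenter := density_starLeaves_univ_le_of_forall_le hk hl hX (by positivity) x
  have hleaf := (unifInt_density_pow_le (fun c (_ : c ∈ nbr A x) ↦
    (density_sdiff_nbr_le (nbr A c) x).trans (hX x hx)) (k + l - 1)).trans
      (mul_le_of_le_one_right hpow (density_le_one _))
  have hsmall := mul_le_mul_of_nonneg_left (leafFactor_mul_inv_pow_le hm) (lam0_pos k l).le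
  have hleaf' := mul_le_mul_of_nonneg_left hleaf hcoef
  have hcenter' := mul_le_mul_of_nonneg_left
    (mul_le_of_le_one_right hpow (density_le_one X)) hcoef
  rw [starMass] at hmass
  linarith

lemma density_add_density_sdiff_nbr_le [Nonempty V] [Std.Asymm A] (hm : 6 ≤ k + l) {x : V}
    (hx : lam0 k l * (centerFactor (k + l) - 0.0042) ≤
      density (outNbr A x ∩ Xᶜ) ^ k * density (inNbr A x ∩ Xᶜ) ^ l) :
    density X + density (Xᶜ \ nbr A x) ≤ 1.05 / ((k + l : ℕ) + 1) := by
  have hsplit := density_outNbr_add_inNbr_compl (A := A) X x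
  have hout := density_nonneg (outNbr A x ∩ Xᶜ)
  have hin := density_nonneg (inNbr A x ∩ Xᶜ)
  have hamgm := hx.trans (pow_mul_pow_le_lam0_mul k l hout hin)
  rw [show density (outNbr A x ∩ Xᶜ) + density (inNbr A x ∩ Xᶜ) =
    1 - (density X + density (Xᶜ \ nbr A x)) by linarith] at hamgm
  exact le_div_of_centerFactor_sub_le hm (by linarith) (le_of_mul_le_mul_left hamgm (lam0_pos k l))

lemma mul_density_le_density_inNbr [Nonempty V] [Std.Asymm A] (hl : 1 ≤ l) {x : V}
    (hx : 0.36 * lam0 k l ≤ density (outNbr A x ∩ Xᶜ) ^ k * density (inNbr A x ∩ Xᶜ) ^ l) :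
    0.55 * density X ≤ density (inNbr A x ∩ Xᶜ) := by
  by_contra! hlt
  have hsplit := density_outNbr_add_inNbr_compl (A := A) X x
  have hp := density_nonneg (outNbr A x ∩ Xᶜ)
  have hq := density_nonneg (inNbr A x ∩ Xᶜ)
  have hr := density_nonneg (Xᶜ \ nbr A x)
  set p := density (outNbr A x ∩ Xᶜ)
  set q := density (inNbr A x ∩ Xᶜ)
  have hqα : 0 ≤ q + density X := by linarith
  have hlam := lam0_pos k l
  have hql : q ^ l ≤ 0.55 / 1.55 * (q + density X) ^ l := by
    calc q ^ l ≤ (0.55 / 1.55 * (q + density X)) ^ l :=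
          pow_le_pow_left₀ hq (by norm_num; linarith) _
      _ = (0.55 / 1.55) ^ l * (q + density X) ^ l := mul_pow ..
      _ ≤ 0.55 / 1.55 * (q + density X) ^ l := by
          gcongr
          exact pow_le_of_le_one (by norm_num) (by norm_num) (by omega)
  have hpq : p ^ k * q ^ l ≤ 0.55 / 1.55 * lam0 k l := by
    calc p ^ k * q ^ l ≤ p ^ k * (0.55 / 1.55 * (q + density X) ^ l) := by gcongr
      _ = 0.55 / 1.55 * (p ^ k * (q + density X) ^ l) := by ring
      _ ≤ 0.55 / 1.55 * (lam0 k l * (p + (q + density X)) ^ (k + l)) := by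
          exact mul_le_mul_of_nonneg_left (pow_mul_pow_le_lam0_mul k l hp hqα) (by norm_num)
      _ ≤ 0.55 / 1.55 * lam0 k l := by
          gcongr
          exact mul_le_of_le_one_right hlam.le (pow_le_one₀ (by positivity) (by linarith))
  norm_num at hpq hx
  linarith

lemma le_density_of_OPT_lt_starProb [Nonempty V] [Std.Asymm A] (hl : 1 ≤ l) (hlk : l ≤ k)
    (hm : 6 ≤ k + l) (hX : ∀ x ∈ X, density (nbr A x)ᶜ ≤ 1 / ((k + l : ℕ) : ℝ))
    (hY : ∀ y ∉ X, density (nbr A y) ≤ 0.4) (hs : OPT k l < starProb k l V A) :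
    0.6 / ((k + l : ℕ) + 1) ≤ density X := by
  by_contra! hlt
  have hgap := mul_add_lt_centerFactor_div hm (density_nonneg X) hlt.le
  have hcenterX : unifInt X (fun c ↦ density (starLeaves k l A c univ)) ≤
      lam0 k l * ((1 - density X) ^ (k + l) + leafFactor (k + l) *
        (density X * (1 / ((k + l : ℕ) : ℝ)) ^ (k + l - 1))) * density X := by
    refine unifInt_le_const fun x _ ↦
      (density_starLeaves_univ_le_of_forall_le (hl.trans hlk) hl hX (by positivity) x).trans ?_
    have hsplit := density_outNbr_add_inNbr_compl (A := A) X x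
    have hp := density_nonneg (outNbr A x ∩ Xᶜ)
    have hq := density_nonneg (inNbr A x ∩ Xᶜ)
    have hr := density_nonneg (Xᶜ \ nbr A x)
    have : 0 ≤ lam0 k l := (lam0_pos k l).le
    rw [mul_add, mul_comm (density X), mul_assoc (lam0 k l) (leafFactor _)]
    refine add_le_add_left ((pow_mul_pow_le_lam0_mul k l hp hq).trans ?_) _
    gcongr
    linarith
  have hcenterY : unifInt Xᶜ (fun c ↦ density (starLeaves k l A c univ)) ≤
      lam0 k l * 0.4 ^ (k + l) * (1 - density X) := by
    rw [← density_compl]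
    refine unifInt_le_const fun y hy ↦ (density_starLeaves_le y univ).trans ?_
    rw [inter_univ]
    exact mul_le_mul_of_nonneg_left
      (pow_le_pow_left₀ (density_nonneg _) (hY y (mem_compl.1 hy)) _) (lam0_pos ..).le
  have hprob := starProb_le_unifInt_density_starLeaves (k := k) (l := l) (A := A)
  rw [← unifInt_add_unifInt_compl X] at hprob
  have hopt := lam0_mul_centerFactor_div_le_OPT hl hlk
  have hgap' := mul_lt_mul_of_pos_left hgap (lam0_pos k l)
  linarith

/-- The vertices adjacent to at least half of all vertices. -/
noncomputable def highDegree (A : V → V → Prop) : Finset V := {v | 1 / 2 ≤ density (nbr A v)}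

/-- Approximate form of the structure of an extremal graph: `X` has density about `1 / (m + 1)`
with `m = k + l`, its vertices are joined to almost everything and are near-optimal centers,
while the vertices outside `X` have low degree. -/
structure IsNearExtremal (k l : ℕ) (A : V → V → Prop) (X : Finset V) : Prop where
  le_density : 0.6 / ((k + l : ℕ) + 1) ≤ density X
  density_le : density X ≤ 1.05 / ((k + l : ℕ) + 1)
  density_compl_nbr_le : ∀ x ∈ X, density (nbr A x)ᶜ ≤ 1 / ((k + l : ℕ) : ℝ)
  mul_lam0_le : ∀ x ∈ X,
    0.36 * lam0 k l ≤ density (outNbr A x ∩ Xᶜ) ^ k * density (inNbr A x ∩ Xᶜ) ^ l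
  mul_density_le_density_inNbr : ∀ x ∈ X, 0.55 * density X ≤ density (inNbr A x ∩ Xᶜ)
  density_nbr_le : ∀ y ∉ X, density (nbr A y) ≤ 0.4
  le_starMass : ∀ v, lam0 k l * centerFactor (k + l) ≤ starMass k l A v

lemma isNearExtremal_highDegree [Nonempty V] [Std.Asymm A] (hl : 1 ≤ l) (hlk : l ≤ k)
    (hm : 6 ≤ k + l) (hvert : ∀ v, OPT k l ≤ sVert k l A v) (hs : OPT k l < starProb k l V A) :
    IsNearExtremal k l A (highDegree A) := by
  have hmass (v : V) := lam0_mul_centerFactor_le_starMass hl hlk (hvert v)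
  have hcompl : ∀ x ∈ highDegree A, density (nbr A x)ᶜ ≤ 1 / ((k + l : ℕ) : ℝ) := fun x hx ↦
    density_compl_nbr_le_of_half_le hm (hmass x) (mem_filter.1 hx).2
  have hcenter (x) (hx : x ∈ highDegree A) :=
    lam0_mul_centerFactor_sub_le (hl.trans hlk) hl hm hcompl hx (hmass x)
  have hT : ∀ x ∈ highDegree A, 0.36 * lam0 k l ≤
      density (outNbr A x ∩ (highDegree A)ᶜ) ^ k * density (inNbr A x ∩ (highDegree A)ᶜ) ^ l := by
    refine fun x hx ↦ le_trans ?_ (hcenter x hx)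
    rw [mul_comm]
    exact mul_le_mul_of_nonneg_left (by linarith [le_centerFactor (m := k + l) (by omega)])
      (lam0_pos k l).le
  have hdensity : density (highDegree A) ≤ 1.05 / ((k + l : ℕ) + 1) := by
    obtain h | ⟨x, hx⟩ := (highDegree A).eq_empty_or_nonempty
    · rw [h, density_eq_card_div, card_empty, Nat.cast_zero, zero_div]
      positivity
    · exact (le_add_of_nonneg_right (density_nonneg _)).trans
        (density_add_density_sdiff_nbr_le hm (hcenter x hx))
  have hY : ∀ y ∉ highDegree A, density (nbr A y) ≤ 0.4 := fun y hy ↦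
    density_nbr_le_of_le_half hm hdensity
      (fun z hz ↦ (not_le.1 fun h ↦ hz (mem_filter.2 ⟨mem_univ z, h⟩)).le) hy (hmass y)
  exact ⟨le_density_of_OPT_lt_starProb hl hlk hm hcompl hY hs, hdensity, hcompl, hT,
    fun x hx ↦ mul_density_le_density_inNbr hl (hT x hx), hY, hmass⟩

namespace IsNearExtremal

lemma density_pos (h : IsNearExtremal k l A X) : 0 < density X :=
  lt_of_lt_of_le (by positivity) h.le_density

lemma density_le_of_six_le (h : IsNearExtremal k l A X) (hm : 6 ≤ k + l) : density X ≤ 0.15 := by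
  refine h.density_le.trans ?_
  have : (6 : ℝ) ≤ (k + l : ℕ) := by exact_mod_cast hm
  rw [div_le_iff₀ (by positivity)]
  linarith

/-- The stars with leaves in both `X` and `Xᶜ` are paid for by the missing edges between `X` and
`Xᶜ`. -/
lemma starProb_le [Nonempty V] (h : IsNearExtremal k l A X) (hl : 1 ≤ l) (hm : 6 ≤ k + l) :
    starProb k l V A ≤ 0.6 * lam0 k l * nonadjDensity A X Xᶜ +
      unifInt univ (fun c ↦ density (starLeaves k l A c X)) +
      unifInt X (fun c ↦ density (starLeaves k l A c Xᶜ)) +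
      unifInt Xᶜ (fun c ↦ density (starLeaves k l A c Xᶜ)) := by
  have hmixed (c : V) : density (starLeaves k l A c univ) ≤
      0.6 * lam0 k l * nonadjDensity A X Xᶜ + density (starLeaves k l A c X) +
        density (starLeaves k l A c Xᶜ) := by
    refine (density_starLeaves_univ_le_mixed c X).trans ?_
    gcongr
    refine (density_filter_exists_mem_and_exists_mem_compl_le
      (fun f hf a b ↦ notMem_nbr_of_mem_starLeaves hf a b) h.density_compl_nbr_le
      (.inr ⟨0, hl⟩)).trans (mul_le_mul_of_nonneg_right ?_ (nonadjDensity_nonneg ..))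
    simpa only [Fintype.card_sum, Fintype.card_fin] using two_mul_pred_mul_inv_pow_le hm
  rw [add_assoc, unifInt_add_unifInt_compl]
  refine starProb_le_unifInt_density_starLeaves.trans
    ((unifInt_mono fun c _ ↦ hmixed c).trans_eq ?_)
  rw [unifInt_add, unifInt_add, unifInt_const, density_univ, mul_one]

end IsNearExtremal

lemma pow_mul_pow_add_le {p q h : ℝ} (hp : 0 ≤ p) (hp1 : p ≤ 1) (hq : 0 ≤ q) (hh : 0 ≤ h)
    (k l : ℕ) : p ^ k * q ^ l + k * h * (p ^ k * q ^ l) ≤ (p + h) ^ k * q ^ l := by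
  have hbernoulli := one_add_mul_le_pow (show (-2 : ℝ) ≤ h by linarith) k
  calc _ = p ^ k * (1 + k * h) * q ^ l := by ring
    _ ≤ p ^ k * (1 + h) ^ k * q ^ l := by gcongr
    _ = (p + p * h) ^ k * q ^ l := by rw [← mul_pow]; ring
    _ ≤ (p + h) ^ k * q ^ l := by
        gcongr
        exact mul_le_of_le_one_left hh hp1

lemma adjDensity_self_le (x : V) {Y : Finset V} {t : ℝ}
    (ht : ∀ y ∈ Y, density (Y ∩ nbr A y) ≤ t) :
    adjDensity A Y Y ≤
      adjDensity A (nbr A x ∩ Y) (nbr A x ∩ Y) + 2 * t * density (Y \ nbr A x) := by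
  have hout {Q : Finset V} (hQ : Q ⊆ Y) :
      adjDensity A (Y \ nbr A x) Q ≤ t * density (Y \ nbr A x) :=
    adjDensity_le_mul fun u hu ↦
      (density_mono (inter_subset_inter_right hQ)).trans (ht u (mem_sdiff.1 hu).1)
  have hsplit := adjDensity_inter_add_sdiff_left (A := A) Y Y (nbr A x)
  have hsplit' := adjDensity_inter_add_sdiff_right (A := A) (Y ∩ nbr A x) Y (nbr A x)
  rw [adjDensity_comm _ (Y \ nbr A x)] at hsplit'
  rw [inter_comm (nbr A x)]
  linarith [hout subset_rfl, hout (inter_subset_left (s₂ := nbr A x))]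

end NearExtremal

section TwoInLeaves

variable {V : Type*} [Fintype V] {k l : ℕ} {A : V → V → Prop} {X : Finset V}

lemma unifInt_density_starLeaves_self_le [Std.Asymm A] (hkl : 1 ≤ k + l) {B : Finset V} {t : ℝ}
    (ht : ∀ y ∈ B, density (B ∩ nbr A y) ≤ t) :
    unifInt B (fun c ↦ density (starLeaves k l A c B)) ≤
      lam0 k l * t ^ (k + l - 1) * adjDensity A B B := by
  rw [adjDensity, ← unifInt_const_mul]
  refine unifInt_mono fun c hc ↦ (density_starLeaves_le c B).trans ?_
  rw [inter_comm, mul_assoc, ← pow_sub_one_mul (by omega : k + l ≠ 0)]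
  exact mul_le_mul_of_nonneg_left (mul_le_mul_of_nonneg_right
    (pow_le_pow_left₀ (density_nonneg _) (ht c hc) _) (density_nonneg _)) (lam0_pos k l).le

lemma density_starLeaves_le_mul_one_sub_adjDensity [Std.Asymm A] (hk : 2 ≤ k) (hl : 2 ≤ l) (c : V)
    (B : Finset V) :
    density (starLeaves k l A c B) ≤ density (outNbr A c ∩ B) ^ k * density (inNbr A c ∩ B) ^ l *
      (1 - adjDensity A (nbr A c ∩ B) (nbr A c ∩ B)) := by
  have hsplit := density_outNbr_add_inNbr (A := A) c B
  have hp := density_nonneg (outNbr A c ∩ B)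
  have hq := density_nonneg (inNbr A c ∩ B)
  have hT : 0 ≤ density (outNbr A c ∩ B) ^ k * density (inNbr A c ∩ B) ^ l := by positivity
  obtain h0 | h0 := (density_nonneg (nbr A c ∩ B)).eq_or_lt
  · refine (density_starLeaves_le_mul c B).trans_eq ?_
    rw [show density (outNbr A c ∩ B) = 0 by linarith, zero_pow (by omega), zero_mul, zero_mul]
  · refine le_of_mul_le_mul_right ((density_starLeaves_mul_sq_le hk hl c B).trans ?_)
      (pow_pos h0 2)
    have hsq : density (nbr A c ∩ B) ^ 2 ≤ 1 := pow_le_one₀ h0.le (density_le_one _)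
    have hE := mul_le_of_le_one_right (adjDensity_nonneg (A := A) (nbr A c ∩ B) (nbr A c ∩ B)) hsq
    rw [nonadjDensity_eq, mul_comm, mul_assoc (_ * _)]
    exact mul_le_mul_of_nonneg_left (by linarith) hT

namespace IsNearExtremal

lemma density_compl_inter_nbr_le (h : IsNearExtremal k l A X) :
    ∀ y ∈ Xᶜ, density (Xᶜ ∩ nbr A y) ≤ 0.4 := fun y hy ↦
  (density_mono inter_subset_right).trans (h.density_nbr_le y (mem_compl.1 hy))

lemma unifInt_compl_density_starLeaves_le [Std.Asymm A] (h : IsNearExtremal k l A X)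
    (hm : 6 ≤ k + l) :
    unifInt Xᶜ (fun c ↦ density (starLeaves k l A c Xᶜ)) ≤ unifInt X (fun x ↦
      0.36 * lam0 k l * (adjDensity A (nbr A x ∩ Xᶜ) (nbr A x ∩ Xᶜ) +
        0.8 * density (Xᶜ \ nbr A x))) := by
  have hpow : (0.4 : ℝ) ^ (k + l - 1) ≤ 0.36 * density X := by
    have hα := (div_le_iff₀ (by positivity)).1 h.le_density
    refine le_of_mul_le_mul_left (a := ((k + l : ℕ) : ℝ) + 1) ?_ (by positivity)
    linarith [add_one_mul_pow_pred_le hm]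
  have hadj : adjDensity A Xᶜ Xᶜ * density X ≤ unifInt X (fun x ↦
      adjDensity A (nbr A x ∩ Xᶜ) (nbr A x ∩ Xᶜ) + 0.8 * density (Xᶜ \ nbr A x)) := by
    rw [← unifInt_const]
    refine unifInt_mono fun x _ ↦ ?_
    linarith [adjDensity_self_le x h.density_compl_inter_nbr_le]
  have hlam := lam0_pos k l
  rw [unifInt_const_mul]
  calc unifInt Xᶜ (fun c ↦ density (starLeaves k l A c Xᶜ))
      ≤ lam0 k l * 0.4 ^ (k + l - 1) * adjDensity A Xᶜ Xᶜ :=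
        unifInt_density_starLeaves_self_le (by omega) h.density_compl_inter_nbr_le
    _ ≤ lam0 k l * (0.36 * density X) * adjDensity A Xᶜ Xᶜ :=
        mul_le_mul_of_nonneg_right (mul_le_mul_of_nonneg_left hpow hlam.le)
          (adjDensity_nonneg _ _)
    _ = 0.36 * lam0 k l * (adjDensity A Xᶜ Xᶜ * density X) := by ring
    _ ≤ _ := mul_le_mul_of_nonneg_left hadj (by positivity)

lemma add_le_one_sub_pow_mul_pow [Nonempty V] [Std.Asymm A] (h : IsNearExtremal k l A X)
    (hk : 3 ≤ k) {x : V} (hx : x ∈ X) {E s : ℝ} (hE : 0 ≤ E) (hs : s ≤ 0.8)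
    (hstar : density (starLeaves k l A x Xᶜ) ≤
      density (outNbr A x ∩ Xᶜ) ^ k * density (inNbr A x ∩ Xᶜ) ^ l * (1 - E)) :
    0.6 * lam0 k l * density (Xᶜ \ nbr A x) + density (starLeaves k l A x Xᶜ) +
        0.36 * lam0 k l * (E + s * density (Xᶜ \ nbr A x)) ≤
      (1 - density X - density (inNbr A x ∩ Xᶜ)) ^ k * density (inNbr A x ∩ Xᶜ) ^ l := by
  have hT := h.mul_lam0_le x hx
  have hsplit := density_outNbr_add_inNbr_compl (A := A) X x
  have hr := density_nonneg (Xᶜ \ nbr A x)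
  have hgain := pow_mul_pow_add_le (density_nonneg (outNbr A x ∩ Xᶜ)) (density_le_one _)
    (density_nonneg (inNbr A x ∩ Xᶜ)) hr k l
  rw [show 1 - density X - density (inNbr A x ∩ Xᶜ) =
    density (outNbr A x ∩ Xᶜ) + density (Xᶜ \ nbr A x) by linarith]
  have hlam := mul_nonneg (lam0_pos k l).le hr
  set r := density (Xᶜ \ nbr A x)
  set T := density (outNbr A x ∩ Xᶜ) ^ k * density (inNbr A x ∩ Xᶜ) ^ l
  have hk' : (3 : ℝ) ≤ k := by exact_mod_cast hk
  have hTE := mul_le_mul_of_nonneg_right hT hE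
  have hTr : 0.36 * lam0 k l * r ≤ T * r := mul_le_mul_of_nonneg_right hT hr
  have hkr : 3 * (T * r) ≤ k * (T * r) := mul_le_mul_of_nonneg_right hk' (by linarith)
  linarith [mul_le_mul_of_nonneg_right hs hlam]

lemma starProb_le_unifInt_add [Nonempty V] [Std.Asymm A] (h : IsNearExtremal k l A X)
    (hl : 2 ≤ l) (hlk : l ≤ k) (hm : 6 ≤ k + l) :
    starProb k l V A ≤
      unifInt X (fun x ↦ (1 - density X - density (inNbr A x ∩ Xᶜ)) ^ k *
        density (inNbr A x ∩ Xᶜ) ^ l) +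
      unifInt univ (fun c ↦ density (starLeaves k l A c X)) := by
  have hX := unifInt_mono fun x hx ↦ h.add_le_one_sub_pow_mul_pow (by omega) hx
    (adjDensity_nonneg _ _) le_rfl (density_starLeaves_le_mul_one_sub_adjDensity (by omega) hl x _)
  rw [unifInt_add, unifInt_add, unifInt_const_mul] at hX
  have hprob := h.starProb_le (by omega) hm
  rw [nonadjDensity] at hprob
  linarith [h.unifInt_compl_density_starLeaves_le hm]

end IsNearExtremal

lemma add_mul_sub_pow_le {a q r : ℝ} {n : ℕ} (ha : 0 < a) (hr : 0 ≤ r) (hra : r ≤ a)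
    (hq : a ≤ n * q) : (q + r) * (a - r) ^ n ≤ q * a ^ n := by
  have hbernoulli := one_add_mul_mul_one_sub_pow_le_one (div_nonneg hr ha.le)
    ((div_le_one ha).2 hra) n
  have hq0 : 0 ≤ q := by
    by_contra! hneg
    linarith [mul_nonpos_of_nonneg_of_nonpos (Nat.cast_nonneg n : (0 : ℝ) ≤ n) hneg.le]
  have hqr : q + r ≤ q * (1 + n * (r / a)) := by
    have : r ≤ r * (n * q) / a := (le_div_iff₀ ha).2 (mul_le_mul_of_nonneg_left hq hr)
    linarith [show q * (1 + n * (r / a)) = q + r * (n * q) / a by ring]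
  calc (q + r) * (a - r) ^ n ≤ q * (1 + n * (r / a)) * (a - r) ^ n :=
        mul_le_mul_of_nonneg_right hqr (pow_nonneg (by linarith) n)
    _ = q * a ^ n * ((1 + n * (r / a)) * (1 - r / a) ^ n) := by
        rw [show a - r = a * (1 - r / a) by field_simp, mul_pow]; ring
    _ ≤ q * a ^ n := mul_le_of_le_one_right (by positivity) hbernoulli

lemma density_inNbr_le_add (X : Finset V) (x : V) :
    density (inNbr A x) ≤ density (inNbr A x ∩ Xᶜ) + density (X ∩ nbr A x) := by
  rw [← density_inter_add_sdiff (inNbr A x) X, ← sdiff_eq_inter_compl, inter_comm, add_comm]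
  exact add_le_add_right (density_mono (inter_subset_inter_left (inNbr_subset_nbr x))) _

namespace IsNearExtremal

lemma density_inNbr_mul_pow_le (h : IsNearExtremal k l A X) (hm : 6 ≤ k + l) {x : V}
    (hx : x ∈ X) :
    density (inNbr A x) * density (X \ nbr A x) ^ (k + l - 1) ≤
      density (inNbr A x ∩ Xᶜ) * density X ^ (k + l - 1) := by
  have hsplit := density_inter_add_sdiff X (nbr A x)
  have hr := density_nonneg (X \ nbr A x)
  rw [← eq_sub_iff_add_eq'] at hsplit
  refine (mul_le_mul_of_nonneg_right (density_inNbr_le_add X x) (pow_nonneg hr _)).trans ?_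
  rw [hsplit]
  refine add_mul_sub_pow_le h.density_pos (density_nonneg _) (by linarith) ?_
  have : (5 : ℝ) ≤ (k + l - 1 : ℕ) := by exact_mod_cast (by omega : 5 ≤ k + l - 1)
  nlinarith [h.mul_density_le_density_inNbr x hx, h.density_pos]

lemma starProb_le_OPT_of_lt [Nonempty V] [Std.Asymm A] (h : IsNearExtremal k l A X) (hl : 2 ≤ l)
    (hlk : l < k) (hm : 6 ≤ k + l) : starProb k l V A ≤ OPT k l := by
  have hα := h.density_pos
  have hα' := h.density_le_of_six_le hm
  have hcenter : unifInt X (fun x ↦ (1 - density X - density (inNbr A x ∩ Xᶜ)) ^ k *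
      density (inNbr A x ∩ Xᶜ) ^ l + density (inNbr A x ∩ univ) *
        (lam0 (k - 1) l * density (X \ nbr A x) ^ (k + l - 1))) ≤
      OPT k l / density X * density X := by
    refine unifInt_le_const fun x hx ↦ ?_
    have hsplit := density_outNbr_add_inNbr_compl (A := A) X x
    have hp := density_nonneg (outNbr A x ∩ Xᶜ)
    have hq := density_nonneg (inNbr A x ∩ Xᶜ)
    have hr := density_nonneg (Xᶜ \ nbr A x)
    have hopt := mul_le_OPT_of_lt (by omega : 1 ≤ l) hlk ⟨hα.le, by linarith⟩ hq
      (by linarith : density (inNbr A x ∩ Xᶜ) ≤ 1 - density X)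
    rw [le_div_iff₀' hα, inter_univ]
    refine (mul_le_mul_of_nonneg_left ?_ hα.le).trans hopt
    have hbound := mul_le_mul_of_nonneg_left (h.density_inNbr_mul_pow_le hm hx)
      (lam0_pos (k - 1) l).le
    linarith
  rw [unifInt_add, div_mul_cancel₀ _ hα.ne'] at hcenter
  linarith [h.starProb_le_unifInt_add hl hlk.le hm,
    unifInt_density_starLeaves_le (k := k) (l := l) (A := A) (by omega) univ X]

end IsNearExtremal

lemma density_starLeaves_le_mul_nonadjDensity [Std.Asymm A] (hk : 2 ≤ k) (hl : 2 ≤ l) (c : V)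
    (B : Finset V) :
    density (starLeaves k l A c B) ≤
      lam0 k l * density B ^ (k + l - 2) * nonadjDensity A B B := by
  have hlam := lam0_pos k l
  have hnonadj := nonadjDensity_nonneg (A := A) B B
  have hmono : nonadjDensity A (nbr A c ∩ B) (nbr A c ∩ B) ≤ nonadjDensity A B B :=
    nonadjDensity_mono inter_subset_right inter_subset_right
  have hamgm := pow_mul_pow_le_lam0_mul k l (density_nonneg (outNbr A c ∩ B))
    (density_nonneg (inNbr A c ∩ B))
  rw [density_outNbr_add_inNbr] at hamgm
  have hν := density_mono (inter_subset_right : nbr A c ∩ B ⊆ B)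
  have hp := density_nonneg (outNbr A c ∩ B)
  have hq := density_nonneg (inNbr A c ∩ B)
  have hB := density_nonneg B
  obtain h0 | h0 := (density_nonneg (nbr A c ∩ B)).eq_or_lt
  · refine (density_starLeaves_le c B).trans ?_
    rw [← h0, zero_pow (by omega), mul_zero]
    positivity
  · refine le_of_mul_le_mul_right ((density_starLeaves_mul_sq_le hk hl c B).trans ?_)
      (pow_pos h0 2)
    calc _ ≤ nonadjDensity A B B * (lam0 k l * density (nbr A c ∩ B) ^ (k + l)) :=
          mul_le_mul hmono hamgm (by positivity) hnonadj
      _ = lam0 k l * nonadjDensity A B B * density (nbr A c ∩ B) ^ (k + l - 2) *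
          density (nbr A c ∩ B) ^ 2 := by
          rw [mul_assoc _ (_ ^ (k + l - 2)), ← pow_add, Nat.sub_add_cancel (by omega)]; ring
      _ ≤ lam0 k l * nonadjDensity A B B * density B ^ (k + l - 2) *
          density (nbr A c ∩ B) ^ 2 := by gcongr
      _ = _ := by ring

lemma unifInt_univ_density_starLeaves_le [Nonempty V] [Std.Asymm A] (hk : 2 ≤ k) (hl : 2 ≤ l)
    (hX : density X ≤ 1 / 2) :
    unifInt univ (fun c ↦ density (starLeaves k l A c X)) ≤
      lam0 k l * ((1 - density X) * density X ^ (k + l)) := by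
  have hinside : unifInt X (fun c ↦ density (starLeaves k l A c X)) ≤
      lam0 k l * density X ^ (k + l - 1) * adjDensity A X X :=
    unifInt_density_starLeaves_self_le (by omega) fun x _ ↦ density_mono inter_subset_left
  have houtside : unifInt Xᶜ (fun c ↦ density (starLeaves k l A c X)) ≤
      lam0 k l * density X ^ (k + l - 2) * nonadjDensity A X X * (1 - density X) := by
    rw [← density_compl]
    exact unifInt_le_const fun y _ ↦ density_starLeaves_le_mul_nonadjDensity hk hl y X
  obtain ⟨n, hn⟩ : ∃ n, k + l = n + 2 := ⟨k + l - 2, by omega⟩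
  rw [nonadjDensity_eq] at houtside
  simp only [hn, show n + 2 - 1 = n + 1 by omega, show n + 2 - 2 = n by omega] at *
  have hcoeff : 0 ≤ lam0 k l * density X ^ n * adjDensity A X X * (1 - 2 * density X) :=
    mul_nonneg (mul_nonneg (mul_nonneg (lam0_pos k l).le (pow_nonneg (density_nonneg X) n))
      (adjDensity_nonneg _ _)) (by linarith)
  rw [← unifInt_add_unifInt_compl X]
  linear_combination hinside + houtside + hcoeff

lemma IsNearExtremal.starProb_le_OPT_self [Nonempty V] [Std.Asymm A] (h : IsNearExtremal k k A X)
    (hk : 3 ≤ k) : starProb k k V A ≤ OPT k k := by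
  have hα := h.density_pos
  have hα' := h.density_le_of_six_le (by omega)
  have hcenter : unifInt X (fun x ↦ (1 - density X - density (inNbr A x ∩ Xᶜ)) ^ k *
      density (inNbr A x ∩ Xᶜ) ^ k) ≤ lam0 k k * (1 - density X) ^ (k + k) * density X := by
    refine unifInt_le_const fun x _ ↦ ?_
    have hsplit := density_outNbr_add_inNbr_compl (A := A) X x
    have hp := density_nonneg (outNbr A x ∩ Xᶜ)
    have hr := density_nonneg (Xᶜ \ nbr A x)
    refine (pow_mul_pow_le_lam0_mul k k (by linarith) (density_nonneg _)).trans_eq ?_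
    rw [sub_add_cancel]
  linarith [h.starProb_le_unifInt_add (by omega) le_rfl (by omega),
    lam0_mul_le_OPT_self (by omega : 1 ≤ k) hα.le (by linarith : density X ≤ 1),
    unifInt_univ_density_starLeaves_le (k := k) (l := k) (A := A) (X := X) (by omega) (by omega)
      (by linarith)]

end TwoInLeaves

section OneInLeafEstimates

variable {k : ℕ}

lemma pow_mul_one_add_lam0_one_le (hk : 5 ≤ k) :
    0.4 ^ (k + 1) * (1 + lam0 k 1) ≤ 0.2 * (lam0 k 1 * centerFactor (k + 1)) := by
  obtain rfl | h := hk.eq_or_lt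
  · norm_num [lam0, centerFactor]
  have hk' : (6 : ℝ) ≤ k := by exact_mod_cast h
  have hle : lam0 k 1 ≤ 0.1 := (lam0_one_le (by omega)).trans (by
    rw [div_le_iff₀ (by positivity)]; linarith)
  have hge := le_lam0_one (k := k) (by omega)
  have hc := le_centerFactor (m := k + 1) (by omega)
  have hpow : (0.4 : ℝ) ^ (k + 1) ≤ 0.0115 / (k + 1) := by
    have := add_mul_pow_le_add_mul_pow (a := 0) (x := 0.4) (i := 7) (j := k + 1) (by norm_num)
      (by norm_num) (by norm_num) (by omega)
    push_cast at this
    rw [le_div_iff₀ (by positivity)]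
    norm_num at this ⊢
    linarith
  have := (lam0_pos k 1).le
  calc
    (0.4 : ℝ) ^ (k + 1) * (1 + lam0 k 1) ≤ 0.0115 / (k + 1) * (1 + 0.1) := by gcongr
    _ = 0.01265 / (k + 1) := by ring
    _ ≤ 0.2 * 0.3678 * 0.3678 / (k + 1) := by gcongr; norm_num
    _ = 0.2 * (0.3678 / (k + 1) * 0.3678) := by ring
    _ ≤ 0.2 * (lam0 k 1 * centerFactor (k + 1)) := by gcongr

lemma lam0_one_mul_pow_add_le (hk : 5 ≤ k) :
    lam0 k 1 * (2.3 / (k + 2)) ^ (k + 1) + 1.25 / (k + 2) * (2.3 / (k + 2)) ^ k ≤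
      (1 - 1 / 1.04) * (lam0 k 1 * centerFactor (k + 1)) := by
  obtain rfl | h := hk.eq_or_lt
  · norm_num [lam0, centerFactor]
  have hk' : (6 : ℝ) ≤ k := by exact_mod_cast h
  have hc := le_centerFactor (m := k + 1) (by omega)
  have hlam := lam0_pos k 1
  have hbase : 2.3 / ((k : ℝ) + 2) ≤ 0.2875 := by rw [div_le_iff₀ (by positivity)]; linarith
  have hbase0 : 0 ≤ 2.3 / ((k : ℝ) + 2) := by positivity
  have hcoeff : 1.25 / ((k : ℝ) + 2) ≤ 3.4 * lam0 k 1 :=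
    calc
      1.25 / ((k : ℝ) + 2) ≤ 3.4 * 0.3678 / (k + 1) := by gcongr <;> norm_num
      _ = 3.4 * (0.3678 / (k + 1)) := by ring
      _ ≤ 3.4 * lam0 k 1 := by gcongr; exact le_lam0_one (by omega)
  calc
    _ ≤ lam0 k 1 * 0.2875 ^ 7 + 3.4 * lam0 k 1 * 0.2875 ^ 6 :=
      add_le_add
        (mul_le_mul_of_nonneg_left
          (pow_le_pow_of_le_of_le_one hbase0 hbase (by norm_num) (by omega)) hlam.le)
        (mul_le_mul hcoeff (pow_le_pow_of_le_of_le_one hbase0 hbase (by norm_num) h)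
          (by positivity) (by positivity))
    _ = (0.2875 ^ 7 + 3.4 * 0.2875 ^ 6) * lam0 k 1 := by ring
    _ ≤ (1 - 1 / 1.04) * 0.3678 * lam0 k 1 := by gcongr; norm_num
    _ = (1 - 1 / 1.04) * (lam0 k 1 * 0.3678) := by ring
    _ ≤ (1 - 1 / 1.04) * (lam0 k 1 * centerFactor (k + 1)) := by gcongr

lemma pow_le_mul_lam0_one (hk : 5 ≤ k) :
    (1.04 / ((k : ℝ) + 2)) ^ k ≤
      0.36 * lam0 k 1 * (1 / (4 * (k + 1)) * (0.6 / (k + 2))) := by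
  obtain rfl | h := hk.eq_or_lt
  · norm_num [lam0]
  have hk' : (6 : ℝ) ≤ k := by exact_mod_cast h
  have hbase : 1.04 / ((k : ℝ) + 2) ≤ 0.13 := by rw [div_le_iff₀ (by positivity)]; linarith
  calc
    (1.04 / ((k : ℝ) + 2)) ^ k = (1.04 / ((k : ℝ) + 2)) ^ (k - 3) * (1.04 / (k + 2)) ^ 3 := by
      rw [← pow_add]; congr 1; omega
    _ ≤ 0.13 ^ 3 * (1.04 / (k + 2)) ^ 3 := by
      gcongr
      exact pow_le_pow_of_le_of_le_one (by positivity) hbase (by norm_num) (by omega)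
    _ = 0.13 ^ 3 * 1.04 ^ 3 * (1 / ((k + 2) * (k + 2) * (k + 2))) := by field_simp
    _ ≤ 0.36 * 0.3678 * 0.6 / 4 * (1 / ((k + 1) * (k + 1) * (k + 2))) := by
      gcongr <;> norm_num
    _ = 0.36 * (0.3678 / (k + 1)) * (1 / (4 * (k + 1)) * (0.6 / (k + 2))) := by field_simp
    _ ≤ 0.36 * lam0 k 1 * (1 / (4 * (k + 1)) * (0.6 / (k + 2))) := by
      gcongr; exact le_lam0_one (by omega)

lemma exp_three_halves_le : Real.exp 1.5 ≤ 4.4818 := by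
  refine le_of_pow_le_pow_left₀ (n := 2) (by norm_num) (by norm_num) ?_
  rw [← Real.exp_nat_mul, show ((2 : ℕ) : ℝ) * 1.5 = 1 + 1 + 1 by norm_num, Real.exp_add,
    Real.exp_add]
  have := Real.exp_one_lt_d9
  calc
    Real.exp 1 * Real.exp 1 * Real.exp 1 ≤ 2.7182818286 * 2.7182818286 * 2.7182818286 := by
      gcongr
    _ ≤ 4.4818 ^ 2 := by norm_num

lemma inv_add_lam0_mul_le_of_seven_le (hk : 7 ≤ k) :
    1 / (4 * ((k : ℝ) + 1)) + lam0 (k - 1) 1 *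
      (lam0 k 1 * (1 + 3 / (2 * (k + 1))) ^ (k + 1) + lam0 k 1 / (0.55 - 1 / k)) ≤
        lam0 (k - 1) 1 := by
  have hk' : (7 : ℝ) ≤ k := by exact_mod_cast hk
  have hC := lam0_pos (k - 1) 1
  have hL := lam0_one_le (k := k) (by omega)
  have hC_ge : 1 ≤ lam0 (k - 1) 1 * (2.7183 * k) := by
    have hunit := lam0_one_mul_leafFactor (k := k - 1) (by omega)
    rw [Nat.sub_add_cancel (by omega)] at hunit
    rw [← hunit]
    exact mul_le_mul_of_nonneg_left (leafFactor_le (by omega)) hC.le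
  have hexp : (1 + 3 / (2 * ((k : ℝ) + 1))) ^ (k + 1) ≤ 4.4818 :=
    (one_add_pow_le_exp (by positivity) (by push_cast; field_simp; norm_num)).trans
      exp_three_halves_le
  have hgap : (0.4 : ℝ) ≤ 0.55 - 1 / k := by
    have : 1 / (k : ℝ) ≤ 1 / 7 := by gcongr
    linarith
  have := (lam0_pos k 1).le
  calc
    _ ≤ lam0 (k - 1) 1 * (2.7183 * k) / (4 * ((k : ℝ) + 1)) +
        lam0 (k - 1) 1 * (0.3679 / k * 4.4818 + 0.3679 / k / 0.4) := by gcongr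
    _ = lam0 (k - 1) 1 *
        (2.7183 * (k / (4 * (k + 1))) + (0.3679 * 4.4818 + 0.3679 / 0.4) / k) := by ring
    _ ≤ lam0 (k - 1) 1 := by
      refine mul_le_of_le_one_right hC.le ?_
      rw [← mul_div_assoc, div_add_div _ _ (by positivity) (by positivity),
        div_le_one (by positivity)]
      norm_num
      nlinarith

lemma inv_add_lam0_mul_le (hk : 5 ≤ k) :
    1 / (4 * ((k : ℝ) + 1)) + lam0 (k - 1) 1 *
      (lam0 k 1 * (1 + 3 / (2 * (k + 1))) ^ (k + 1) + lam0 k 1 / (0.55 - 1 / k)) ≤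
        lam0 (k - 1) 1 := by
  obtain rfl | rfl | h : k = 5 ∨ k = 6 ∨ 7 ≤ k := by omega
  · norm_num [lam0]
  · norm_num [lam0]
  · exact inv_add_lam0_mul_le_of_seven_le h

lemma inv_le_lam0_pred_one (hk : 5 ≤ k) : 1 / (4 * ((k : ℝ) + 1)) ≤ lam0 (k - 1) 1 := by
  have hk' : (5 : ℝ) ≤ k := by exact_mod_cast hk
  have h := le_lam0_one (k := k - 1) (by omega)
  rw [Nat.cast_pred (by omega), sub_add_cancel] at h
  refine le_trans ?_ h
  rw [div_le_div_iff₀ (by positivity) (by positivity)]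
  linarith

lemma half_pow_lt_mul_lam0_one (hk : 5 ≤ k) : (1 / 2 : ℝ) ^ (k + 1) < 0.36 * lam0 k 1 := by
  obtain rfl | h := hk.eq_or_lt
  · norm_num [lam0]
  have hgeom := add_mul_pow_le_add_mul_pow (a := 0) (x := 1 / 2) (i := 7) (j := k + 1)
    (by norm_num) (by norm_num) (by norm_num) (by omega)
  have hge := le_lam0_one (k := k) (by omega)
  rw [div_le_iff₀ (by positivity)] at hge
  push_cast at hgeom
  norm_num at hgeom
  refine lt_of_mul_lt_mul_left ?_ (by positivity : (0 : ℝ) ≤ k + 1)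
  norm_num
  linarith

lemma sq_mul_half_pow_le (hk : 6 ≤ k) : (4 * (k : ℝ) + 7) ^ 2 * (1 / 2) ^ (k + 2) ≤ 3.76 := by
  induction k, hk using Nat.le_induction with
  | base => norm_num
  | succ k hk ih =>
    have hk' : (6 : ℝ) ≤ k := by exact_mod_cast hk
    have hratio : (4 * ((k : ℝ) + 1) + 7) ^ 2 * (1 / 2) ≤ (4 * k + 7) ^ 2 := by nlinarith
    calc
      (4 * ((k + 1 : ℕ) : ℝ) + 7) ^ 2 * (1 / 2 : ℝ) ^ (k + 1 + 2)
          = (4 * ((k : ℝ) + 1) + 7) ^ 2 * (1 / 2) * (1 / 2 : ℝ) ^ (k + 2) := by push_cast; ring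
      _ ≤ (4 * k + 7) ^ 2 * (1 / 2 : ℝ) ^ (k + 2) := by gcongr
      _ ≤ 3.76 := ih

lemma sq_mul_pow_le (hk : 6 ≤ k) {a : ℝ} (h0 : 0 ≤ a) (ha : a ≤ 1.05 / (k + 2)) :
    (4 * (k : ℝ) + 7) ^ 2 * a ^ k ≤ 0.006 := by
  have hk' : (6 : ℝ) ≤ k := by exact_mod_cast hk
  rw [le_div_iff₀ (by positivity)] at ha
  have hpow : a ^ (k - 2) ≤ 0.13125 ^ 4 :=
    pow_le_pow_of_le_of_le_one h0 (by nlinarith) (by norm_num) (by omega)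
  calc
    (4 * (k : ℝ) + 7) ^ 2 * a ^ k = a ^ (k - 2) * ((4 * k + 7) * a) ^ 2 := by
      rw [← Nat.sub_add_cancel (by omega : 2 ≤ k), pow_add]; simp; ring
    _ ≤ 0.13125 ^ 4 * 4.2 ^ 2 := by gcongr; nlinarith
    _ ≤ 0.006 := by norm_num

lemma lam0_pred_one_mul_le_of_six_le (hk : 6 ≤ k) {a q : ℝ} (h0 : 0 ≤ a) (ha : a ≤ 1.05 / (k + 2))
    (hq0 : 0 ≤ q) (hq : q ≤ 1 / 2) :
    lam0 (k - 1) 1 * (a ^ (k + 1) * q + lam0 k 1 * a ^ (k + 2) + lam0 k 1 * q ^ (k + 2)) ≤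
      (3 / (4 * (k : ℝ) + 7)) ^ 2 * (lam0 k 1 * centerFactor (k + 1) / (k + 2)) := by
  have hk' : (6 : ℝ) ≤ k := by exact_mod_cast hk
  have hL := lam0_pos k 1
  have hC := lam0_pos (k - 1) 1
  have hc := le_centerFactor (m := k + 1) (by omega)
  have hL_ge := le_lam0_one (k := k) (by omega)
  have hC_le := lam0_one_le (k := k - 1) (by omega)
  have hak : a * (k + 2) ≤ 1.05 := by rwa [le_div_iff₀ (by positivity)] at ha
  rw [div_le_iff₀ (by positivity)] at hL_ge
  rw [Nat.cast_pred (by omega), le_div_iff₀ (by linarith)] at hC_le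
  have hq_term : a ^ (k + 1) * q ≤ lam0 k 1 * (1.43 * a ^ k) := by
    have : a * q ≤ lam0 k 1 * 1.43 := by nlinarith
    calc
      a ^ (k + 1) * q = a * q * a ^ k := by ring
      _ ≤ lam0 k 1 * 1.43 * a ^ k := by gcongr
      _ = lam0 k 1 * (1.43 * a ^ k) := by ring
  have ha_term : a ^ (k + 2) ≤ 0.02 * a ^ k := by
    rw [pow_add, mul_comm]; gcongr; nlinarith
  have hsum : (4 * (k : ℝ) + 7) ^ 2 * (1.45 * a ^ k + (1 / 2) ^ (k + 2)) ≤ 3.77 := by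
    linarith [sq_mul_half_pow_le hk, sq_mul_pow_le hk h0 ha]
  have hfactor : lam0 (k - 1) 1 * (k + 2) ≤ 0.3679 * 1.6 := by nlinarith
  have hbracket : a ^ (k + 1) * q + lam0 k 1 * a ^ (k + 2) + lam0 k 1 * q ^ (k + 2) ≤
      lam0 k 1 * (1.45 * a ^ k + (1 / 2) ^ (k + 2)) := by
    linarith [mul_le_mul_of_nonneg_left ha_term hL.le,
      mul_le_mul_of_nonneg_left (pow_le_pow_left₀ hq0 hq (k + 2)) hL.le]
  calc
    _ ≤ lam0 (k - 1) 1 * (lam0 k 1 * (1.45 * a ^ k + (1 / 2) ^ (k + 2))) := by gcongr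
    _ = lam0 k 1 * ((lam0 (k - 1) 1 * (k + 2)) *
        ((4 * (k : ℝ) + 7) ^ 2 * (1.45 * a ^ k + (1 / 2) ^ (k + 2)))) /
          ((4 * (k : ℝ) + 7) ^ 2 * (k + 2)) := by field_simp
    _ ≤ lam0 k 1 * (0.3679 * 1.6 * 3.77) / ((4 * (k : ℝ) + 7) ^ 2 * (k + 2)) := by gcongr
    _ ≤ lam0 k 1 * (9 * centerFactor (k + 1)) / ((4 * (k : ℝ) + 7) ^ 2 * (k + 2)) :=
      div_le_div_of_nonneg_right (mul_le_mul_of_nonneg_left (by linarith) hL.le) (by positivity)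
    _ = _ := by field_simp; norm_num

lemma lam0_pred_one_mul_le (hk : 5 ≤ k) {a q : ℝ} (h0 : 0 ≤ a) (ha : a ≤ 1.05 / (k + 2))
    (hq0 : 0 ≤ q) (hq : q ≤ 1 / 2) :
    lam0 (k - 1) 1 * (a ^ (k + 1) * q + lam0 k 1 * a ^ (k + 2) + lam0 k 1 * q ^ (k + 2)) ≤
      (3 / (4 * (k : ℝ) + 7)) ^ 2 * (lam0 k 1 * centerFactor (k + 1) / (k + 2)) := by
  obtain rfl | h := hk.eq_or_lt
  · have hL := (lam0_pos 5 1).le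
    have hC := (lam0_pos (5 - 1) 1).le
    have ha' : a ≤ 0.15 := by norm_num at ha; linarith
    calc
      _ ≤ lam0 (5 - 1) 1 *
          (0.15 ^ (5 + 1) * (1 / 2) + lam0 5 1 * 0.15 ^ (5 + 2) +
            lam0 5 1 * (1 / 2) ^ (5 + 2)) := by gcongr
      _ ≤ _ := by norm_num [lam0, centerFactor]
  · exact lam0_pred_one_mul_le_of_six_le h h0 ha hq0 hq

end OneInLeafEstimates

section OneInLeafPointwise

variable {k : ℕ}

lemma add_mul_sub_pow_le_mul_pow_add {a p r : ℝ} (hp : 0 ≤ p) (hr : 0 ≤ r) (hra : r ≤ a) :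
    (p + r) * (a - r) ^ k ≤ p * a ^ k + lam0 k 1 * a ^ (k + 1) := by
  have hamgm := pow_mul_pow_le_lam0_mul k 1 (sub_nonneg.2 hra) hr
  rw [pow_one, sub_add_cancel] at hamgm
  have hpow : (a - r) ^ k ≤ a ^ k := pow_le_pow_left₀ (sub_nonneg.2 hra) (by linarith) _
  linarith [mul_le_mul_of_nonneg_left hpow hp]

lemma lam0_pred_mul_add_le_of_le_mul (hk : 5 ≤ k) {a q w r : ℝ} (ha : 0 < a) (haq : 0.55 * a ≤ q)
    (hw : 0 ≤ w) (hwq : w ≤ q) (hr : 0 ≤ r) (hra : r ≤ a)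
    (hqa : q ≤ (1 + 3 / (2 * ((k : ℝ) + 1))) * a) :
    lam0 (k - 1) 1 * ((q - w + r) * (a - r) ^ k) + 1 / (4 * ((k : ℝ) + 1)) * w * a ^ k +
      lam0 (k - 1) 1 * (lam0 k 1 * w ^ (k + 2) / a) ≤ lam0 (k - 1) 1 * a ^ k * q := by
  have hk' : (5 : ℝ) ≤ k := by exact_mod_cast hk
  have hC := lam0_pos (k - 1) 1
  have hL := lam0_pos k 1
  have hcoeff := mul_le_mul_of_nonneg_right (inv_add_lam0_mul_le hk)
    (show 0 ≤ w * a ^ k by positivity)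
  set ζ : ℝ := 1 + 3 / (2 * ((k : ℝ) + 1))
  have hθ : 0 < 0.55 - 1 / (k : ℝ) := by
    have : 1 / (k : ℝ) ≤ 1 / 5 := by gcongr
    linarith
  have hwpow : lam0 k 1 * w ^ (k + 2) / a ≤ lam0 k 1 * (w * ζ ^ (k + 1) * a ^ k) := by
    rw [div_le_iff₀ ha]
    calc
      lam0 k 1 * w ^ (k + 2) = lam0 k 1 * (w * w ^ (k + 1)) := by ring
      _ ≤ lam0 k 1 * (w * (ζ * a) ^ (k + 1)) := by gcongr; exact hwq.trans hqa
      _ = lam0 k 1 * (w * ζ ^ (k + 1) * a ^ k) * a := by rw [mul_pow]; ring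
  have hmain : (q - w + r) * (a - r) ^ k ≤
      (q - w) * a ^ k + lam0 k 1 / (0.55 - 1 / (k : ℝ)) * (w * a ^ k) := by
    rcases le_total a (k * (q - w)) with hb | hb
    · exact (add_mul_sub_pow_le ha hr hra hb).trans (le_add_of_nonneg_right (by positivity))
    · have haw : a ≤ w / (0.55 - 1 / (k : ℝ)) := by
        have : q - w ≤ 1 / (k : ℝ) * a := by
          rw [one_div_mul_eq_div, le_div_iff₀ (by linarith)]; linarith
        rw [le_div_iff₀ hθ]
        linarith
      calc
        (q - w + r) * (a - r) ^ k ≤ (q - w) * a ^ k + lam0 k 1 * (a ^ k * a) :=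
          add_mul_sub_pow_le_mul_pow_add (sub_nonneg.2 hwq) hr hra
        _ ≤ (q - w) * a ^ k + lam0 k 1 * (a ^ k * (w / (0.55 - 1 / (k : ℝ)))) := by
          gcongr
        _ = (q - w) * a ^ k + lam0 k 1 / (0.55 - 1 / (k : ℝ)) * (w * a ^ k) := by ring
  linarith [mul_le_mul_of_nonneg_left hmain hC.le, mul_le_mul_of_nonneg_left hwpow hC.le]

lemma lam0_two_div_four_le_OPT_one (hk : 1 ≤ k) : lam0 2 k / 4 ≤ OPT k 1 := by
  have h := lam0_mul_centerFactor_div_le_OPT le_rfl hk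
  rw [lam0_two_div_four hk, mul_div_assoc]
  convert h using 3
  push_cast
  ring

lemma mul_mul_pow_le_one_sub_sq_mul {a q : ℝ} (ha : 0 ≤ a) (haq1 : a + q ≤ 1)
    (hqa : (1 + 3 / (2 * ((k : ℝ) + 1))) * a ≤ q) :
    a * (q * (1 - a - q) ^ k) ≤ (1 - (3 / (4 * (k : ℝ) + 7)) ^ 2) * (lam0 2 k / 4) := by
  have hid : 1 - (3 / (4 * (k : ℝ) + 7)) ^ 2 =
      4 * (1 + 3 / (2 * ((k : ℝ) + 1))) / (1 + (1 + 3 / (2 * ((k : ℝ) + 1)))) ^ 2 := by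
    field_simp; ring
  rw [hid]
  have hζ : 1 ≤ 1 + 3 / (2 * ((k : ℝ) + 1)) := le_add_of_nonneg_right (by positivity)
  set ζ : ℝ := 1 + 3 / (2 * ((k : ℝ) + 1))
  have hle : a ≤ q := (le_mul_of_one_le_left ha hζ).trans hqa
  have hq : 0 ≤ q := ha.trans hle
  have hamgm := pow_mul_pow_le_lam0_mul 2 k (p := a + q) (q := 1 - a - q) (by linarith)
    (by linarith)
  rw [show a + q + (1 - a - q) = 1 by ring, one_pow, mul_one] at hamgm
  have hquad : a * q * (1 + ζ) ^ 2 ≤ ζ * (a + q) ^ 2 := by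
    linarith [mul_nonneg (sub_nonneg.2 hqa)
      (sub_nonneg.2 (hle.trans (le_mul_of_one_le_left hq hζ)))]
  rw [div_mul_eq_mul_div, le_div_iff₀ (by positivity)]
  calc
    a * (q * (1 - a - q) ^ k) * (1 + ζ) ^ 2 = a * q * (1 + ζ) ^ 2 * (1 - a - q) ^ k := by ring
    _ ≤ ζ * (a + q) ^ 2 * (1 - a - q) ^ k :=
      mul_le_mul_of_nonneg_right hquad (pow_nonneg (by linarith) _)
    _ = ζ * ((a + q) ^ 2 * (1 - a - q) ^ k) := by ring
    _ ≤ ζ * lam0 2 k := by gcongr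
    _ = 4 * ζ * (lam0 2 k / 4) := by ring

lemma mul_add_le_OPT_one_of_mul_le (hk : 5 ≤ k) {a q w r : ℝ} (ha : 0 < a)
    (ha1 : a ≤ 1.05 / (k + 2)) (haq1 : a + q ≤ 1) (hq1 : q ≤ 1 / 2) (hw : 0 ≤ w) (hwq : w ≤ q)
    (hr : 0 ≤ r) (hra : r ≤ a) (hqa : (1 + 3 / (2 * ((k : ℝ) + 1))) * a ≤ q) :
    a * ((1 - a - q) ^ k * q + lam0 (k - 1) 1 * ((q - w + r) * (a - r) ^ k) +
      1 / (4 * ((k : ℝ) + 1)) * w * a ^ k + lam0 (k - 1) 1 * (lam0 k 1 * w ^ (k + 2) / a)) ≤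
        OPT k 1 := by
  have hC := lam0_pos (k - 1) 1
  have hL := lam0_pos k 1
  have hmain := mul_mul_pow_le_one_sub_sq_mul ha.le haq1 hqa
  have herror := lam0_pred_one_mul_le hk ha.le ha1 (hw.trans hwq) hq1
  rw [← lam0_two_div_four (by omega)] at herror
  have hmiddle : lam0 (k - 1) 1 * ((q - w + r) * (a - r) ^ k) +
      1 / (4 * ((k : ℝ) + 1)) * w * a ^ k ≤
        lam0 (k - 1) 1 * (q * a ^ k + lam0 k 1 * a ^ (k + 1)) := by
    have hsplit := mul_le_mul_of_nonneg_left
      (add_mul_sub_pow_le_mul_pow_add (k := k) (sub_nonneg.2 hwq) hr hra) hC.le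
    have hgap := mul_le_mul_of_nonneg_right (inv_le_lam0_pred_one hk)
      (show 0 ≤ w * a ^ k by positivity)
    linarith
  have hlast : a * (lam0 (k - 1) 1 * (lam0 k 1 * w ^ (k + 2) / a)) ≤
      lam0 (k - 1) 1 * (lam0 k 1 * q ^ (k + 2)) :=
    calc
      a * (lam0 (k - 1) 1 * (lam0 k 1 * w ^ (k + 2) / a)) =
          lam0 (k - 1) 1 * (lam0 k 1 * w ^ (k + 2)) := by field_simp
      _ ≤ lam0 (k - 1) 1 * (lam0 k 1 * q ^ (k + 2)) := by gcongr
  refine le_trans ?_ (lam0_two_div_four_le_OPT_one (by omega))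
  calc
    _ = a * (q * (1 - a - q) ^ k) + a * (lam0 (k - 1) 1 * ((q - w + r) * (a - r) ^ k) +
        1 / (4 * ((k : ℝ) + 1)) * w * a ^ k) +
          a * (lam0 (k - 1) 1 * (lam0 k 1 * w ^ (k + 2) / a)) := by ring
    _ ≤ (1 - (3 / (4 * (k : ℝ) + 7)) ^ 2) * (lam0 2 k / 4) +
        a * (lam0 (k - 1) 1 * (q * a ^ k + lam0 k 1 * a ^ (k + 1))) +
          lam0 (k - 1) 1 * (lam0 k 1 * q ^ (k + 2)) :=
      add_le_add (add_le_add hmain (mul_le_mul_of_nonneg_left hmiddle ha.le)) hlast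
    _ = (1 - (3 / (4 * (k : ℝ) + 7)) ^ 2) * (lam0 2 k / 4) + lam0 (k - 1) 1 *
        (a ^ (k + 1) * q + lam0 k 1 * a ^ (k + 2) + lam0 k 1 * q ^ (k + 2)) := by ring
    _ ≤ lam0 2 k / 4 := by linarith

lemma mul_add_le_OPT_one (hk : 5 ≤ k) {a q w r : ℝ} (ha : 0 < a) (ha1 : a ≤ 1.05 / (k + 2))
    (haq : 0.55 * a ≤ q) (hq1 : q ≤ 1 / 2) (hw : 0 ≤ w) (hwq : w ≤ q) (hr : 0 ≤ r)
    (hra : r ≤ a) :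
    a * ((1 - a - q) ^ k * q + lam0 (k - 1) 1 * ((q - w + r) * (a - r) ^ k) +
      1 / (4 * ((k : ℝ) + 1)) * w * a ^ k + lam0 (k - 1) 1 * (lam0 k 1 * w ^ (k + 2) / a)) ≤
        OPT k 1 := by
  have hk' : (5 : ℝ) ≤ k := by exact_mod_cast hk
  have ha2 : a ≤ 0.15 := by
    refine ha1.trans ?_
    rw [div_le_iff₀ (by positivity)]
    linarith
  rcases le_total q ((1 + 3 / (2 * ((k : ℝ) + 1))) * a) with hqa | hqa
  · have hopt := mul_le_OPT_of_lt (le_refl 1) (show 1 < k by omega) (a := a) ⟨ha.le, by linarith⟩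
      (hw.trans hwq) (by linarith : q ≤ 1 - a)
    rw [pow_one, Nat.add_sub_cancel] at hopt
    refine le_trans (mul_le_mul_of_nonneg_left ?_ ha.le) hopt
    linarith [lam0_pred_mul_add_le_of_le_mul hk ha haq hw hwq hr hra hqa]
  · exact mul_add_le_OPT_one_of_mul_le hk ha ha1 (by linarith) hq1 hw hwq hr hra hqa

end OneInLeafPointwise

section OneInLeaf

variable {V : Type*} [Fintype V] {k : ℕ} {A : V → V → Prop} {X : Finset V}

lemma unifInt_density_sdiff_nbr_pow_le {t : ℝ} (ht : ∀ y ∉ X, density (nbr A y) ≤ t) (y : V)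
    (n : ℕ) :
    unifInt (nbr A y) (fun c ↦ density (nbr A c \ nbr A y) ^ n) ≤
      density (nbr A y)ᶜ ^ n * density (X ∩ nbr A y) + t ^ n * density (Xᶜ ∩ nbr A y) := by
  rw [← unifInt_inter_add_sdiff (nbr A y) X, sdiff_eq_inter_compl, inter_comm _ X, inter_comm _ Xᶜ]
  exact add_le_add (unifInt_density_pow_le (fun c _ ↦ density_sdiff_nbr_le _ y) n)
    (unifInt_density_pow_le (fun c hc ↦ (density_mono sdiff_subset).trans
      (ht c (mem_compl.1 (mem_inter.1 hc).1))) n)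

namespace IsNearExtremal

lemma density_compl_inter_nbr_le_div [Nonempty V] [Std.Asymm A] (h : IsNearExtremal k 1 A X)
    (hk : 5 ≤ k) {t s δ : ℝ} (ht : ∀ y ∉ X, density (nbr A y) ≤ t)
    (hs : ∀ y ∉ X, density (Xᶜ ∩ nbr A y) ≤ s) (hδ0 : 0 < δ)
    (hδ : lam0 k 1 * t ^ (k + 1) + s * t ^ k ≤ (1 - δ) * (lam0 k 1 * centerFactor (k + 1))) :
    ∀ y ∉ X, density (Xᶜ ∩ nbr A y) ≤ 1 / δ / (k + 2) := by
  intro y hy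
  have hmass := (h.le_starMass y).trans (starMass_le (by omega)
    (unifInt_density_sdiff_nbr_pow_le ht y _))
  rw [mul_add, ← mul_assoc (lam0 k 1) (leafFactor _), lam0_one_mul_leafFactor (by omega), one_mul,
    Nat.add_sub_cancel] at hmass
  have ht0 : 0 ≤ t := (density_nonneg _).trans (ht y hy)
  have hcenter : lam0 k 1 * density (nbr A y) ^ (k + 1) ≤ lam0 k 1 * t ^ (k + 1) :=
    mul_le_mul_of_nonneg_left (pow_le_pow_left₀ (density_nonneg _) (ht y hy) _) (lam0_pos k 1).le
  have hinner : t ^ k * density (Xᶜ ∩ nbr A y) ≤ s * t ^ k := by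
    rw [mul_comm]
    exact mul_le_mul_of_nonneg_right (hs y hy) (pow_nonneg ht0 k)
  have hgap : δ * (lam0 k 1 * centerFactor (k + 1)) ≤
      density (nbr A y)ᶜ ^ k * density (X ∩ nbr A y) := by linarith
  have hnbr := density_inter_add_sdiff (nbr A y) X
  rw [sdiff_eq_inter_compl, inter_comm _ X, inter_comm _ Xᶜ] at hnbr
  have hamgm := pow_mul_pow_le_lam0_mul 2 k (density_nonneg (nbr A y))
    (density_nonneg (nbr A y)ᶜ)
  rw [density_compl, add_sub_cancel, one_pow, mul_one, ← density_compl, ← hnbr] at hamgm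
  have hmain : 0 < lam0 k 1 * centerFactor (k + 1) :=
    mul_pos (lam0_pos k 1) (by linarith [le_centerFactor (m := k + 1) (by omega)])
  have hpow : 0 ≤ density (nbr A y)ᶜ ^ k := pow_nonneg (density_nonneg _) k
  have hr := density_nonneg (Xᶜ ∩ nbr A y)
  set r := density (Xᶜ ∩ nbr A y)
  set f := density (X ∩ nbr A y)
  set G := density (nbr A y)ᶜ ^ k
  have hrf : r * (δ * (lam0 k 1 * centerFactor (k + 1))) ≤
      lam0 k 1 * centerFactor (k + 1) / (k + 2) := by
    rw [← lam0_two_div_four (by omega)]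
    have := mul_nonneg (sq_nonneg (f - r)) hpow
    linarith [mul_le_mul_of_nonneg_left hgap hr]
  rw [le_div_iff₀ (by positivity)] at hrf ⊢
  rw [le_div_iff₀ hδ0]
  refine le_of_mul_le_mul_left ?_ hmain
  linarith

/-- Inserting the lower bound on `starMass` twice improves the degree bound inside `Xᶜ` from `0.4`
to about `1 / (k + 2)`. -/
lemma density_compl_inter_nbr_le_of_one [Nonempty V] [Std.Asymm A] (h : IsNearExtremal k 1 A X)
    (hk : 5 ≤ k) : ∀ y ∉ X, density (Xᶜ ∩ nbr A y) ≤ 1.04 / (k + 2) := by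
  have hfirst : ∀ y ∉ X, density (Xᶜ ∩ nbr A y) ≤ 1.25 / (k + 2) := by
    have hδ : lam0 k 1 * 0.4 ^ (k + 1) + 0.4 * 0.4 ^ k ≤
        (1 - 0.8) * (lam0 k 1 * centerFactor (k + 1)) := by
      linarith [pow_mul_one_add_lam0_one_le hk, pow_succ' (0.4 : ℝ) k]
    convert h.density_compl_inter_nbr_le_div hk h.density_nbr_le
      (fun y hy ↦ (density_mono inter_subset_right).trans (h.density_nbr_le y hy))
      (by norm_num) hδ using 4
    norm_num
  have hdegree : ∀ y ∉ X, density (nbr A y) ≤ 2.3 / (k + 2) := by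
    intro y hy
    have hα := h.density_le
    rw [Nat.cast_add, Nat.cast_one, add_assoc, one_add_one_eq_two] at hα
    rw [← density_inter_add_sdiff (nbr A y) X, sdiff_eq_inter_compl, inter_comm _ Xᶜ]
    refine (add_le_add ((density_mono inter_subset_right).trans hα) (hfirst y hy)).trans_eq ?_
    rw [← add_div]
    norm_num
  simpa only [one_div_one_div] using h.density_compl_inter_nbr_le_div hk hdegree hfirst
    (δ := 1 / 1.04) (by norm_num) (lam0_one_mul_pow_add_le hk)

end IsNearExtremal

end OneInLeaf

section StarVerts

variable {V : Type*} {k l : ℕ}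

/-- The vertex set of the star with center `c` and leaf map `f`. -/
noncomputable def starVerts (c : V) (f : Fin k ⊕ Fin l → V) : Finset V :=
  insert c (univ.image f)

lemma starVerts_subset_iff {c : V} {f : Fin k ⊕ Fin l → V} {J : Finset V} :
    starVerts c f ⊆ J ↔ c ∈ J ∧ ∀ a, f a ∈ J := by
  simp [starVerts, insert_subset_iff, image_subset_iff]

variable [Fintype V] {A : V → V → Prop}

lemma unifInt_density_starLeaves_filter_starVerts_subset_le (B J : Finset V) :
    unifInt B (fun c ↦ density {f ∈ starLeaves k l A c B | starVerts c f ⊆ J}) ≤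
      unifInt J (fun c ↦ density (starLeaves k l A c J)) := by
  calc _ ≤ unifInt B (fun c ↦ if c ∈ J then density (starLeaves k l A c J) else 0) := by
        refine unifInt_mono fun c _ ↦ ?_
        split_ifs with hc
        · refine density_mono fun f hf ↦ ?_
          obtain ⟨hfB, hfJ⟩ := mem_filter.1 hf
          exact mem_starLeaves_of_forall_mem hfB (starVerts_subset_iff.1 hfJ).2
        · rw [filter_false_of_mem fun f _ hf ↦ hc (starVerts_subset_iff.1 hf).1]
          simp [density]
    _ = unifInt {c ∈ B | c ∈ J} (fun c ↦ density (starLeaves k l A c J)) := by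
        rw [unifInt_filter]
    _ ≤ _ := unifInt_mono_set (fun c hc ↦ (mem_filter.1 hc).2) fun _ _ ↦ density_nonneg _

lemma density_starLeaves_filter_exists_mem_le_mul [Std.Asymm A] (hk : 1 ≤ k) (hl : 1 ≤ l) {c : V}
    {B : Finset V} {t : ℝ} (ht : density (B ∩ nbr A c) ≤ t) (T : Finset V) :
    density {f ∈ starLeaves k l A c B | ∃ a, f a ∈ T} ≤
      lam0 k l * leafFactor (k + l) * t ^ (k + l - 1) * density (T ∩ nbr A c) := by
  rw [inter_comm] at ht
  rw [mul_assoc]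
  refine (density_starLeaves_filter_exists_mem_le hk hl c B T).trans (mul_le_mul_of_nonneg_left
    ((unifInt_density_pow_le (fun v _ ↦ (density_mono sdiff_subset).trans ht) _).trans ?_)
    (mul_nonneg (lam0_pos ..).le (leafFactor_nonneg (by omega))))
  refine mul_le_mul_of_nonneg_left (density_mono fun v hv ↦ ?_)
    (pow_nonneg ((density_nonneg _).trans ht) _)
  obtain ⟨hvT, hv⟩ := mem_filter.1 hv
  exact mem_inter.2 ⟨hvT, (mem_inter.1 hv).1⟩

lemma unifInt_density_starLeaves_filter_not_subset_le [Std.Asymm A] (hk : 1 ≤ k) (hl : 1 ≤ l)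
    {Y : Finset V} {t : ℝ} (ht : ∀ y ∈ Y, density (Y ∩ nbr A y) ≤ t) (J : Finset V) :
    unifInt Y (fun c ↦ density {f ∈ starLeaves k l A c Y | ¬ starVerts c f ⊆ J}) ≤
      lam0 k l * leafFactor (k + l) * t ^ (k + l - 1) *
        (adjDensity A Y Y - adjDensity A (J ∩ Y) (J ∩ Y)) := by
  have hinside : unifInt (Y ∩ J) (fun c ↦
      density {f ∈ starLeaves k l A c Y | ¬ starVerts c f ⊆ J}) ≤
      lam0 k l * leafFactor (k + l) * t ^ (k + l - 1) * adjDensity A (Y ∩ J) (Y \ J) := by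
    rw [adjDensity, ← unifInt_const_mul]
    refine unifInt_mono fun c hc ↦ (density_mono fun f hf ↦ ?_).trans
      (density_starLeaves_filter_exists_mem_le_mul hk hl (ht c (mem_inter.1 hc).1) (Y \ J))
    obtain ⟨hfS, hfJ⟩ := mem_filter.1 hf
    obtain ⟨a, ha⟩ : ∃ a, f a ∉ J := by
      by_contra! h
      exact hfJ (starVerts_subset_iff.2 ⟨(mem_inter.1 hc).2, h⟩)
    exact mem_filter.2
      ⟨hfS, a, mem_sdiff.2 ⟨(mem_inter.1 (mem_of_mem_starLeaves hfS a)).2, ha⟩⟩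
  have houtside : unifInt (Y \ J) (fun c ↦
      density {f ∈ starLeaves k l A c Y | ¬ starVerts c f ⊆ J}) ≤
      lam0 k l * leafFactor (k + l) * t ^ (k + l - 1) * adjDensity A (Y \ J) Y := by
    rw [adjDensity, ← unifInt_const_mul]
    refine unifInt_mono fun c hc ↦ (density_mono fun f hf ↦ ?_).trans
      (density_starLeaves_filter_exists_mem_le_mul hk hl (ht c (mem_sdiff.1 hc).1) Y)
    have hfS := (mem_filter.1 hf).1
    exact mem_filter.2
      ⟨hfS, .inr ⟨0, hl⟩, (mem_inter.1 (mem_of_mem_starLeaves hfS (.inr ⟨0, hl⟩))).2⟩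
  rw [← unifInt_inter_add_sdiff Y J, inter_comm J,
    ← adjDensity_inter_add_sdiff_left Y Y J, ← adjDensity_inter_add_sdiff_right (Y ∩ J) Y J]
  linarith

lemma unifInt_density_starLeaves_filter_not_subset_inNbr_le [Std.Asymm A] (hk : 1 ≤ k) (x : V)
    {Y : Finset V} {t : ℝ} (ht : ∀ y ∈ Y, density (Y ∩ nbr A y) ≤ t) (ht0 : 0 ≤ t) :
    unifInt Y (fun c ↦ density {f ∈ starLeaves k 1 A c Y | ¬ starVerts c f ⊆ inNbr A x}) ≤
      t ^ k * (adjDensity A (nbr A x ∩ Y) (nbr A x ∩ Y) -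
        adjDensity A (inNbr A x ∩ Y) (inNbr A x ∩ Y) + 2 * t * density (Y \ nbr A x)) := by
  refine (unifInt_density_starLeaves_filter_not_subset_le hk le_rfl ht _).trans ?_
  rw [lam0_one_mul_leafFactor hk, one_mul, Nat.add_sub_cancel]
  exact mul_le_mul_of_nonneg_left (by linarith [adjDensity_self_le x ht]) (pow_nonneg ht0 k)

lemma unifInt_density_starLeaves_one_le [Std.Asymm A] (hk : 1 ≤ k) (B : Finset V) :
    unifInt B (fun c ↦ density (starLeaves k 1 A c B)) ≤
      lam0 (k - 1) 1 * (lam0 k 1 * density B ^ (k + 2)) := by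
  refine (unifInt_density_starLeaves_le hk B B).trans ((unifInt_le_const
    (c := lam0 (k - 1) 1 * (lam0 k 1 * density B ^ (k + 1))) fun v _ ↦ ?_).trans_eq (by ring))
  have hin : density (inNbr A v ∩ B) ≤ density (B ∩ nbr A v) := by
    rw [inter_comm B]
    exact density_mono (inter_subset_inter_right (inNbr_subset_nbr v))
  have hamgm := pow_mul_pow_le_lam0_mul k 1 (density_nonneg (B \ nbr A v))
    (density_nonneg (inNbr A v ∩ B))
  have hsum : density (B \ nbr A v) + density (inNbr A v ∩ B) ≤ density B := by
    linarith [density_inter_add_sdiff B (nbr A v)]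
  have hpow := pow_le_pow_left₀ (add_nonneg (density_nonneg _) (density_nonneg _)) hsum (k + 1)
  rw [Nat.add_sub_cancel, mul_left_comm, mul_comm (density (inNbr A v ∩ B))]
  rw [pow_one] at hamgm
  exact mul_le_mul_of_nonneg_left
    (hamgm.trans (mul_le_mul_of_nonneg_left hpow (lam0_pos k 1).le)) (lam0_pos ..).le

end StarVerts

section FewInNbr

variable {V : Type*} [Fintype V] {k l : ℕ} {A : V → V → Prop} {X : Finset V} {ε : ℝ}

/-- The vertices outside `X` that receive arcs from less than the fraction `ε` of `X`. -/
noncomputable def fewInNbr (A : V → V → Prop) (X : Finset V) (ε : ℝ) : Finset V :=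
  {y ∈ Xᶜ | density (inNbr A y ∩ X) < ε * density X}

/-- If some vertex of `W` receives arcs from many `x ∈ X`, then none of these `x` receives an arc
from that vertex; otherwise `W ⊆ fewInNbr A X ε` and the two sets on the right cover `X`. -/
lemma mul_density_le_of_subset_compl [Std.Asymm A] (hε : 0 ≤ ε) (hε1 : ε ≤ 1) {W : Finset V}
    (hW : W ⊆ Xᶜ) :
    ε * density X ≤ density {x ∈ X | ¬ W ⊆ inNbr A x} +
      ε * density {x ∈ X | W ⊆ inNbr A x ∩ fewInNbr A X ε} := by
  have hnonneg := mul_nonneg hε (density_nonneg {x ∈ X | W ⊆ inNbr A x ∩ fewInNbr A X ε})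
  by_cases hfew : W ⊆ fewInNbr A X ε
  · have hcover : density X ≤ density {x ∈ X | ¬ W ⊆ inNbr A x} +
        density {x ∈ X | W ⊆ inNbr A x ∩ fewInNbr A X ε} := by
      refine (density_mono fun x hx ↦ ?_).trans (density_union_le _ _)
      simp only [mem_union, mem_filter, hx, true_and, subset_inter_iff, hfew, and_true]
      exact (em _).symm
    have := mul_le_of_le_one_left (density_nonneg {x ∈ X | ¬ W ⊆ inNbr A x}) hε1
    linarith [mul_le_mul_of_nonneg_left hcover hε]
  · obtain ⟨z, hzW, hz⟩ := not_subset.1 hfew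
    have hmany : ε * density X ≤ density (inNbr A z ∩ X) :=
      not_lt.1 fun h ↦ hz (mem_filter.2 ⟨hW hzW, h⟩)
    have hdisj : inNbr A z ∩ X ⊆ {x ∈ X | ¬ W ⊆ inNbr A x} := fun x hx ↦ by
      obtain ⟨hxz, hxX⟩ := mem_inter.1 hx
      exact mem_filter.2 ⟨hxX, fun h ↦ asymm (mem_inNbr.1 hxz) (mem_inNbr.1 (h hzW))⟩
    linarith [density_mono hdisj]

lemma mul_unifInt_density_starLeaves_compl_le [Std.Asymm A] (hε : 0 ≤ ε) (hε1 : ε ≤ 1) :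
    ε * density X * unifInt Xᶜ (fun c ↦ density (starLeaves k l A c Xᶜ)) ≤ unifInt X (fun x ↦
      unifInt Xᶜ (fun c ↦ density {f ∈ starLeaves k l A c Xᶜ | ¬ starVerts c f ⊆ inNbr A x}) +
      ε * unifInt Xᶜ (fun c ↦ density
        {f ∈ starLeaves k l A c Xᶜ | starVerts c f ⊆ inNbr A x ∩ fewInNbr A X ε})) := by
  have hstar : ∀ c ∈ Xᶜ, ε * density X * density (starLeaves k l A c Xᶜ) ≤
      unifInt X (fun x ↦ density {f ∈ starLeaves k l A c Xᶜ | ¬ starVerts c f ⊆ inNbr A x}) +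
      ε * unifInt X (fun x ↦ density
        {f ∈ starLeaves k l A c Xᶜ | starVerts c f ⊆ inNbr A x ∩ fewInNbr A X ε}) := by
    intro c hc
    rw [unifInt_density_comm X, unifInt_density_comm X, ← unifInt_const_mul, ← unifInt_add,
      ← unifInt_const]
    exact unifInt_mono fun f hf ↦ mul_density_le_of_subset_compl (A := A) hε hε1
      (starVerts_subset_iff.2 ⟨hc, fun a ↦ (mem_inter.1 (mem_of_mem_starLeaves hf a)).2⟩)
  rw [← unifInt_const_mul]
  refine (unifInt_mono hstar).trans_eq ?_
  rw [unifInt_add, unifInt_const_mul, unifInt_comm Xᶜ X, unifInt_comm Xᶜ X, unifInt_add,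
    unifInt_const_mul]

lemma unifInt_density_starLeaves_one_compl_le [Std.Asymm A] (hk : 1 ≤ k) (hε : 0 < ε)
    (hε1 : ε ≤ 1) (hX : 0 < density X) {t κ : ℝ} (ht : ∀ y ∉ X, density (Xᶜ ∩ nbr A y) ≤ t)
    (ht0 : 0 ≤ t) (hκ : t ^ k ≤ κ * (ε * density X)) :
    unifInt Xᶜ (fun c ↦ density (starLeaves k 1 A c Xᶜ)) ≤ unifInt X (fun x ↦
      κ * (adjDensity A (nbr A x ∩ Xᶜ) (nbr A x ∩ Xᶜ) -
        adjDensity A (inNbr A x ∩ Xᶜ) (inNbr A x ∩ Xᶜ) + 2 * t * density (Xᶜ \ nbr A x)) +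
      lam0 (k - 1) 1 *
        (lam0 k 1 * density (inNbr A x ∩ fewInNbr A X ε) ^ (k + 2) / density X)) := by
  refine le_of_mul_le_mul_left ((mul_unifInt_density_starLeaves_compl_le hε.le hε1).trans ?_)
    (mul_pos hε hX)
  rw [← unifInt_const_mul]
  refine unifInt_mono fun x _ ↦ ?_
  have hbad := unifInt_density_starLeaves_filter_not_subset_inNbr_le hk x
    (fun y hy ↦ ht y (mem_compl.1 hy)) ht0
  have hgood := (unifInt_density_starLeaves_filter_starVerts_subset_le (k := k) (l := 1) (A := A)
    Xᶜ (inNbr A x ∩ fewInNbr A X ε)).trans (unifInt_density_starLeaves_one_le hk _)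
  have hadj : 0 ≤ adjDensity A (nbr A x ∩ Xᶜ) (nbr A x ∩ Xᶜ) -
      adjDensity A (inNbr A x ∩ Xᶜ) (inNbr A x ∩ Xᶜ) := sub_nonneg.2
    (adjDensity_mono (inter_subset_inter_right (inNbr_subset_nbr x))
      (inter_subset_inter_right (inNbr_subset_nbr x)))
  have hcoeff : 0 ≤ adjDensity A (nbr A x ∩ Xᶜ) (nbr A x ∩ Xᶜ) -
      adjDensity A (inNbr A x ∩ Xᶜ) (inNbr A x ∩ Xᶜ) + 2 * t * density (Xᶜ \ nbr A x) :=
    add_nonneg hadj (mul_nonneg (by positivity) (density_nonneg _))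
  refine (add_le_add (hbad.trans (mul_le_mul_of_nonneg_right hκ hcoeff))
    (mul_le_mul_of_nonneg_left hgood hε.le)).trans_eq ?_
  field_simp

lemma density_starLeaves_le_of_mem_fewInNbr (hk : 1 ≤ k) {c : V} (hc : c ∈ fewInNbr A X ε) :
    density (starLeaves k 1 A c X) ≤ ε * density X ^ k * density (outNbr A c ∩ X) := by
  have hout := density_nonneg (outNbr A c ∩ X)
  obtain ⟨n, rfl⟩ : ∃ n, k = n + 1 := ⟨k - 1, by omega⟩
  calc _ ≤ density (outNbr A c ∩ X) ^ (n + 1) * density (inNbr A c ∩ X) ^ 1 :=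
        density_starLeaves_le_mul c X
    _ = density (outNbr A c ∩ X) ^ n * density (inNbr A c ∩ X) * density (outNbr A c ∩ X) := by
        ring
    _ ≤ density X ^ n * (ε * density X) * density (outNbr A c ∩ X) :=
        mul_le_mul_of_nonneg_right (mul_le_mul
          (pow_le_pow_left₀ hout (density_mono inter_subset_right) n) (mem_filter.1 hc).2.le
          (density_nonneg _) (pow_nonneg (density_nonneg _) n)) hout
    _ = _ := by ring

lemma unifInt_univ_density_starLeaves_one_le [Std.Asymm A] (hk : 1 ≤ k) :
    unifInt univ (fun c ↦ density (starLeaves k 1 A c X)) ≤ unifInt X (fun x ↦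
      lam0 (k - 1) 1 * ((density (inNbr A x ∩ Xᶜ) - density (inNbr A x ∩ fewInNbr A X ε) +
        density (X ∩ nbr A x)) * (density X - density (X ∩ nbr A x)) ^ k) +
      ε * density (inNbr A x ∩ fewInNbr A X ε) * density X ^ k) := by
  set Z := fewInNbr A X ε
  have hfew : unifInt Z (fun c ↦ density (starLeaves k 1 A c X)) ≤
      unifInt X (fun x ↦ ε * density (inNbr A x ∩ Z) * density X ^ k) := by
    refine (unifInt_mono fun c hc ↦ density_starLeaves_le_of_mem_fewInNbr hk hc).trans_eq ?_
    simp only [← unifInt_const]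
    rw [unifInt_outNbr_comm Z X fun _ _ ↦ ε * density X ^ k]
    exact unifInt_congr fun x _ ↦ by simp only [unifInt_const]; ring
  have hmany : unifInt Zᶜ (fun c ↦ density (starLeaves k 1 A c X)) ≤ unifInt X (fun x ↦
      lam0 (k - 1) 1 * ((density (inNbr A x ∩ Xᶜ) - density (inNbr A x ∩ Z) +
        density (X ∩ nbr A x)) * (density X - density (X ∩ nbr A x)) ^ k)) := by
    refine (unifInt_density_starLeaves_le hk Zᶜ X).trans (unifInt_mono fun x _ ↦ ?_)
    have hX := density_inter_add_sdiff X (nbr A x)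
    have hin := density_inter_add_sdiff (inNbr A x) Z
    rw [sdiff_eq_inter_compl] at hin
    rw [Nat.add_sub_cancel, mul_left_comm, ← hX, add_sub_cancel_left]
    exact mul_le_mul_of_nonneg_left (mul_le_mul_of_nonneg_right
      (by linarith [density_inNbr_le_add (A := A) X x]) (pow_nonneg (density_nonneg _) k))
      (lam0_pos ..).le
  rw [← unifInt_add_unifInt_compl Z, add_comm, unifInt_add]
  exact add_le_add hmany hfew

end FewInNbr

section OneInLeafBound

variable {V : Type*} [Fintype V] {k l : ℕ} {A : V → V → Prop} {X : Finset V}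

lemma density_starLeaves_le_mul_one_sub_sub [Std.Asymm A] (hk : 2 ≤ k) (hl : 1 ≤ l) (c : V)
    (B : Finset V) :
    density (starLeaves k l A c B) ≤ density (outNbr A c ∩ B) ^ k * density (inNbr A c ∩ B) ^ l *
      (1 - (adjDensity A (nbr A c ∩ B) (nbr A c ∩ B) -
        adjDensity A (inNbr A c ∩ B) (inNbr A c ∩ B))) := by
  have hp := density_nonneg (outNbr A c ∩ B)
  have hq := density_nonneg (inNbr A c ∩ B)
  obtain h0 | h0 := hp.eq_or_lt
  · refine (density_starLeaves_le_mul c B).trans_eq ?_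
    rw [← h0, zero_pow (by omega), zero_mul, zero_mul]
  have hsub : inNbr A c ∩ B ⊆ nbr A c ∩ B := inter_subset_inter_right (inNbr_subset_nbr c)
  have hadj := adjDensity_mono (A := A) hsub hsub
  have hsplit := density_outNbr_add_inNbr (A := A) c B
  have hnonadj : nonadjDensity A (outNbr A c ∩ B) (nbr A c ∩ B) +
      nonadjDensity A (inNbr A c ∩ B) (outNbr A c ∩ B) =
      nonadjDensity A (nbr A c ∩ B) (nbr A c ∩ B) -
        nonadjDensity A (inNbr A c ∩ B) (inNbr A c ∩ B) := by
    have hd := disjoint_outNbr_inter_inNbr_inter (A := A) c B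
    rw [nbr_inter_eq_union, nonadjDensity_union_left hd,
      nonadjDensity_union_right hd (inNbr A c ∩ B)]
    ring
  have hstar := density_starLeaves_mul_out_le hk hl c B (A := A)
  rw [hnonadj, nonadjDensity_eq, nonadjDensity_eq, ← hsplit] at hstar
  have hT : 0 ≤ density (outNbr A c ∩ B) ^ k * density (inNbr A c ∩ B) ^ l := by positivity
  have hle : (density (outNbr A c ∩ B) + density (inNbr A c ∩ B)) ^ 2 ≤ 1 :=
    pow_le_one₀ (by positivity) (hsplit.trans_le (density_le_one _))
  refine le_of_mul_le_mul_right (hstar.trans ?_) (show 0 < density (outNbr A c ∩ B) ^ 2 +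
    2 * (density (outNbr A c ∩ B) * density (inNbr A c ∩ B)) by positivity)
  have hle' : density (outNbr A c ∩ B) ^ 2 +
      2 * (density (outNbr A c ∩ B) * density (inNbr A c ∩ B)) ≤ 1 := by
    linarith [sq_nonneg (density (inNbr A c ∩ B))]
  have hloss := mul_le_of_le_one_right (sub_nonneg.2 hadj) hle'
  linarith [mul_le_mul_of_nonneg_right hloss hT]

namespace IsNearExtremal

lemma density_inNbr_compl_le_half [Nonempty V] [Std.Asymm A] (h : IsNearExtremal k 1 A X)
    (hk : 5 ≤ k) {x : V} (hx : x ∈ X) : density (inNbr A x ∩ Xᶜ) ≤ 1 / 2 := by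
  by_contra! hlt
  have hsplit := density_outNbr_add_inNbr_compl (A := A) X x
  have hp := density_nonneg (outNbr A x ∩ Xᶜ)
  have hT := h.mul_lam0_le x hx
  have hr := density_nonneg (Xᶜ \ nbr A x)
  have hα := h.density_pos
  set p := density (outNbr A x ∩ Xᶜ)
  set q := density (inNbr A x ∩ Xᶜ)
  obtain ⟨n, rfl⟩ : ∃ n, k = n + 1 := ⟨k - 1, by omega⟩
  have hpq : p * q ≤ (1 / 2) ^ 2 := by
    linarith [sq_nonneg (p - q), mul_le_mul_of_nonneg_left (by linarith : q ≤ 1 - p) hp,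
      sq_nonneg (p - 1 / 2)]
  refine (half_pow_lt_mul_lam0_one hk).not_ge (hT.trans ?_)
  calc p ^ (n + 1) * q ^ 1 = p ^ n * (p * q) := by ring
    _ ≤ (1 / 2) ^ n * (1 / 2) ^ 2 :=
        mul_le_mul (pow_le_pow_left₀ hp (by linarith) n) hpq (mul_nonneg hp (by linarith))
          (by positivity)
    _ = _ := (pow_add _ _ _).symm

lemma pow_le_mul_lam0_one_mul_density (h : IsNearExtremal k 1 A X) (hk : 5 ≤ k) :
    (1.04 / ((k : ℝ) + 2)) ^ k ≤ 0.36 * lam0 k 1 * (1 / (4 * ((k : ℝ) + 1)) * density X) := by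
  have hα := h.le_density
  rw [Nat.cast_add, Nat.cast_one, add_assoc, one_add_one_eq_two] at hα
  have := lam0_pos k 1
  exact (pow_le_mul_lam0_one hk).trans (mul_le_mul_of_nonneg_left
    (mul_le_mul_of_nonneg_left hα (by positivity)) (by positivity))

lemma starProb_le_unifInt_one [Nonempty V] [Std.Asymm A] (h : IsNearExtremal k 1 A X)
    (hk : 5 ≤ k) {ε : ℝ} (hε : ε = 1 / (4 * ((k : ℝ) + 1))) :
    starProb k 1 V A ≤ unifInt X (fun x ↦
      (1 - density X - density (inNbr A x ∩ Xᶜ)) ^ k * density (inNbr A x ∩ Xᶜ) +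
      lam0 (k - 1) 1 * ((density (inNbr A x ∩ Xᶜ) - density (inNbr A x ∩ fewInNbr A X ε) +
        density (X ∩ nbr A x)) * (density X - density (X ∩ nbr A x)) ^ k) +
      ε * density (inNbr A x ∩ fewInNbr A X ε) * density X ^ k +
      lam0 (k - 1) 1 *
        (lam0 k 1 * density (inNbr A x ∩ fewInNbr A X ε) ^ (k + 2) / density X)) := by
  have hk' : (5 : ℝ) ≤ k := by exact_mod_cast hk
  have hε0 : 0 < ε := by rw [hε]; positivity
  have hε1 : ε ≤ 1 := by
    rw [hε, div_le_one (by positivity)]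
    linarith
  have ht : 2 * (1.04 / ((k : ℝ) + 2)) ≤ 0.8 := by
    rw [mul_div_assoc', div_le_iff₀ (by positivity)]
    linarith
  have hcenter := unifInt_mono fun x hx ↦
    have hsub : inNbr A x ∩ Xᶜ ⊆ nbr A x ∩ Xᶜ := inter_subset_inter_right (inNbr_subset_nbr x)
    h.add_le_one_sub_pow_mul_pow (by omega) hx (sub_nonneg.2 (adjDensity_mono hsub hsub)) ht
      (density_starLeaves_le_mul_one_sub_sub (by omega) le_rfl x _)
  have hcompl := unifInt_density_starLeaves_one_compl_le (by omega) hε0 hε1 h.density_pos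
    (h.density_compl_inter_nbr_le_of_one hk) (by positivity)
    (hε ▸ h.pow_le_mul_lam0_one_mul_density hk)
  have hX := unifInt_univ_density_starLeaves_one_le (A := A) (X := X) (ε := ε)
    (by omega : 1 ≤ k)
  have hprob := h.starProb_le le_rfl (by omega)
  simp only [unifInt_add, pow_one] at hcenter hcompl hX ⊢
  rw [unifInt_const_mul] at hcenter
  rw [nonadjDensity] at hprob
  linarith

lemma starProb_le_OPT_one [Nonempty V] [Std.Asymm A] (h : IsNearExtremal k 1 A X) (hk : 5 ≤ k) :
    starProb k 1 V A ≤ OPT k 1 := by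
  have hα := h.density_pos
  have hα' := h.density_le
  rw [Nat.cast_add, Nat.cast_one, add_assoc, one_add_one_eq_two] at hα'
  refine (h.starProb_le_unifInt_one hk rfl).trans
    ((unifInt_le_const (c := OPT k 1 / density X) fun x hx ↦ ?_).trans_eq
      (div_mul_cancel₀ _ hα.ne'))
  have hfew : inNbr A x ∩ fewInNbr A X (1 / (4 * ((k : ℝ) + 1))) ⊆ inNbr A x ∩ Xᶜ :=
    inter_subset_inter_left (filter_subset ..)
  rw [le_div_iff₀' hα]
  exact mul_add_le_OPT_one hk hα hα' (h.mul_density_le_density_inNbr x hx)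
    (h.density_inNbr_compl_le_half hk hx) (density_nonneg _) (density_mono hfew)
    (density_nonneg _) (density_mono inter_subset_left)

end IsNearExtremal

end OneInLeafBound

end OrientedStar

end

theorem stmt3 (k l : ℕ) (hl : 1 ≤ l) (hlk : l ≤ k) (hm : 6 ≤ k + l)
    (V : Type) [Fintype V] (A : V → V → Prop)
    (hirr : Irreflexive A) (hopp : ∀ u v, A u v → ¬ A v u) (hn : 1 ≤ Fintype.card V)
    (hvert : ∀ v : V, OPT k l ≤ sVert k l A v) :
    starProb k l V A ≤ OPT k l := by
  have : Std.Asymm A := ⟨hopp⟩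
  have : Nonempty V := Fintype.card_pos_iff.1 hn
  by_contra! hs
  have h := OrientedStar.isNearExtremal_highDegree hl hlk hm hvert hs
  refine hs.not_ge ?_
  obtain rfl | hlt := hlk.eq_or_lt
  · exact h.starProb_le_OPT_self (by omega)
  obtain rfl | hl2 := hl.eq_or_lt
  · exact h.starProb_le_OPT_one (by omega)
  · exact h.starProb_le_OPT_of_lt hl2 hlt hm
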